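/- Let n ≥ 5 and let P be a non-flat regular n-polytope with strictly more than 4(n+1)! flags (so P is at least the fourth smallest non-flat regular n-polytope by flag count). Then P has at least (16/3)(n+1)! flags. -/

import Mathlib

open scoped Classical

/-- An abstract polytope of rank `n`: a partially ordered set with a unique minimal
element (of rank `-1`) and a unique maximal element (of rank `n`), all of whose
maximal chains (flags) have exactly `n + 2` elements, equipped with the induced
rank function, satisfying the diamond condition and strong connectivity. -/
structure AbstractPolytope (n : ℕ) where
  Face : Type
  [instPartialOrder : PartialOrder Face]
  rank : Face → ℤ
  bot : Face
  top : Face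
  bot_le : ∀ F : Face, bot ≤ F
  le_top : ∀ F : Face, F ≤ top
  rank_bot : rank bot = -1
  rank_top : rank top = n
  rank_strictMono : ∀ F G : Face, F < G → rank F < rank G
  flag_card : ∀ Φ : Flag Face, Nat.card Φ = n + 2
  flag_ranks : ∀ (Φ : Flag Face) (j : ℤ), -1 ≤ j → j ≤ (n : ℤ) →
    ∃ F ∈ Φ, rank F = j
  diamond : ∀ F G : Face, F < G → rank G = rank F + 2 →
    Nat.card {H : Face // F < H ∧ H < G} = 2
  strongly_connected : ∀ F G : Face, F < G → rank F + 3 ≤ rank G →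
    ∀ H H' : Face, F < H → H < G → F < H' → H' < G →
    Relation.ReflTransGen
      (fun A B : Face => F < A ∧ A < G ∧ F < B ∧ B < G ∧ (A ≤ B ∨ B ≤ A)) H H'

attribute [instance] AbstractPolytope.instPartialOrder

namespace AbstractPolytope

variable {n : ℕ} (P : AbstractPolytope n)

/-- The number of flags of `P`. -/
noncomputable def numFlags : ℕ := Nat.card (Flag P.Face)

/-- A vertex is a face of rank `0`. -/
def IsVertex (F : P.Face) : Prop := P.rank F = 0

/-- A facet is a face of rank `n - 1`. -/
def IsFacet (F : P.Face) : Prop := P.rank F = (n : ℤ) - 1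

/-- The number of vertices of `P`. -/
noncomputable def numVertices : ℕ := Nat.card {F : P.Face // P.IsVertex F}

/-- The number of facets of `P`. -/
noncomputable def numFacets : ℕ := Nat.card {F : P.Face // P.IsFacet F}

/-- Two faces are incident when they are comparable. -/
def Incident (F G : P.Face) : Prop := F ≤ G ∨ G ≤ F

/-- `P` is `(k, m)`-flat when every face of rank `k` is incident with every face of
rank `m`. -/
def IsKMFlat (k m : ℤ) : Prop :=
  ∀ F G : P.Face, P.rank F = k → P.rank G = m → P.Incident F G

/-- `P` is flat when every vertex is incident with every facet. -/
def IsFlat : Prop := P.IsKMFlat 0 ((n : ℤ) - 1)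

/-- Two flags are adjacent when they differ in exactly one element. -/
def AdjacentFlags (Φ Ψ : Flag P.Face) : Prop :=
  Φ ≠ Ψ ∧ ((Φ : Set P.Face) \ (Ψ : Set P.Face)).ncard = 1 ∧
    ((Ψ : Set P.Face) \ (Φ : Set P.Face)).ncard = 1

/-- Two flags lie in the same orbit of the automorphism group `Γ(P)` (the group of
order automorphisms of `P`). -/
def SameOrbit (Φ Ψ : Flag P.Face) : Prop :=
  ∃ f : P.Face ≃o P.Face, f '' (Φ : Set P.Face) = (Ψ : Set P.Face)

/-- `P` is regular when `Γ(P)` is transitive on flags. -/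
def IsRegular : Prop := ∀ Φ Ψ : Flag P.Face, P.SameOrbit Φ Ψ

/-- `P` is chiral when its flags fall into exactly two orbits under `Γ(P)` and
adjacent flags always lie in different orbits. -/
def IsChiral : Prop :=
  (∃ Φ₁ Φ₂ : Flag P.Face, ¬ P.SameOrbit Φ₁ Φ₂ ∧
      ∀ Φ : Flag P.Face, P.SameOrbit Φ Φ₁ ∨ P.SameOrbit Φ Φ₂) ∧
  ∀ Φ Ψ : Flag P.Face, P.AdjacentFlags Φ Ψ → ¬ P.SameOrbit Φ Ψ

/-- The polytope `Q` is (isomorphic to) the section `G/F` of `P`: there is an order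
isomorphism from `Q` onto the interval `[F, G]` of `P`, shifting ranks by
`rank F + 1`. -/
def IsSection {m : ℕ} (Q : AbstractPolytope m) (F G : P.Face) : Prop :=
  F ≤ G ∧ ∃ e : Q.Face ≃o (Set.Icc F G),
    ∀ x : Q.Face, P.rank (e x : P.Face) = Q.rank x + P.rank F + 1

/-- `P` is equivelar of Schläfli type `{p 1, …, p (n-1)}`: every section between a
face of rank `i - 2` and a face of rank `i + 1` is a polygon with exactly `p i`
vertices (i.e. it contains exactly `p i` faces of rank `i - 1`). -/
def IsSchlafli (p : ℕ → ℕ) : Prop :=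
  ∀ i : ℕ, 1 ≤ i → i ≤ n - 1 →
    ∀ F G : P.Face, F < G → P.rank F = (i : ℤ) - 2 → P.rank G = (i : ℤ) + 1 →
      Nat.card {H : P.Face // F < H ∧ H < G ∧ P.rank H = (i : ℤ) - 1} = p i

/-- `P` is tight of type `{p 1, …, p (n-1)}`: it is equivelar of that type and has
exactly `2 p₁ ⋯ p_{n-1}` flags. -/
def IsTight (p : ℕ → ℕ) : Prop :=
  P.IsSchlafli p ∧ P.numFlags = 2 * ∏ i ∈ Finset.Icc 1 (n - 1), p i

end AbstractPolytope
namespace SCG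
variable {G : Type*} [Group G]

def H (ρ : ℕ → G) (i j : ℕ) : Subgroup G := Subgroup.closure (ρ '' Set.Ico i j)

structure SC (ρ : ℕ → G) (n : ℕ) : Prop where
  inv : ∀ i, i < n → ρ i * ρ i = 1
  comm : ∀ i j, i + 2 ≤ j → j < n → ρ i * ρ j = ρ j * ρ i
  inter : ∀ i j k l, j ≤ n → l ≤ n → H ρ i j ⊓ H ρ k l = H ρ (max i k) (min j l)
  top : H ρ 0 n = ⊤
  nf : ∃ g, ∀ a ∈ H ρ 0 (n-1), ∀ b ∈ H ρ 1 n, g ≠ a * b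

def NF (ρ : ℕ → G) (i j : ℕ) : Prop :=
  ∃ g ∈ H ρ i j, ∀ a ∈ H ρ i (j-1), ∀ b ∈ H ρ (i+1) j, g ≠ a * b

noncomputable def N (ρ : ℕ → G) (i j : ℕ) : ℕ := Nat.card (H ρ i j)
noncomputable def v (ρ : ℕ → G) (i j : ℕ) : ℕ := (H ρ (i+1) j).relIndex (H ρ i j)
noncomputable def f (ρ : ℕ → G) (i j : ℕ) : ℕ := (H ρ i (j-1)).relIndex (H ρ i j)
noncomputable def cj (g : G) (K : Subgroup G) : Subgroup G := K.map (MulAut.conj g).toMonoidHom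
noncomputable def dg (ρ : ℕ → G) (i j : ℕ) : ℕ :=
  (cj (ρ i) (H ρ (i+1) j)).relIndex (H ρ (i+1) j)
noncomputable def eg (ρ : ℕ → G) (i j : ℕ) : ℕ :=
  (cj (ρ (j-1)) (H ρ i (j-1))).relIndex (H ρ i (j-1))

theorem H_mono (ρ : ℕ → G) {i j k l : ℕ} (h1 : k ≤ i) (h2 : j ≤ l) : H ρ i j ≤ H ρ k l :=
  Subgroup.closure_mono (Set.image_mono (Set.Ico_subset_Ico h1 h2))

theorem mem_H (ρ : ℕ → G) {i j k : ℕ} (h1 : i ≤ k) (h2 : k < j) : ρ k ∈ H ρ i j :=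
  Subgroup.subset_closure ⟨k, ⟨h1, h2⟩, rfl⟩

theorem H_bot (ρ : ℕ → G) {i j : ℕ} (h : j ≤ i) : H ρ i j = ⊥ := by
  simp [H, Set.Ico_eq_empty_of_le h]

theorem H_le (ρ : ℕ → G) {i j : ℕ} {K : Subgroup G} (h : ∀ k, i ≤ k → k < j → ρ k ∈ K) :
    H ρ i j ≤ K := by
  rw [H, Subgroup.closure_le]
  rintro _ ⟨k, ⟨h1, h2⟩, rfl⟩
  exact h k h1 h2

theorem mem_cj {g x : G} {K : Subgroup G} : x ∈ cj g K ↔ g⁻¹ * x * g ∈ K := by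
  simp only [cj, Subgroup.mem_map]
  constructor
  · rintro ⟨y, hy, rfl⟩; simpa [MulAut.conj_apply, mul_assoc] using hy
  · intro h; exact ⟨_, h, by simp [MulAut.conj_apply, mul_assoc]⟩

/-- left closure principle -/
theorem left_closed {ρ : ℕ → G} {i j : ℕ} (hinv : ∀ k, i ≤ k → k < j → ρ k * ρ k = 1)
    (X : Set G) (hX : ∀ k, i ≤ k → k < j → ∀ x ∈ X, ρ k * x ∈ X) {g : G} (hg : g ∈ H ρ i j) :
    ∀ x ∈ X, g * x ∈ X := by
  induction hg using Subgroup.closure_induction_left with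
  | one => intro x hx; simpa using hx
  | mul_left a ha b hb ih =>
    obtain ⟨k, ⟨h1, h2⟩, rfl⟩ := ha
    intro x hx; rw [mul_assoc]; exact hX k h1 h2 _ (ih x hx)
  | inv_mul_cancel a ha b hb ih =>
    obtain ⟨k, ⟨h1, h2⟩, rfl⟩ := ha
    intro x hx; rw [mul_assoc, inv_eq_of_mul_eq_one_left (hinv k h1 h2)]
    exact hX k h1 h2 _ (ih x hx)

theorem act_closed {α : Type*} [MulAction G α] {ρ : ℕ → G} {i j : ℕ}
    (hinv : ∀ k, i ≤ k → k < j → ρ k * ρ k = 1)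
    (X : Set α) (hX : ∀ k, i ≤ k → k < j → ∀ x ∈ X, ρ k • x ∈ X) {g : G} (hg : g ∈ H ρ i j) :
    ∀ x ∈ X, g • x ∈ X := by
  intro x hx
  have := left_closed hinv {g : G | g • x ∈ X} (fun k h1 h2 y hy => by
    simp only [Set.mem_ofPred_eq, mul_smul] at hy ⊢; exact hX k h1 h2 _ hy) hg 1 (by simpa using hx)
  simpa using this

theorem H_comm {ρ : ℕ → G} {i j : ℕ} {g : G} (h : ∀ k, i ≤ k → k < j → g * ρ k = ρ k * g)
    {x : G} (hx : x ∈ H ρ i j) : g * x = x * g := by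
  have : H ρ i j ≤ Subgroup.centralizer {g} := H_le ρ (fun k h1 h2 => by
    rw [Subgroup.mem_centralizer_singleton_iff]; exact (h k h1 h2).symm)
  exact (Subgroup.mem_centralizer_singleton_iff.1 (this hx)).symm

/-- relative index as orbit size -/
theorem relIndex_orbit {α : Type*} [MulAction G α] (A : Subgroup G) (x : α) :
    (MulAction.stabilizer G x).relIndex A = (MulAction.orbit A x).ncard := by
  rw [← MulAction.index_stabilizer]; rfl

theorem stab_one (U : Subgroup G) : MulAction.stabilizer G ((1 : G) : G ⧸ U) = U := by
  ext g
  rw [MulAction.mem_stabilizer_iff, MulAction.Quotient.smul_coe, QuotientGroup.eq]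
  simp

theorem relIndex_cover [Finite G] {A B K : Subgroup G} (hAB : A ≤ B) :
    K.relIndex A ≤ K.relIndex B ∧
    (K.relIndex A = K.relIndex B → ∀ g ∈ B, ∃ a ∈ A, ∃ k ∈ K, g = a * k) := by
  have hs : MulAction.orbit A ((1:G) : G ⧸ K) ⊆ MulAction.orbit B ((1:G) : G ⧸ K) := by
    rintro _ ⟨a, rfl⟩; exact ⟨⟨a, hAB a.2⟩, rfl⟩
  have hA := relIndex_orbit A ((1:G) : G ⧸ K)
  have hB := relIndex_orbit B ((1:G) : G ⧸ K)
  rw [stab_one] at hA hB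
  rw [hA, hB]
  refine ⟨Set.ncard_le_ncard hs (Set.toFinite _), fun h g hg => ?_⟩
  have he := Set.eq_of_subset_of_ncard_le hs h.ge (Set.toFinite _)
  have : ((g:G) : G ⧸ K) ∈ MulAction.orbit A ((1:G) : G ⧸ K) := by
    rw [he]; refine ⟨⟨g, hg⟩, ?_⟩
    change g • ((1:G) : G ⧸ K) = _
    rw [MulAction.Quotient.smul_coe]; simp
  obtain ⟨a, ha⟩ := this
  change (a:G) • ((1:G) : G ⧸ K) = _ at ha
  rw [MulAction.Quotient.smul_coe, QuotientGroup.eq] at ha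
  exact ⟨a, a.2, _, ha, by simp⟩

theorem card_mul_relIndex {A B : Subgroup G} (h : A ≤ B) :
    Nat.card A * A.relIndex B = Nat.card B := by
  have := Subgroup.relIndex_mul_relIndex ⊥ A B bot_le h
  simpa [Subgroup.relIndex_bot_left] using this

namespace SC
variable {ρ : ℕ → G} {n : ℕ}

theorem inv' (h : SC ρ n) {i : ℕ} (hi : i < n) : (ρ i)⁻¹ = ρ i :=
  inv_eq_of_mul_eq_one_left (h.inv i hi)

theorem comm' (h : SC ρ n) {i j : ℕ} (hi : i < n) (hj : j < n) (hij : i + 2 ≤ j ∨ j + 2 ≤ i) :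
    ρ i * ρ j = ρ j * ρ i := by
  rcases hij with h1 | h1
  · exact h.comm i j h1 hj
  · exact (h.comm j i h1 hi).symm

theorem nf_left (h : SC ρ n) {i j : ℕ} (hij : i + 1 < j) (hj : j ≤ n) (hN : NF ρ i j) :
    NF ρ i (j-1) := by
  by_contra hc
  obtain ⟨g, hg, hgn⟩ := hN
  simp only [NF] at hc; push Not at hc
  have := left_closed (ρ := ρ) (i := i) (j := j) (fun k h1 h2 => h.inv k (by omega))
    {x | ∃ a ∈ H ρ i (j-1), ∃ b ∈ H ρ (i+1) j, x = a * b} ?_ hg 1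
      ⟨1, one_mem _, 1, one_mem _, by simp⟩
  · obtain ⟨a, ha, b, hb, hab⟩ := this
    exact hgn a ha b hb (by simpa using hab)
  · rintro k h1 h2 _ ⟨a, ha, b, hb, rfl⟩
    rcases Nat.lt_or_ge k (j-1) with h3 | h3
    · exact ⟨ρ k * a, mul_mem (mem_H ρ h1 h3) ha, b, hb, by rw [mul_assoc]⟩
    · have hk : k = j - 1 := by omega
      obtain ⟨a', ha', b', hb', rfl⟩ := hc a ha
      refine ⟨a', H_mono ρ le_rfl (by omega) ha', ρ k * (b' * b),
        mul_mem (mem_H ρ (by omega) h2) (mul_mem (H_mono ρ le_rfl (by omega) hb') hb), ?_⟩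
      have hcm : ρ k * a' = a' * ρ k := H_comm (fun l h4 h5 => h.comm' (by omega) (by omega) (by omega)) ha'
      rw [← mul_assoc, ← mul_assoc, hcm]; group

theorem nf_right (h : SC ρ n) {i j : ℕ} (hij : i + 1 < j) (hj : j ≤ n) (hN : NF ρ i j) :
    NF ρ (i+1) j := by
  by_contra hc
  obtain ⟨g, hg, hgn⟩ := hN
  simp only [NF] at hc; push Not at hc
  have := left_closed (ρ := ρ) (i := i) (j := j) (fun k h1 h2 => h.inv k (by omega))
    {x | ∃ a ∈ H ρ i (j-1), ∃ b ∈ H ρ (i+1) j, x⁻¹ = a * b} ?_ (inv_mem hg) 1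
      ⟨1, one_mem _, 1, one_mem _, by simp⟩
  · obtain ⟨a, ha, b, hb, hab⟩ := this
    exact hgn a ha b hb (by simpa using hab)
  · rintro k h1 h2 x ⟨a, ha, b, hb, hx⟩
    rcases Nat.eq_or_lt_of_le h1 with h3 | h3
    · subst h3
      obtain ⟨a', ha', b', hb', rfl⟩ := hc b hb
      refine ⟨a * (a' * ρ i), mul_mem ha (mul_mem (H_mono ρ (by omega) le_rfl ha')
        (mem_H ρ le_rfl (by omega))), b', H_mono ρ (by omega) le_rfl hb', ?_⟩
      have hcm : ρ i * b' = b' * ρ i :=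
        H_comm (fun l h4 h5 => h.comm' (by omega) (by omega) (by omega)) hb'
      rw [mul_inv_rev, hx, h.inv' (by omega)]
      simp only [mul_assoc, hcm]
    · exact ⟨a, ha, b * ρ k, mul_mem hb (mem_H ρ h3 h2), by
        rw [mul_inv_rev, hx, h.inv' (by omega), mul_assoc]⟩

theorem nfij (h : SC ρ n) (i j : ℕ) (hij : i < j) (hj : j ≤ n) : NF ρ i j := by
  have h0 : NF ρ 0 n := by
    obtain ⟨g, hg⟩ := h.nf
    exact ⟨g, by rw [h.top]; trivial, hg⟩
  have h1 : ∀ m, m < n → NF ρ 0 (n - m) := by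
    intro m; induction m with
    | zero => intro _; exact h0
    | succ m ih =>
      intro hm
      have := h.nf_left (i := 0) (j := n - m) (by omega) (by omega) (ih (by omega))
      rwa [show n - m - 1 = n - (m+1) by omega] at this
  have h2 : ∀ i, i < j → NF ρ i j := by
    intro i; induction i with
    | zero => intro _; have := h1 (n - j) (by omega); rwa [show n - (n-j) = j by omega] at this
    | succ i ih => intro hi; exact h.nf_right hi hj (ih (by omega))
  exact h2 i hij

theorem v_mul (ρ : ℕ → G) (i j : ℕ) : v ρ i j * N ρ (i+1) j = N ρ i j := by
  rw [mul_comm]; exact card_mul_relIndex (H_mono ρ (by omega) le_rfl)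
theorem f_mul (ρ : ℕ → G) (i j : ℕ) : f ρ i j * N ρ i (j-1) = N ρ i j := by
  rw [mul_comm]; exact card_mul_relIndex (H_mono ρ le_rfl (by omega))

theorem v_mono [Finite G] (h : SC ρ n) {i j : ℕ} (hij : i < j) (hj : j ≤ n) :
    v ρ i (j-1) < v ρ i j := by
  have e : v ρ i (j-1) = (H ρ (i+1) j).relIndex (H ρ i (j-1)) := by
    rw [← Subgroup.inf_relIndex_right, h.inter _ _ _ _ hj (by omega), v]
    congr 2 <;> omega
  rw [e, v]
  obtain ⟨h1, h2⟩ := relIndex_cover (K := H ρ (i+1) j) (H_mono ρ (le_refl i) (show j - 1 ≤ j by omega))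
  refine lt_of_le_of_ne h1 fun he => ?_
  obtain ⟨g, hg, hgn⟩ := h.nfij i j hij hj
  obtain ⟨a, ha, b, hb, hab⟩ := h2 he g hg
  exact hgn a ha b hb hab

theorem v_ge [Finite G] (h : SC ρ n) {i : ℕ} (m : ℕ) (hj : i + m ≤ n) : m + 1 ≤ v ρ i (i+m) := by
  induction m with
  | zero => simp [v, H_bot]
  | succ m ih =>
    have := h.v_mono (i := i) (j := i + (m+1)) (by omega) hj
    have := ih (by omega)
    rw [show i + (m+1) - 1 = i + m by omega] at *
    omega

theorem dg_dvd (h : SC ρ n) {i j : ℕ} (hij : i < j) (hj : j ≤ n) : dg ρ i j ∣ v ρ (i+1) j := by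
  have hle : H ρ (i+1+1) j ≤ cj (ρ i) (H ρ (i+1) j) ⊓ H ρ (i+1) j := by
    refine le_inf (fun x hx => ?_) (H_mono ρ (by omega) le_rfl)
    rw [mem_cj, mul_assoc, ← H_comm (g := ρ i) (fun l h4 h5 => h.comm' (by omega) (by omega) (by omega)) hx]
    rw [← mul_assoc]; simpa using H_mono ρ (by omega) le_rfl hx
  rw [dg, v, ← Subgroup.inf_relIndex_right]
  exact ⟨_, (mul_comm _ _).trans (Subgroup.relIndex_mul_relIndex _ _ _ hle inf_le_right) |>.symm⟩

theorem rho_not_mem (h : SC ρ n) {i j k : ℕ} (hk : k < n) (hj : j ≤ n) (hn : ¬ (i ≤ k ∧ k < j)) :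
    ρ k ∉ H ρ i j := by
  intro hm
  have h1 : ρ k ∈ H ρ i j ⊓ H ρ k (k+1) := ⟨hm, mem_H ρ le_rfl (by omega)⟩
  rw [h.inter _ _ _ _ hj (by omega), H_bot ρ (by omega), Subgroup.mem_bot] at h1
  obtain ⟨g, hg, hgn⟩ := h.nfij k (k+1) (by omega) (by omega)
  refine hgn 1 (one_mem _) 1 (one_mem _) ?_
  have : H ρ k (k+1) ≤ ⊥ := H_le ρ (fun l h1 h2 => by
    rw [show l = k by omega]; simpa)
  simpa using this hg

theorem dg_mono [Finite G] (h : SC ρ n) {i j : ℕ} (hij : i + 1 < j) (hj : j ≤ n) :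
    dg ρ i (j-1) < dg ρ i j := by
  have e : dg ρ i (j-1) = (cj (ρ i) (H ρ (i+1) j)).relIndex (H ρ (i+1) (j-1)) := by
    rw [dg, ← Subgroup.inf_relIndex_right, ← Subgroup.inf_relIndex_right (cj _ (H ρ (i+1) j))]
    congr 1
    ext x
    simp only [Subgroup.mem_inf, mem_cj, h.inv' (show i < n by omega)]
    refine and_congr_left fun hx => ⟨fun hh => H_mono ρ le_rfl (by omega) hh, fun hh => ?_⟩
    have h1 : ρ i * x * ρ i ∈ H ρ i (j-1) := by
      have hi : ρ i ∈ H ρ i (j-1) := mem_H ρ le_rfl (by omega)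
      exact mul_mem (mul_mem hi (H_mono ρ (by omega) le_rfl hx)) hi
    have h2 := Subgroup.mem_inf.2 ⟨h1, hh⟩
    rw [h.inter _ _ _ _ (by omega) hj] at h2
    convert h2 using 2 <;> omega
  rw [e, dg]
  obtain ⟨h1, h2⟩ := relIndex_cover (K := cj (ρ i) (H ρ (i+1) j))
    (H_mono ρ (le_refl (i+1)) (show j - 1 ≤ j by omega))
  refine lt_of_le_of_ne h1 fun he => ?_
  obtain ⟨g, hg, hgn⟩ := h.nfij i j (by omega) hj
  have := left_closed (ρ := ρ) (i := i) (j := j) (fun k h1 h2 => h.inv k (by omega))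
    {x | ∃ a ∈ H ρ i (j-1), ∃ b ∈ H ρ (i+1) j, x⁻¹ = a * b} ?_ (inv_mem hg) 1
      ⟨1, one_mem _, 1, one_mem _, by simp⟩
  · obtain ⟨a, ha, b, hb, hab⟩ := this
    exact hgn a ha b hb (by simpa using hab)
  · rintro k h3 h4 x ⟨a, ha, b, hb, hx⟩
    rcases Nat.eq_or_lt_of_le h3 with h5 | h5
    · subst h5
      obtain ⟨a', ha', b', hb', rfl⟩ := h2 he b hb
      rw [mem_cj] at hb'
      refine ⟨a * (a' * ρ i), mul_mem ha (mul_mem (H_mono ρ (by omega) le_rfl ha')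
        (mem_H ρ le_rfl (by omega))), _, hb', ?_⟩
      rw [mul_inv_rev, hx, h.inv' (by omega)]
      have := h.inv i (by omega)
      calc a * (a' * b') * ρ i = a * a' * 1 * b' * ρ i := by group
        _ = _ := by rw [← this]; group
    · exact ⟨a, ha, b * ρ k, mul_mem hb (mem_H ρ h5 h4), by
        rw [mul_inv_rev, hx, h.inv' (by omega), mul_assoc]⟩

theorem dg_ge [Finite G] (h : SC ρ n) {i : ℕ} (m : ℕ) (hm : 1 ≤ m) (hj : i + m ≤ n) :
    m ≤ dg ρ i (i+m) := by
  induction m, hm using Nat.le_induction with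
  | base => simp [dg, H_bot]
  | succ m hm ih =>
    have := h.dg_mono (i := i) (j := i + (m+1)) (by omega) hj
    have := ih (by omega)
    rw [show i + (m+1) - 1 = i + m by omega] at *
    omega
end SC
end SCG

namespace SCG
variable {G : Type*} [Group G]

theorem stab_smul (U : Subgroup G) (g : G) : MulAction.stabilizer G (g • ((1 : G) : G ⧸ U)) = cj g U := by
  ext x
  rw [mem_cj, MulAction.mem_stabilizer_iff, smul_smul, MulAction.Quotient.smul_coe,
    MulAction.Quotient.smul_coe, eq_comm, QuotientGroup.eq]
  simp [mul_assoc]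

theorem mem_orb {α : Type*} [MulAction G α] {A : Subgroup G} {x y : α} :
    y ∈ MulAction.orbit A x ↔ ∃ a ∈ A, a • x = y := by
  constructor
  · rintro ⟨a, ha⟩; exact ⟨a, a.2, ha⟩
  · rintro ⟨a, ha, h⟩; exact ⟨⟨a, ha⟩, h⟩

def orb {α : Type*} [MulAction G α] (A : Subgroup G) (x : α) : Set α := {y | ∃ a ∈ A, a • x = y}

theorem relIndex_orb {α : Type*} [MulAction G α] (A : Subgroup G) (x : α) :
    (MulAction.stabilizer G x).relIndex A = (orb A x).ncard := by
  rw [relIndex_orbit]; congr 1; ext y; exact mem_orb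

theorem self_mem_orb {α : Type*} [MulAction G α] (A : Subgroup G) (x : α) : x ∈ orb A x :=
  ⟨1, one_mem _, one_smul _ _⟩

theorem smul_mem_orb {α : Type*} [MulAction G α] {A : Subgroup G} {x y : α} {g : G} (hg : g ∈ A)
    (hy : y ∈ orb A x) : g • y ∈ orb A x := by
  obtain ⟨a, ha, rfl⟩ := hy
  exact ⟨g * a, mul_mem hg ha, mul_smul _ _ _⟩

theorem even_relIndex {D B : Subgroup G} (hDB : D ≤ B) {r : G} (hr : r ∈ B) (hrD : r ∉ D)
    (hr2 : r * r = 1) (hn : ∀ x ∈ D, r * x * r ∈ D) : 2 ∣ D.relIndex B := by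
  have hri : r⁻¹ = r := inv_eq_of_mul_eq_one_left hr2
  have hn' : ∀ x, r * x * r ∈ D → x ∈ D := fun x hx => by
    have := hn _ hx
    have e : r * (r * x * r) * r = (r * r) * x * (r * r) := by group
    rw [e, hr2] at this; simpa using this
  let K : Subgroup G :=
    { carrier := {x | x ∈ D ∨ x * r ∈ D}
      one_mem' := Or.inl (one_mem _)
      mul_mem' := by
        rintro a b (ha | ha) (hb | hb)
        · exact Or.inl (mul_mem ha hb)
        · exact Or.inr (by rw [mul_assoc]; exact mul_mem ha hb)
        · refine Or.inr ?_
          have := mul_mem ha (hn _ hb)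
          have e : a * r * (r * b * r) = a * (r * r) * b * r := by group
          rw [e, hr2] at this; simpa using this
        · refine Or.inl ?_
          have := mul_mem ha (hn _ hb)
          have e : a * r * (r * (b * r) * r) = a * (r * r) * b * (r * r) := by group
          rw [e, hr2] at this; simpa using this
      inv_mem' := by
        rintro a (ha | ha)
        · exact Or.inl (inv_mem ha)
        · refine Or.inr (hn' _ ?_)
          have := inv_mem ha
          rw [mul_inv_rev, hri] at this
          have e : r * (a⁻¹ * r) * r = r * a⁻¹ * (r * r) := by group
          rw [e, hr2]; simpa using this }
  have hDK : D ≤ K := fun x hx => Or.inl hx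
  have hKB : K ≤ B := by
    rintro x (hx | hx)
    · exact hDB hx
    · have := mul_mem (hDB hx) hr
      rw [mul_assoc, hr2] at this; simpa using this
  have h2 : D.relIndex K = 2 := by
    rw [Subgroup.relIndex_eq_two_iff]
    refine ⟨r, Or.inr (by rw [hr2]; exact one_mem _), fun b hb => ?_⟩
    rcases hb with hb | hb
    · refine Or.inr ⟨hb, fun h => hrD ?_⟩
      exact (Subgroup.mul_mem_cancel_left _ hb).1 h
    · refine Or.inl ⟨hb, fun h => hrD ?_⟩
      exact (Subgroup.mul_mem_cancel_left _ h).1 hb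
  rw [← Subgroup.relIndex_mul_relIndex _ _ _ hDK hKB, h2]
  exact dvd_mul_right _ _

namespace SC
variable {ρ : ℕ → G} {n : ℕ}

theorem dg_lt [Finite G] (h : SC ρ n) {i j : ℕ} (hij : i < j) (hj : j ≤ n) :
    dg ρ i j + 1 ≤ v ρ i j := by
  set U := H ρ (i+1) j with hU
  have h1 := relIndex_orbit (H ρ i j) ((1:G) : G ⧸ U)
  have h2 := relIndex_orbit U (ρ i • ((1:G) : G ⧸ U))
  rw [stab_one] at h1
  rw [stab_smul] at h2
  change dg ρ i j = _ at h2
  change v ρ i j = _ at h1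
  rw [h1, h2, ← Set.ncard_insert_of_notMem (a := ((1:G) : G ⧸ U))]
  · refine Set.ncard_le_ncard ?_ (Set.toFinite _)
    rw [Set.insert_subset_iff]
    refine ⟨MulAction.mem_orbit_self _, ?_⟩
    intro y hy
    obtain ⟨a, ha, rfl⟩ := mem_orb.1 hy
    exact mem_orb.2 ⟨a * ρ i, mul_mem (H_mono ρ (by omega) le_rfl ha) (mem_H ρ le_rfl hij),
      by rw [mul_smul]⟩
  · intro hy
    obtain ⟨a, ha, hy⟩ := mem_orb.1 hy
    rw [smul_smul, MulAction.Quotient.smul_coe, eq_comm, QuotientGroup.eq] at hy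
    simp only [inv_one, one_mul, smul_eq_mul, mul_one] at hy
    have := (Subgroup.mul_mem_cancel_left _ ha).1 hy
    exact h.rho_not_mem (by omega) hj (by omega) this

theorem dg_even (h : SC ρ n) {i j : ℕ} (hij : i < j) (hj : j ≤ n) :
    2 ∣ v ρ i j * dg ρ i j := by
  set U := H ρ (i+1) j with hU
  have hUB : U ≤ H ρ i j := H_mono ρ (by omega) le_rfl
  have e : v ρ i j * dg ρ i j = (cj (ρ i) U ⊓ U).relIndex (H ρ i j) := by
    rw [mul_comm, dg, v, ← Subgroup.inf_relIndex_right (cj _ _)]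
    exact Subgroup.relIndex_mul_relIndex _ _ _ inf_le_right hUB
  rw [e]
  have hi : i < n := by omega
  refine even_relIndex (r := ρ i) (inf_le_right.trans hUB) (mem_H ρ le_rfl hij) ?_ (h.inv i hi) ?_
  · intro hm
    exact h.rho_not_mem hi hj (by omega) hm.2
  · intro x hx
    obtain ⟨h1, h2⟩ := Subgroup.mem_inf.1 hx
    rw [mem_cj, h.inv' hi] at h1
    refine Subgroup.mem_inf.2 ⟨?_, h1⟩
    rw [mem_cj, h.inv' hi]
    have e : ρ i * (ρ i * x * ρ i) * ρ i = (ρ i * ρ i) * x * (ρ i * ρ i) := by group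
    rw [e, h.inv i hi]; simpa using h2

/-! dual -/
def du (ρ : ℕ → G) (n : ℕ) : ℕ → G := fun i => ρ (n - 1 - i)

theorem H_du (ρ : ℕ → G) {n i j : ℕ} (hj : j ≤ n) : H (du ρ n) i j = H ρ (n - j) (n - i) := by
  apply le_antisymm
  · refine H_le _ fun k h1 h2 => mem_H ρ ?_ ?_ <;> omega
  · refine H_le _ fun k h1 h2 => ?_
    have : ρ k = du ρ n (n - 1 - k) := by simp only [du]; congr 1; omega
    rw [this]; exact mem_H _ (by omega) (by omega)

theorem dual (h : SC ρ n) (hn : 0 < n) : SC (du ρ n) n where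
  inv i hi := h.inv _ (by omega)
  comm i j hij hj := h.comm' (by omega) (by omega) (by omega)
  inter i j k l hj hl := by
    rw [H_du _ hj, H_du _ hl, H_du _ (by omega), h.inter _ _ _ _ (by omega) (by omega)]
    congr 1 <;> omega
  top := by rw [H_du _ le_rfl]; simpa using h.top
  nf := by
    obtain ⟨g, hg⟩ := h.nf
    refine ⟨g⁻¹, fun a ha b hb hab => hg b⁻¹ (inv_mem ?_) a⁻¹ (inv_mem ?_) ?_⟩
    · rw [H_du _ le_rfl] at hb; simpa using hb
    · rw [H_du _ (by omega)] at ha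
      convert ha using 2 <;> omega
    · rw [← mul_inv_rev, ← hab, inv_inv]

theorem N_du (ρ : ℕ → G) {n i j : ℕ} (hj : j ≤ n) : N (du ρ n) i j = N ρ (n - j) (n - i) := by
  rw [N, N, H_du _ hj]
theorem v_du (ρ : ℕ → G) {n i j : ℕ} (hj : j ≤ n) : v (du ρ n) i j = f ρ (n - j) (n - i) := by
  rw [v, f, H_du _ hj, H_du _ hj]; congr 2
theorem f_du (ρ : ℕ → G) {n i j : ℕ} (hij : i < j) (hj : j ≤ n) :
    f (du ρ n) i j = v ρ (n - j) (n - i) := by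
  rw [v, f, H_du _ hj, H_du _ (by omega)]; congr 2; omega
theorem dg_du (ρ : ℕ → G) {n i j : ℕ} (hj : j ≤ n) : dg (du ρ n) i j = eg ρ (n - j) (n - i) := by
  rw [dg, eg, H_du _ hj, du]
  rw [show n - (i+1) = n - i - 1 by omega, show n - 1 - i = n - i - 1 by omega]
theorem eg_du (ρ : ℕ → G) {n i j : ℕ} (hij : i < j) (hj : j ≤ n) :
    eg (du ρ n) i j = dg ρ (n - j) (n - i) := by
  rw [dg, eg, H_du _ (by omega), du]
  rw [show n - 1 - (j-1) = n - j by omega, show n - (j - 1) = n - j + 1 by omega]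

theorem f_mono [Finite G] (h : SC ρ n) {i j : ℕ} (hij : i < j) (hj : j ≤ n) :
    f ρ (i+1) j < f ρ i j := by
  have := (h.dual (by omega)).v_mono (i := n - j) (j := n - i) (by omega) (by omega)
  rw [v_du _ (by omega), v_du _ (by omega)] at this
  convert this using 2 <;> omega
theorem f_ge [Finite G] (h : SC ρ n) {i : ℕ} (m : ℕ) (hj : i + m ≤ n) : m + 1 ≤ f ρ i (i+m) := by
  rcases Nat.eq_zero_or_pos m with rfl | hm
  · simp [f, H_bot]
  have := (h.dual (by omega)).v_ge (i := n - (i + m)) m (by omega)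
  rw [v_du _ (by omega)] at this
  convert this using 2 <;> omega
theorem eg_dvd (h : SC ρ n) {i j : ℕ} (hij : i < j) (hj : j ≤ n) : eg ρ i j ∣ f ρ i (j-1) := by
  have := (h.dual (by omega)).dg_dvd (i := n - j) (j := n - i) (by omega) (by omega)
  rw [v_du _ (by omega), dg_du _ (by omega)] at this
  convert this using 2 <;> omega
theorem eg_mono [Finite G] (h : SC ρ n) {i j : ℕ} (hij : i + 1 < j) (hj : j ≤ n) :
    eg ρ (i+1) j < eg ρ i j := by
  have := (h.dual (by omega)).dg_mono (i := n - j) (j := n - i) (by omega) (by omega)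
  rw [dg_du _ (by omega), dg_du _ (by omega)] at this
  convert this using 2 <;> omega
theorem eg_ge [Finite G] (h : SC ρ n) {i : ℕ} (m : ℕ) (hm : 1 ≤ m) (hj : i + m ≤ n) :
    m ≤ eg ρ i (i+m) := by
  have := (h.dual (by omega)).dg_ge (i := n - (i + m)) m hm (by omega)
  rw [dg_du _ (by omega)] at this
  convert this using 2 <;> omega
theorem eg_lt [Finite G] (h : SC ρ n) {i j : ℕ} (hij : i < j) (hj : j ≤ n) :
    eg ρ i j + 1 ≤ f ρ i j := by
  have := (h.dual (by omega)).dg_lt (i := n - j) (j := n - i) (by omega) (by omega)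
  rw [v_du _ (by omega), dg_du _ (by omega)] at this
  rw [show n - (n - i) = i by omega, show n - (n - j) = j by omega] at this; exact this
theorem eg_even (h : SC ρ n) {i j : ℕ} (hij : i < j) (hj : j ≤ n) :
    2 ∣ f ρ i j * eg ρ i j := by
  have := (h.dual (by omega)).dg_even (i := n - j) (j := n - i) (by omega) (by omega)
  rw [v_du _ (by omega), dg_du _ (by omega)] at this
  convert this using 3 <;> omega

/-! restriction -/
noncomputable def re (ρ : ℕ → G) (a b : ℕ) : ℕ → ↥(H ρ a b) := fun i =>
  if h : a + i < b then ⟨ρ (a+i), mem_H ρ (by omega) h⟩ else 1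

theorem re_coe (ρ : ℕ → G) {a b i : ℕ} (h : a + i < b) : (re ρ a b i : G) = ρ (a+i) := by
  simp [re, h]

theorem H_re (ρ : ℕ → G) {a b : ℕ} (i j : ℕ) (hj : a + j ≤ b) :
    (H (re ρ a b) i j).map (H ρ a b).subtype = H ρ (a+i) (a+j) := by
  apply le_antisymm
  · rw [Subgroup.map_le_iff_le_comap]
    refine H_le _ fun k h1 h2 => ?_
    rw [Subgroup.mem_comap, Subgroup.subtype_apply, re_coe _ (by omega)]
    exact mem_H ρ (by omega) (by omega)
  · refine H_le _ fun k h1 h2 => Subgroup.mem_map.2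
      ⟨re ρ a b (k - a), mem_H _ (by omega) (by omega), ?_⟩
    rw [Subgroup.subtype_apply, re_coe _ (by omega)]
    congr 1; omega

theorem mem_H_re (ρ : ℕ → G) {a b : ℕ} {i j : ℕ} (hj : a + j ≤ b) {x : ↥(H ρ a b)} :
    x ∈ H (re ρ a b) i j ↔ (x : G) ∈ H ρ (a+i) (a+j) := by
  rw [← H_re ρ i j hj]
  simp [Subgroup.mem_map]

theorem restrict (h : SC ρ n) {a b m : ℕ} (hab : a + m = b) (hm : 0 < m) (hb : b ≤ n) : SC (re ρ a b) m where
  inv i hi := by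
    ext; rw [Subgroup.coe_mul, re_coe _ (by omega), h.inv _ (by omega)]; rfl
  comm i j hij hj := by
    ext; rw [Subgroup.coe_mul, Subgroup.coe_mul, re_coe _ (by omega), re_coe _ (by omega)]
    exact h.comm' (by omega) (by omega) (by omega)
  inter i j k l hj hl := by
    ext x
    rw [Subgroup.mem_inf, mem_H_re _ (by omega), mem_H_re _ (by omega), mem_H_re _ (by omega),
      ← Subgroup.mem_inf, h.inter _ _ _ _ (by omega) (by omega)]
    rw [Nat.add_max_add_left, Nat.add_min_add_left]
  top := by
    ext x
    rw [mem_H_re _ (by omega)]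
    simp only [Subgroup.mem_top, iff_true]
    have := x.2
    convert this using 2 <;> omega
  nf := by
    obtain ⟨g, hg, hgn⟩ := h.nfij a b (by omega) hb
    refine ⟨⟨g, hg⟩, fun x hx y hy hxy => hgn x ?_ y ?_ ?_⟩
    · rw [mem_H_re _ (by omega)] at hx; convert hx using 2 <;> omega
    · rw [mem_H_re _ (by omega)] at hy; convert hy using 2 <;> omega
    · exact congrArg Subtype.val hxy

theorem N_re (ρ : ℕ → G) {a b : ℕ} (i j : ℕ) (hj : a + j ≤ b) :
    N (re ρ a b) i j = N ρ (a+i) (a+j) := by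
  rw [N, N, ← H_re ρ i j hj]
  exact (Subgroup.card_map_of_injective (Subgroup.subtype_injective _)).symm

theorem relIndex_re (ρ : ℕ → G) {a b : ℕ} (i j k l : ℕ) (hj : a + j ≤ b) (hl : a + l ≤ b) :
    (H (re ρ a b) i j).relIndex (H (re ρ a b) k l) =
    (H ρ (a+i) (a+j)).relIndex (H ρ (a+k) (a+l)) := by
  rw [← H_re ρ i j hj, ← H_re ρ k l hl]
  rw [Subgroup.relIndex_map_map_of_injective _ _ (Subgroup.subtype_injective _)]

theorem v_re (ρ : ℕ → G) {a b : ℕ} (i j : ℕ) (hj : a + j ≤ b) :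
    v (re ρ a b) i j = v ρ (a+i) (a+j) := by
  rw [v, v, relIndex_re _ _ _ _ _ hj hj]; rfl
theorem f_re (ρ : ℕ → G) {a b : ℕ} (i j : ℕ) (hj0 : 0 < j) (hj : a + j ≤ b) :
    f (re ρ a b) i j = f ρ (a+i) (a+j) := by
  rw [f, f, relIndex_re _ _ _ _ _ (by omega) hj]
  congr 2; omega
end SC
end SCG

namespace SCG
variable {G : Type*} [Group G]

def ew (ρ : ℕ → G) (i : ℕ) : ℕ → G
  | 0 => 1
  | (m+1) => ρ (i+m) * ew ρ i m

theorem ew_zero (ρ : ℕ → G) (i : ℕ) : ew ρ i 0 = 1 := rfl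
theorem ew_succ (ρ : ℕ → G) (i m : ℕ) : ew ρ i (m+1) = ρ (i+m) * ew ρ i m := rfl

theorem ew_right (ρ : ℕ → G) (i m : ℕ) : ew ρ i (m+1) = ew ρ (i+1) m * ρ i := by
  induction m with
  | zero => simp [ew]
  | succ m ih =>
    rw [ew_succ ρ i (m+1), ih, ew_succ ρ (i+1) m, mul_assoc, show i + (m+1) = i + 1 + m by omega]

theorem ew_mem (ρ : ℕ → G) (i m : ℕ) : ew ρ i m ∈ H ρ i (i+m) := by
  induction m with
  | zero => exact one_mem _
  | succ m ih => exact mul_mem (mem_H ρ (by omega) (by omega)) (H_mono ρ le_rfl (by omega) ih)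

structure SA (ρ : ℕ → G) (n : ℕ) (U : Subgroup G) : Prop where
  gen : H ρ 0 n = ⊤
  inv : ∀ i, i < n → ρ i * ρ i = 1
  comm : ∀ i j, i + 2 ≤ j → j < n → ρ i * ρ j = ρ j * ρ i
  mem : ∀ i, 1 ≤ i → i < n → ρ i ∈ U
  br : ∀ j, j + 2 ≤ n → (ew ρ 0 (j+2))⁻¹ * ρ j * ew ρ 0 (j+2) ∈ U

def pt (ρ : ℕ → G) (U : Subgroup G) (k : ℕ) : G ⧸ U := ew ρ 0 k • ((1:G) : G ⧸ U)

theorem pt_succ (ρ : ℕ → G) (U : Subgroup G) (k : ℕ) : ρ k • pt ρ U k = pt ρ U (k+1) := by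
  rw [pt, pt, smul_smul, ew_succ, zero_add]

theorem pt_pred (ρ : ℕ → G) (U : Subgroup G) (k : ℕ) (hk : ρ k * ρ k = 1) :
    ρ k • pt ρ U (k+1) = pt ρ U k := by
  rw [← pt_succ, smul_smul, hk, one_smul]

theorem smul_one_eq {U : Subgroup G} {g : G} (hg : g ∈ U) : g • ((1:G) : G ⧸ U) = ((1:G) : G ⧸ U) := by
  have := stab_one U
  rw [← MulAction.mem_stabilizer_iff, this]; exact hg

theorem pt_far (ρ : ℕ → G) (U : Subgroup G) {k j : ℕ} (hj : ∀ l, l < k → ρ j * ρ l = ρ l * ρ j)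
    (hU : ρ j ∈ U) : ρ j • pt ρ U k = pt ρ U k := by
  rw [pt, smul_smul, H_comm (g := ρ j) (i := 0) (j := 0 + k) (fun l _ h => hj l (by omega)) (ew_mem ρ 0 k), mul_smul,
    smul_one_eq hU]

namespace SA
variable {ρ : ℕ → G} {n : ℕ} {U : Subgroup G}

theorem pt_swap (h : SA ρ n U) {j k : ℕ} (hj : j < n) (hk : k ≤ n) :
    ρ j • pt ρ U k = pt ρ U (Equiv.swap j (j+1) k) := by
  rcases lt_trichotomy k j with h1 | h1 | h1
  · rw [Equiv.swap_apply_of_ne_of_ne (by omega) (by omega)]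
    exact pt_far ρ U (fun l hl => (h.comm l j (by omega) hj).symm) (h.mem j (by omega) hj)
  · subst h1; rw [Equiv.swap_apply_left, pt_succ]
  · rcases Nat.eq_or_lt_of_le h1 with h2 | h2
    · subst h2; rw [Nat.succ_eq_add_one, Equiv.swap_apply_right, pt_pred _ _ _ (h.inv j hj)]
    · rw [Equiv.swap_apply_of_ne_of_ne (by omega) (by omega)]
      obtain ⟨m, rfl⟩ := Nat.exists_eq_add_of_le (show j + 2 ≤ k from h2)
      clear h1 h2
      induction m with
      | zero =>
        rw [add_zero, pt, smul_smul]
        have := smul_one_eq (h.br j (by omega))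
        rw [mul_assoc, mul_smul, inv_smul_eq_iff] at this
        exact this
      | succ m ih =>
        have ih := ih (by omega)
        rw [← add_assoc, ← pt_succ, smul_smul, h.comm j (j+2+m) (by omega) (by omega), mul_smul, ih]

theorem cover (h : SA ρ n U) (x : G ⧸ U) : ∃ k ≤ n, x = pt ρ U k := by
  obtain ⟨g, rfl⟩ := QuotientGroup.mk_surjective x
  have hg : g ∈ H ρ 0 n := by rw [h.gen]; trivial
  have := act_closed (α := G ⧸ U) (fun k _ hk => h.inv k hk) {x | ∃ k ≤ n, x = pt ρ U k} ?_ hg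
    ((1:G) : G ⧸ U) ⟨0, by omega, by simp [pt, ew]⟩
  · obtain ⟨k, hk, hx⟩ := this
    refine ⟨k, hk, ?_⟩
    rw [← hx, MulAction.Quotient.smul_coe]; simp
  · rintro j _ hj _ ⟨k, hk, rfl⟩
    refine ⟨_, ?_, h.pt_swap hj hk⟩
    rw [Equiv.swap_apply_def]; split_ifs <;> omega

theorem inj (h : SA ρ n U) (h0 : ρ 0 ∉ U) : ∀ a b, a ≤ n → b ≤ n → pt ρ U a = pt ρ U b → a = b := by
  have key0 : ∀ b, b < n → pt ρ U 0 ≠ pt ρ U (b+1) := by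
    intro b
    induction b with
    | zero =>
      intro hb he
      apply h0
      rw [← stab_one U, MulAction.mem_stabilizer_iff]
      simp only [pt, ew, one_smul, mul_one] at he
      exact he.symm
    | succ b ih =>
      intro hb he
      apply ih (by omega)
      have := congrArg (fun x => ρ (b+1) • x) he
      beta_reduce at this
      rw [pt_pred _ _ _ (h.inv _ hb), h.pt_swap hb (by omega),
        Equiv.swap_apply_of_ne_of_ne (by omega) (by omega)] at this
      exact this
  have key : ∀ a b, a < b → b ≤ n → pt ρ U a ≠ pt ρ U b := by
    intro a
    induction a with
    | zero => intro b hb hn; have := key0 (b-1) (by omega); rwa [show b - 1 + 1 = b by omega] at this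
    | succ a ih =>
      intro b hb hn he
      apply ih b (by omega) hn
      have := congrArg (fun x => ρ a • x) he
      beta_reduce at this
      rw [pt_pred _ _ _ (h.inv _ (by omega)), h.pt_swap (by omega) hn,
        Equiv.swap_apply_of_ne_of_ne (by omega) (by omega)] at this
      exact this
  intro a b ha hb he
  rcases lt_trichotomy a b with h1 | h1 | h1
  · exact absurd he (key a b h1 hb)
  · exact h1
  · exact absurd he.symm (key b a h1 ha)

theorem index_le (h : SA ρ n U) : U.index ≤ n + 1 := by
  have : Function.Surjective (fun k : Fin (n+1) => pt ρ U k) := by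
    intro x; obtain ⟨k, hk, rfl⟩ := h.cover x; exact ⟨⟨k, by omega⟩, rfl⟩
  have := Nat.card_le_card_of_surjective _ this
  rw [Subgroup.index]; simpa using this

theorem exists_hom (h : SA ρ n U) (h0 : ρ 0 ∉ U) : ∃ φ : G →* Equiv.Perm (Fin (n+1)),
    Function.Surjective φ ∧ ∀ i : Fin n, φ (ρ i) = Equiv.swap i.castSucc i.succ := by
  have hb : Function.Bijective (fun k : Fin (n+1) => pt ρ U k) := by
    constructor
    · intro a b hab; exact Fin.ext (h.inj h0 a b (by omega) (by omega) hab)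
    · intro x; obtain ⟨k, hk, rfl⟩ := h.cover x; exact ⟨⟨k, by omega⟩, rfl⟩
  let e := Equiv.ofBijective _ hb
  let φ : G →* Equiv.Perm (Fin (n+1)) :=
    (e.symm.permCongrHom.toMonoidHom).comp (MulAction.toPermHom G (G ⧸ U))
  have hφ : ∀ i : Fin n, φ (ρ i) = Equiv.swap i.castSucc i.succ := by
    intro i
    ext1 k
    change e.symm (ρ i • e k) = _
    rw [Equiv.symm_apply_eq]
    change ρ i • pt ρ U k = pt ρ U _
    rw [h.pt_swap i.2 (by omega)]
    congr 1
    simp only [Equiv.swap_apply_def, Fin.ext_iff, Fin.val_castSucc, Fin.val_succ]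
    split_ifs <;> simp
  refine ⟨φ, ?_, hφ⟩
  rw [← MonoidHom.range_eq_top, eq_top_iff]
  intro x _
  have hx : x ∈ Submonoid.closure (Set.range fun i : Fin n => Equiv.swap i.castSucc i.succ) := by
    rw [Equiv.Perm.mclosure_swap_castSucc_succ]; trivial
  have hle : Submonoid.closure (Set.range fun i : Fin n => Equiv.swap i.castSucc i.succ) ≤
      φ.range.toSubmonoid := by
    rw [Submonoid.closure_le]
    rintro _ ⟨i, rfl⟩
    exact ⟨ρ i, hφ i⟩
  exact hle hx
end SA

namespace SC
variable {ρ : ℕ → G} {n : ℕ}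

theorem sa_of_min [Finite G] (h : SC ρ n) (hv : v ρ 0 n = n + 1) : SA ρ n (H ρ 1 n) := by
  have hvk : ∀ k, k ≤ n → v ρ 0 (n-k) = n - k + 1 := by
    intro k; induction k with
    | zero => intro _; simpa using hv
    | succ k ih =>
      intro hk
      have h1 := h.v_mono (i := 0) (j := n - k) (by omega) (by omega)
      have h2 := h.v_ge (i := 0) (n - (k+1)) (by omega)
      rw [zero_add] at h2
      rw [show n - k - 1 = n - (k+1) by omega, ih (by omega)] at h1
      omega
  set U := H ρ 1 n with hU
  let S : ℕ → Set (G ⧸ U) := fun k => {x | ∃ l ≤ k, x = pt ρ U l}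
  have hSs : ∀ k, S (k+1) = insert (pt ρ U (k+1)) (S k) := by
    intro k; ext x; simp only [S, Set.mem_insert_iff, Set.mem_ofPred_eq]
    constructor
    · rintro ⟨l, hl, rfl⟩
      rcases Nat.eq_or_lt_of_le hl with h1 | h1
      · left; rw [h1]
      · right; exact ⟨l, by omega, rfl⟩
    · rintro (rfl | ⟨l, hl, rfl⟩)
      · exact ⟨_, le_rfl, rfl⟩
      · exact ⟨l, by omega, rfl⟩
  have horb : ∀ k, k ≤ n → (orb (H ρ 0 k) (pt ρ U 0)).ncard = k + 1 := by
    intro k hk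
    have h0 : pt ρ U 0 = ((1:G) : G ⧸ U) := by simp [pt, ew]
    rw [← relIndex_orb, h0, stab_one, ← Subgroup.inf_relIndex_right, hU,
      h.inter _ _ _ _ le_rfl hk]
    have := hvk (n - k) (by omega)
    rw [show n - (n-k) = k by omega] at this
    rw [← this, v]; congr 2; omega
  have hfar : ∀ j k, k < j → j < n → ρ j • pt ρ U k = pt ρ U k := fun j k hk hj =>
    pt_far ρ U (fun l hl => h.comm' hj (by omega) (by omega)) (mem_H ρ (by omega) hj)
  have key : ∀ k, k ≤ n → orb (H ρ 0 k) (pt ρ U 0) = S k ∧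
      (∀ m, k = m + 1 → pt ρ U k ∉ S m) ∧ (S k).ncard = k + 1 := by
    intro k; induction k with
    | zero =>
      intro hk
      have : S 0 = {pt ρ U 0} := by
        ext x; simp [S]
      refine ⟨?_, fun m hm => by omega, by rw [this]; simp⟩
      rw [this]
      refine (Set.eq_of_subset_of_ncard_le ?_ ?_ (Set.toFinite _)).symm
      · rw [Set.singleton_subset_iff]; exact self_mem_orb _ _
      · rw [horb 0 hk]; simp
    | succ k ih =>
      intro hk
      obtain ⟨h1, -, h3⟩ := ih (by omega)
      have hno : pt ρ U (k+1) ∉ S k := by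
        intro hin
        have hc : orb (H ρ 0 (k+1)) (pt ρ U 0) ⊆ S k := by
          intro x hx
          obtain ⟨a, ha, rfl⟩ := hx
          refine act_closed (fun l _ hl => h.inv l (by omega)) (S k) ?_ ha _ ⟨0, by omega, rfl⟩
          intro j _ hj x hx
          rcases Nat.lt_or_ge j k with h4 | h4
          · rw [← h1] at hx ⊢
            obtain ⟨a, ha, rfl⟩ := hx
            exact ⟨ρ j * a, mul_mem (mem_H ρ (by omega) h4) ha, by rw [mul_smul]⟩
          · have hjk : j = k := by omega
            subst hjk
            obtain ⟨l, hl, rfl⟩ := hx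
            rcases Nat.eq_or_lt_of_le hl with h5 | h5
            · rw [h5, pt_succ]; exact hin
            · rw [hfar j l h5 (by omega)]; exact ⟨l, hl, rfl⟩
        have := Set.ncard_le_ncard hc (Set.toFinite _)
        rw [horb _ hk] at this; omega
      have hcard : (S (k+1)).ncard = k + 1 + 1 := by
        rw [hSs, Set.ncard_insert_of_notMem hno (Set.toFinite _), h3]
      refine ⟨?_, fun m hm => ?_, hcard⟩
      · refine (Set.eq_of_subset_of_ncard_le ?_ ?_ (Set.toFinite _)).symm
        · rintro _ ⟨l, hl, rfl⟩
          refine ⟨ew ρ 0 l, H_mono ρ le_rfl (by omega) (ew_mem ρ 0 l), ?_⟩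
          simp [pt, ew]
        · rw [hcard, horb _ hk]
      · have : m = k := by omega
        rw [this]; exact hno
  refine ⟨h.top, h.inv, h.comm, fun i h1 h2 => mem_H ρ h1 h2, fun j hj => ?_⟩
  obtain ⟨h1, h2, -⟩ := key (j+2) hj
  have hin : ρ j • pt ρ U (j+2) ∈ S (j+2) := by
    rw [← h1]
    refine ⟨ρ j * ew ρ 0 (j+2), mul_mem (mem_H ρ (by omega) (by omega))
      (H_mono ρ le_rfl (by omega) (ew_mem ρ 0 _)), ?_⟩
    simp [pt, ew, mul_smul]
  obtain ⟨l, hl, hle⟩ := hin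
  have h3 := h2 (j+1) rfl
  have hfix : ρ j • pt ρ U (j+2) = pt ρ U (j+2) := by
    rcases Nat.eq_or_lt_of_le hl with h4 | h4
    · rw [hle, h4]
    · exfalso; apply h3
      have e : pt ρ U (j+2) = ρ j • pt ρ U l := by
        rw [← hle, smul_smul, h.inv j (by omega), one_smul]
      rw [e]
      rcases lt_trichotomy l j with h5 | h5 | h5
      · rw [hfar _ _ h5 (by omega)]; exact ⟨l, by omega, rfl⟩
      · rw [h5, pt_succ]; exact ⟨_, le_rfl, rfl⟩
      · rw [show l = j + 1 by omega, pt_pred _ _ _ (h.inv j (by omega))]; exact ⟨j, by omega, rfl⟩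
  rw [pt, ← mul_smul, ← inv_smul_eq_iff, ← mul_smul, ← mul_assoc, ← MulAction.mem_stabilizer_iff,
    stab_one] at hfix
  exact hfix

theorem v_le_of_sa (h : SC ρ n) (hs : SA ρ n (H ρ 1 n)) : v ρ 0 n ≤ n + 1 := by
  have := hs.index_le
  rwa [v, h.top, Subgroup.relIndex_top_right]

theorem ew_re (ρ : ℕ → G) {a b : ℕ} (i m : ℕ) (hm : a + i + m ≤ b) :
    ((ew (re ρ a b) i m : ↥(H ρ a b)) : G) = ew ρ (a+i) m := by
  induction m with
  | zero => rfl
  | succ m ih =>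
    rw [ew_succ, ew_succ, Subgroup.coe_mul, ih (by omega), re_coe _ (by omega), add_assoc]

theorem lemA [Finite G] (h : SC ρ n) (hn : 2 ≤ n) (hb : ρ 0 * ρ 1 * ρ 0 = ρ 1 * ρ 0 * ρ 1)
    (hv : v ρ 1 n = n) : v ρ 0 n = n + 1 := by
  refine le_antisymm ?_ (by have := h.v_ge (i := 0) n (by omega); simpa using this)
  apply h.v_le_of_sa
  have hr := h.restrict (a := 1) (b := n) (m := n - 1) (by omega) (by omega) le_rfl
  have hs := hr.sa_of_min (by
    rw [v_re _ _ _ (by omega), show 1 + (n-1) = n by omega, hv]; omega)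
  refine ⟨h.top, h.inv, h.comm, fun i h1 h2 => mem_H ρ h1 h2, fun j hj => ?_⟩
  rcases j with _ | j
  · have e : ew ρ 0 (0+2) = ρ 1 * ρ 0 := by simp [ew]
    rw [e, mul_inv_rev, h.inv' (by omega), h.inv' (by omega), hb]
    have : ρ 1 * ρ 0 * ρ 1 * (ρ 1 * ρ 0) = ρ 1 * ρ 0 * (ρ 1 * ρ 1) * ρ 0 := by group
    rw [this, h.inv 1 (by omega), mul_one, mul_assoc, h.inv 0 (by omega), mul_one]
    exact mem_H ρ le_rfl (by omega)
  · have h1 := hs.br j (by omega)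
    rw [mem_H_re _ (by omega)] at h1
    simp only [Subgroup.coe_mul, Subgroup.coe_inv] at h1
    rw [ew_re _ _ _ (by omega), re_coe _ (by omega), show 1 + (n-1) = n by omega] at h1
    rw [show j + 1 + 2 = (j + 2) + 1 by omega, ew_right, show j + 1 = 1 + j by omega]
    set x := (ew ρ (1+0) (j+2))⁻¹ * ρ (1+j) * ew ρ (1+0) (j+2) with hx
    have e : (ew ρ (0+1) (j+2) * ρ 0)⁻¹ * ρ (1+j) * (ew ρ (0+1) (j+2) * ρ 0) = (ρ 0)⁻¹ * (x * ρ 0) := by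
      rw [hx]; group
    rw [e, ← H_comm (g := ρ 0) (fun l h4 h5 => h.comm' (by omega) (by omega) (by omega)) h1,
      inv_mul_cancel_left]
    exact H_mono ρ (by omega) le_rfl h1
end SC
end SCG

namespace SCG
variable {G : Type*} [Group G]
noncomputable def p (ρ : ℕ → G) (i : ℕ) : ℕ := orderOf (ρ i * ρ (i+1))

theorem swap_cube {n : ℕ} {a b c : Fin n} (h1 : a ≠ b) (h2 : b ≠ c) (h3 : a ≠ c) :
    (Equiv.swap a b * Equiv.swap b c)^3 = 1 := by
  have := Equiv.Perm.isThreeCycle_swap_mul_swap_same h1.symm h2 h3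
  rw [Equiv.swap_comm a b, ← this.orderOf, pow_orderOf_eq_one]

namespace SC
variable {ρ : ℕ → G} {n : ℕ}

theorem N_one [Finite G] (h : SC ρ n) {i : ℕ} (hi : i < n) : N ρ i (i+1) = 2 := by
  have : H ρ i (i+1) = Subgroup.zpowers (ρ i) := by
    apply le_antisymm
    · exact H_le ρ fun k h1 h2 => by rw [show k = i by omega]; exact Subgroup.mem_zpowers _
    · rw [Subgroup.zpowers_le]; exact mem_H ρ le_rfl (by omega)
  rw [N, this, Nat.card_zpowers]
  refine orderOf_eq_prime (by rw [pow_two, h.inv i hi]) fun h1 => ?_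
  refine h.rho_not_mem (i := 0) (j := 0) hi (by omega) (by omega) (by rw [h1]; exact one_mem _)

theorem N_two [Finite G] (h : SC ρ n) {i : ℕ} (hi : i + 1 < n) : N ρ i (i+2) = 2 * p ρ i := by
  set a := ρ i with ha
  set b := ρ (i+1) with hb
  have ha2 : a * a = 1 := h.inv i (by omega)
  have hb2 : b * b = 1 := h.inv _ hi
  have hai : a⁻¹ = a := inv_eq_of_mul_eq_one_left ha2
  have hbi : b⁻¹ = b := inv_eq_of_mul_eq_one_left hb2
  set Z := Subgroup.zpowers (a * b) with hZ
  have hcj : ∀ x ∈ Z, a * x * a ∈ Z := by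
    intro x hx
    obtain ⟨k, rfl⟩ := Subgroup.mem_zpowers_iff.1 hx
    have : a * (a*b)^k * a = (b * a)^k := by
      have e := conj_zpow (a := a) (b := a * b) (i := k)
      rw [hai] at e
      rw [← e, ← mul_assoc, ha2, one_mul]
    rw [this, show b * a = (a*b)⁻¹ by rw [mul_inv_rev, hai, hbi]]
    exact zpow_mem (inv_mem (Subgroup.mem_zpowers _)) _
  have haK : a ∈ H ρ i (i+2) := mem_H ρ le_rfl (by omega)
  have hbK : b ∈ H ρ i (i+2) := mem_H ρ (by omega) (by omega)
  have hZK : Z ≤ H ρ i (i+2) := by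
    rw [hZ, Subgroup.zpowers_le]
    exact mul_mem haK hbK
  have hcov : ∀ x ∈ H ρ i (i+2), x ∈ Z ∨ x * a ∈ Z := by
    intro x hx
    have haa : ∀ y : G, (y ∈ Z ∨ y * a ∈ Z) → (a * y ∈ Z ∨ a * y * a ∈ Z) := by
      rintro y (hy | hy)
      · right; exact hcj y hy
      · left
        have := hcj _ hy
        rwa [show a * (y * a) * a = a * y * (a * a) by group, ha2, mul_one] at this
    have := left_closed (ρ := ρ) (i := i) (j := i+2) (fun k h1 h2 => h.inv k (by omega))
      {y | y ∈ Z ∨ y * a ∈ Z} ?_ hx 1 (Or.inl (one_mem _))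
    · simpa using this
    · intro k h1 h2 y hy
      rcases Nat.eq_or_lt_of_le h1 with h3 | h3
      · subst h3; exact haa y hy
      · rw [show k = i + 1 by omega, ← hb]
        have e : b = (a * b)⁻¹ * a := by rw [mul_inv_rev, hai, hbi, mul_assoc, ha2, mul_one]
        have hz : (a * b)⁻¹ ∈ Z := inv_mem (Subgroup.mem_zpowers _)
        rcases haa y hy with h4 | h4
        · left; rw [e, mul_assoc]; exact mul_mem hz h4
        · right; rw [e, mul_assoc, mul_assoc, ← mul_assoc a]; exact mul_mem hz h4
  have hN : 6 ≤ N ρ i (i+2) := by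
    have h1 := v_mul ρ i (i+2)
    have h2 := h.v_ge (i := i) 2 (by omega)
    rw [show i + 2 = i + 1 + 1 by omega, h.N_one hi] at h1
    rw [show i + 2 = i + 1 + 1 by omega] at h2 ⊢
    omega
  have hcZ : Nat.card Z = p ρ i := Nat.card_zpowers _
  have haZ : a ∉ Z := by
    intro haZ
    have hbZ : b ∈ Z := by
      have := mul_mem haZ (Subgroup.mem_zpowers (a*b))
      rwa [← mul_assoc, ha2, one_mul] at this
    have hab : a * b = b * a := by
      obtain ⟨k, hk⟩ := Subgroup.mem_zpowers_iff.1 haZ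
      obtain ⟨l, hl⟩ := Subgroup.mem_zpowers_iff.1 hbZ
      have := ((Commute.refl (a*b)).zpow_zpow k l).eq
      rwa [hk, hl] at this
    have h2 : (a * b)^2 = 1 := by
      rw [pow_two]; nth_rewrite 2 [hab]
      rw [show a * b * (b * a) = a * (b * b) * a by group, hb2, mul_one, ha2]
    have h3 : H ρ i (i+2) = Z := le_antisymm (H_le ρ fun k h1 h2 => by
      rcases Nat.eq_or_lt_of_le h1 with h3 | h3
      · subst h3; exact haZ
      · rw [show k = i + 1 by omega]; exact hbZ) hZK
    rw [N, h3, hcZ] at hN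
    have h5 : p ρ i ∣ 2 := orderOf_dvd_of_pow_eq_one h2
    have := Nat.le_of_dvd (by norm_num) h5
    omega
  have h2 : Z.relIndex (H ρ i (i+2)) = 2 := by
    rw [Subgroup.relIndex_eq_two_iff]
    refine ⟨a, haK, fun x hx => ?_⟩
    rcases hcov x hx with h1 | h1
    · exact Or.inr ⟨h1, fun h2 => haZ ((Subgroup.mul_mem_cancel_left _ h1).1 h2)⟩
    · exact Or.inl ⟨h1, fun h2 => haZ ((Subgroup.mul_mem_cancel_left _ h2).1 h1)⟩
  have := card_mul_relIndex hZK
  rw [N, ← this, h2, hcZ, mul_comm]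

theorem v_two [Finite G] (h : SC ρ n) {i : ℕ} (hi : i + 1 < n) : v ρ i (i+2) = p ρ i := by
  have h1 := v_mul ρ i (i+2)
  rw [h.N_two hi, show i + 2 = i + 1 + 1 by omega, h.N_one hi] at h1
  rw [show i + 2 = i + 1 + 1 by omega]; omega
theorem f_two [Finite G] (h : SC ρ n) {i : ℕ} (hi : i + 1 < n) : f ρ i (i+2) = p ρ i := by
  have h1 := f_mul ρ i (i+2)
  rw [h.N_two hi, show i + 2 - 1 = i + 1 by omega, h.N_one (by omega)] at h1
  omega
theorem p_ge [Finite G] (h : SC ρ n) {i : ℕ} (hi : i + 1 < n) : 3 ≤ p ρ i := by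
  rw [← h.v_two hi]; exact h.v_ge 2 (by omega)

theorem braid [Finite G] (h : SC ρ n) {i : ℕ} (hi : i + 1 < n) (hp : (ρ i * ρ (i+1))^3 = 1) :
    ρ i * ρ (i+1) * ρ i = ρ (i+1) * ρ i * ρ (i+1) := by
  have h1 := h.inv' hi
  have h2 := h.inv' (show i < n by omega)
  have e : (ρ i * ρ (i+1))^3 = (ρ i * ρ (i+1) * ρ i) * (ρ (i+1) * ρ i * ρ (i+1)) := by
    simp only [pow_succ, pow_zero, one_mul, mul_assoc]
  rw [e] at hp
  have := eq_inv_of_mul_eq_one_left hp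
  simpa [mul_inv_rev, h1, h2, mul_assoc] using this

/-- the symmetric group quotient -/
theorem sym_hom [Finite G] {U : Subgroup G} (h : SA ρ n U) (h0 : ρ 0 ∉ U) :
    ∃ φ : G →* Equiv.Perm (Fin (n+1)), Nat.card G = (n+1).factorial * Nat.card φ.ker ∧
      (∀ i : Fin n, φ (ρ i) = Equiv.swap i.castSucc i.succ) ∧
      (∀ i, i + 1 < n → (ρ i * ρ (i+1))^3 ∈ φ.ker) := by
  obtain ⟨φ, hs, hφ⟩ := h.exists_hom h0
  refine ⟨φ, ?_, hφ, fun i hi => ?_⟩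
  · have h1 := Subgroup.index_mul_card φ.ker
    rw [Subgroup.index_ker, MonoidHom.range_eq_top.2 hs] at h1
    rw [← h1, Subgroup.card_top, Nat.card_eq_fintype_card, Fintype.card_perm, Fintype.card_fin]
  · rw [MonoidHom.mem_ker, map_pow, map_mul, hφ ⟨i, by omega⟩, hφ ⟨i+1, hi⟩]
    exact swap_cube (by simp [Fin.ext_iff]) (by simp [Fin.ext_iff]) (by simp [Fin.ext_iff]; omega)

theorem sym_hom' [Finite G] (h : SC ρ n) (hn : 0 < n) (hv : v ρ 0 n = n + 1) :
    ∃ φ : G →* Equiv.Perm (Fin (n+1)), N ρ 0 n = (n+1).factorial * Nat.card φ.ker ∧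
      (∀ i : Fin n, φ (ρ i) = Equiv.swap i.castSucc i.succ) ∧
      (∀ i, i + 1 < n → (ρ i * ρ (i+1))^3 ∈ φ.ker) := by
  have := sym_hom (h.sa_of_min hv) (h.rho_not_mem hn le_rfl (by omega))
  rw [N, h.top, Subgroup.card_top]; exact this

theorem conj_z (h : SC ρ n) {i : ℕ} (hi : i + 1 < n) :
    ρ i * (ρ i * ρ (i+1))^3 * ρ i = ((ρ i * ρ (i+1))^3)⁻¹ ∧
    ρ (i+1) * (ρ i * ρ (i+1))^3 * ρ (i+1) = ((ρ i * ρ (i+1))^3)⁻¹ := by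
  have h1 := h.inv' hi
  have h2 := h.inv' (show i < n by omega)
  have h3 := h.inv i (by omega)
  have h4 := h.inv _ hi
  rw [← inv_pow, mul_inv_rev, h1, h2]
  set a := ρ i
  set b := ρ (i+1)
  constructor
  · calc a * (a * b)^3 * a = (a * a) * (b * a)^3 := by simp only [pow_succ, pow_zero, one_mul, mul_assoc]
      _ = _ := by rw [h3, one_mul]
  · calc b * (a * b)^3 * b = (b * a)^3 * (b * b) := by simp only [pow_succ, pow_zero, one_mul, mul_assoc]
      _ = _ := by rw [h4, mul_one]

theorem conj_cube_false {g z : G} (hz : z * z ≠ 1) (hg : g^3 = 1) (hc : g * z * g⁻¹ = z⁻¹) : False := by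
  have h1 : g * z⁻¹ * g⁻¹ = z := by
    have h2 := congrArg (fun x => x⁻¹) hc
    simpa [mul_inv_rev, mul_assoc] using h2
  have h2 : g^3 * z * (g^3)⁻¹ = z⁻¹ := by
    have : g^3 * z * (g^3)⁻¹ = g * (g * (g * z * g⁻¹) * g⁻¹) * g⁻¹ := by
      simp only [pow_succ, pow_zero, one_mul, mul_assoc, mul_inv_rev, inv_one, mul_one]
    rw [this, hc, h1, hc]
  rw [hg] at h2
  simp only [one_mul, inv_one, mul_one] at h2
  apply hz
  nth_rewrite 1 [h2]; simp

/-- kernel of order three -/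
theorem fact_n [Finite G] (h : SC ρ n) (hn : 4 ≤ n) {a : ℕ} (ha : a + 4 ≤ n) (h0 : p ρ a = 3)
    (h1 : p ρ (a+1) = 3) (h2 : p ρ (a+2) = 9)
    (hv : v ρ (a+1) (a+4) = 4) (hN : N ρ (a+1) (a+4) = 72) : False := by
  have hr := h.restrict (a := a+1) (b := a+4) (m := 3) (by omega) (by omega) ha
  obtain ⟨φ, hc, hφ, hk⟩ := hr.sym_hom' (by omega) (by rw [v_re _ _ _ (by omega)]; exact hv)
  rw [N_re _ _ _ (by omega)] at hc
  change N ρ (a+1) (a+4) = _ at hc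
  rw [hN] at hc
  have hc3 : Nat.card φ.ker = 3 := by
    rw [show Nat.factorial (3+1) = 24 from rfl] at hc; omega
  set z' := (re ρ (a+1) (a+4) 1 * re ρ (a+1) (a+4) 2)^3 with hz'
  have hz'k : z' ∈ φ.ker := hk 1 (by omega)
  have hzc : (z' : G) = (ρ (a+2) * ρ (a+2+1))^3 := by
    rw [hz']; push_cast; rw [re_coe _ (by omega), re_coe _ (by omega)]
  set z := (ρ (a+2) * ρ (a+2+1))^3 with hz
  have hord : orderOf z = 3 := by
    rw [hz, orderOf_pow' _ (by norm_num)]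
    change p ρ (a+2) / Nat.gcd (p ρ (a+2)) 3 = 3
    rw [h2]; rfl
  have hzz : z * z ≠ 1 := by
    intro hh
    have := orderOf_dvd_of_pow_eq_one (show z^2 = 1 by rw [pow_two, hh])
    rw [hord] at this; omega
  have hz3 : z^3 = 1 := by rw [← hord, pow_orderOf_eq_one]
  have hz1 : z ≠ 1 := by rintro hh; rw [hh] at hzz; simp at hzz
  -- kernel elements
  have hker : ∀ x : ↥(H ρ (a+1) (a+4)), x ∈ φ.ker → (x : G) = 1 ∨ (x : G) = z ∨ (x:G) = z⁻¹ := by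
    intro x hx
    have hlez : Subgroup.zpowers z' ≤ φ.ker := by rw [Subgroup.zpowers_le]; exact hz'k
    have hoz : orderOf z' = 3 := by rw [← hord, ← hzc, Subgroup.orderOf_coe]
    have heq : Subgroup.zpowers z' = φ.ker :=
      Subgroup.eq_of_le_of_card_ge hlez (by rw [hc3, Nat.card_zpowers, hoz])
    rw [← heq] at hx
    obtain ⟨k, hk, hkx⟩ := (isOfFinOrder_of_finite z').mem_zpowers_iff_mem_range_orderOf.1 hx |> Finset.mem_image.1
    rw [hoz, Finset.mem_range] at hk
    have hxz : (x : G) = z^k := by rw [← hkx, ← hzc]; push_cast; rfl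
    interval_cases k
    · left; simpa using hxz
    · right; left; simpa using hxz
    · right; right; rw [hxz]; exact eq_inv_of_mul_eq_one_left (by rw [← pow_succ, hz3])
  have hρ1i := h.inv' (show a + 1 < n by omega)
  have hc1 : ρ (a+1) * z * (ρ (a+1))⁻¹ = z ∨ ρ (a+1) * z * (ρ (a+1))⁻¹ = z⁻¹ := by
    have hm : re ρ (a+1) (a+4) 0 * z' * (re ρ (a+1) (a+4) 0)⁻¹ ∈ φ.ker :=
      (MonoidHom.normal_ker φ).conj_mem _ hz'k _
    have := hker _ hm
    push_cast at this
    rw [hzc, re_coe _ (by omega)] at this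
    rcases this with h5 | h5
    · exfalso; apply hz1
      simpa using (conj_eq_one_iff.1 h5)
    · exact h5
  have hcz := h.conj_z (i := a+2) (by omega)
  have hc2 : ρ (a+2) * z * (ρ (a+2))⁻¹ = z⁻¹ := by
    rw [h.inv' (by omega)]; exact hcz.1
  have hb1 : (ρ (a+1) * ρ (a+1+1))^3 = 1 := by rw [← h1]; exact pow_orderOf_eq_one _
  have hb0 : (ρ a * ρ (a+1))^3 = 1 := by rw [← h0]; exact pow_orderOf_eq_one _
  have hc1' : ρ (a+1) * z * (ρ (a+1))⁻¹ = z⁻¹ := by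
    rcases hc1 with hc1 | hc1
    · exfalso
      refine conj_cube_false hzz hb1 ?_
      have : ρ (a+1) * ρ (a+1+1) * z * (ρ (a+1) * ρ (a+1+1))⁻¹ =
        ρ (a+1) * (ρ (a+2) * z * (ρ (a+2))⁻¹) * (ρ (a+1))⁻¹ := by group
      rw [this, hc2]
      calc _ = (ρ (a+1) * z * (ρ (a+1))⁻¹)⁻¹ := by group
        _ = _ := by rw [hc1]
    · exact hc1
  refine conj_cube_false hzz hb0 ?_
  have : ρ a * ρ (a+1) * z * (ρ a * ρ (a+1))⁻¹ =
    ρ a * (ρ (a+1) * z * (ρ (a+1))⁻¹) * (ρ a)⁻¹ := by group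
  rw [this, hc1']
  have hcom : ρ a * z = z * ρ a := by
    refine H_comm (ρ := ρ) (g := ρ a) (i := a+2) (j := a+4) (fun l h4 h5 => h.comm' (by omega) (by omega) (by omega)) ?_
    exact pow_mem (mul_mem (mem_H ρ (by omega) (by omega)) (mem_H ρ (by omega) (by omega))) _
  rw [mul_inv_eq_iff_eq_mul]
  have := (Commute.inv_right (show Commute (ρ a) z from hcom)).eq
  exact this

/-- type {3,6} with four vertices -/
theorem fact_t36 [Finite G] (h : SC ρ n) {a : ℕ} (ha : a + 3 ≤ n) 
    (hv : v ρ a (a+3) = 4) (hN : N ρ a (a+3) = 48) (hp : p ρ (a+1) = 6) :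
    ρ a * (ρ (a+1) * ρ (a+1+1))^3 = (ρ (a+1) * ρ (a+1+1))^3 * ρ a := by
  have hr := h.restrict (a := a) (b := a+3) (m := 3) (by omega) (by omega) ha
  obtain ⟨φ, hc, hφ, hk⟩ := hr.sym_hom' (by omega) (by rw [v_re _ _ _ (by omega)]; exact hv)
  rw [N_re _ _ _ (by omega)] at hc
  change N ρ a (a+3) = _ at hc
  rw [hN] at hc
  have hc3 : Nat.card φ.ker = 2 := by
    rw [show Nat.factorial (3+1) = 24 from rfl] at hc; omega
  set z' := (re ρ a (a+3) 1 * re ρ a (a+3) 2)^3 with hz'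
  have hz'k : z' ∈ φ.ker := hk 1 (by omega)
  have hzc : (z' : G) = (ρ (a+1) * ρ (a+1+1))^3 := by
    rw [hz']; push_cast; rw [re_coe _ (by omega), re_coe _ (by omega)]
  set z := (ρ (a+1) * ρ (a+1+1))^3 with hz
  have hz1 : z' ≠ 1 := by
    intro hh
    have h1 : z = 1 := by rw [← hzc, hh]; rfl
    have := orderOf_dvd_of_pow_eq_one h1
    change p ρ (a+1) ∣ 3 at this
    rw [hp] at this; omega
  have hm : re ρ a (a+3) 0 * z' * (re ρ a (a+3) 0)⁻¹ ∈ φ.ker :=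
      (MonoidHom.normal_ker φ).conj_mem _ hz'k _
  have hm1 : re ρ a (a+3) 0 * z' * (re ρ a (a+3) 0)⁻¹ ≠ 1 := fun hh => hz1 (conj_eq_one_iff.1 hh)
  have heq : re ρ a (a+3) 0 * z' * (re ρ a (a+3) 0)⁻¹ = z' := by
    obtain ⟨x, y, hxy, huniv⟩ := Nat.card_eq_two_iff.1 hc3
    have hall : ∀ w : φ.ker, w = x ∨ w = y := fun w => by
      have : w ∈ ({x, y} : Set φ.ker) := by rw [huniv]; trivial
      simpa using this
    have h1 := hall 1
    have h2 := hall ⟨_, hz'k⟩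
    have h3 := hall ⟨_, hm⟩
    have n1 : (⟨_, hz'k⟩ : φ.ker) ≠ 1 := fun hh => hz1 (congrArg Subtype.val hh)
    have n2 : (⟨_, hm⟩ : φ.ker) ≠ 1 := fun hh => hm1 (congrArg Subtype.val hh)
    have : (⟨_, hm⟩ : φ.ker) = ⟨_, hz'k⟩ := by
      rcases h1 with h1 | h1 <;> rcases h2 with h2 | h2 <;> rcases h3 with h3 | h3 <;>
        rw [h1] at n1 n2 <;> simp_all
    exact congrArg Subtype.val this
  have := congrArg Subtype.val heq
  push_cast at this
  rw [hzc, re_coe _ (by omega), mul_inv_eq_iff_eq_mul] at this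
  exact this
end SC
end SCG

namespace SCG
variable {G : Type*} [Group G]

theorem comm_of_card_le_five {K : Type*} [Group K] [Finite K] (h : Nat.card K ≤ 5) (a b : K) :
    a * b = b * a := by
  have hpos : 0 < Nat.card K := Nat.card_pos
  have hprime : ∀ q : ℕ, q.Prime → Nat.card K = q → a * b = b * a := by
    intro q hq hc
    have : Fact q.Prime := ⟨hq⟩
    have : IsCyclic K := isCyclic_of_prime_card hc
    let _ := IsCyclic.commGroup (α := K)
    exact mul_comm a b
  interval_cases hc : Nat.card K
  · have := (Nat.card_eq_one_iff_unique.1 hc).1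
    exact Subsingleton.elim _ _
  · exact hprime 2 (by norm_num) rfl
  · exact hprime 3 (by norm_num) rfl
  · have : Fact (Nat.Prime 2) := ⟨by norm_num⟩
    exact (IsPGroup.commutative_of_card_eq_prime_sq (p := 2) (G := K) (by rw [hc]; norm_num)) a b
  · exact hprime 5 (by norm_num) rfl

theorem five_trivial {K : Subgroup G} [Finite K] [K.Normal] (hK : Nat.card K ≤ 5) {g : G}
    (hg : g^5 ∈ K) : ∀ x ∈ K, g * x = x * g := by
  set c : MulAut K := MulAut.conjNormal g with hc
  have hc5 : c^5 = 1 := by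
    ext x
    rw [hc, ← map_pow, MulAut.conjNormal_apply]
    have := comm_of_card_le_five hK ⟨_, hg⟩ x
    have h2 := congrArg Subtype.val this
    push_cast at h2
    rw [h2]; simp
  have : Fact (Nat.Prime 5) := ⟨by norm_num⟩
  have hP : IsPGroup 5 (Subgroup.zpowers c) := by
    rintro ⟨x, hx⟩
    obtain ⟨k, rfl⟩ := Subgroup.mem_zpowers_iff.1 hx
    refine ⟨1, ?_⟩
    apply Subtype.ext
    push_cast
    rw [← zpow_natCast, ← zpow_mul, mul_comm, zpow_mul]
    simp [hc5]
  have hm := hP.card_modEq_card_fixedPoints K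
  have hle : Nat.card (MulAction.fixedPoints (Subgroup.zpowers c) K) ≤ Nat.card K :=
    Nat.card_le_card_of_injective Subtype.val Subtype.val_injective
  have hpos : 0 < Nat.card (MulAction.fixedPoints (Subgroup.zpowers c) K) := by
    have : Nonempty (MulAction.fixedPoints (Subgroup.zpowers c) K) := by
      refine ⟨⟨1, fun m => ?_⟩⟩
      change (m : MulAut K) 1 = 1
      exact map_one _
    exact Nat.card_pos
  have heq : Nat.card (MulAction.fixedPoints (Subgroup.zpowers c) K) = Nat.card K := by
    unfold Nat.ModEq at hm; omega
  have huniv : MulAction.fixedPoints (Subgroup.zpowers c) K = Set.univ := by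
    apply Set.eq_of_subset_of_ncard_le (Set.subset_univ _) _ (Set.toFinite _)
    rw [Set.ncard_univ, ← heq]; rfl
  intro x hx
  have : (⟨x, hx⟩ : K) ∈ MulAction.fixedPoints (Subgroup.zpowers c) K := by rw [huniv]; trivial
  have h2 := this ⟨c, Subgroup.mem_zpowers c⟩
  have h3 : ((c ⟨x, hx⟩ : K) : G) = x := congrArg Subtype.val h2
  rw [hc, MulAut.conjNormal_apply] at h3
  exact mul_inv_eq_iff_eq_mul.1 h3

namespace SC
variable {ρ : ℕ → G} {n : ℕ}

theorem lemE5 [Finite G] (h : SC ρ 5) (hv : v ρ 0 5 = 6) (hN : N ρ 0 5 < 3840) :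
    ∀ i, i < 4 → ((ρ i * ρ (i+1))^3)^2 = 1 ∧
      ∀ k, k < 5 → ρ k * (ρ i * ρ (i+1))^3 = (ρ i * ρ (i+1))^3 * ρ k := by
  obtain ⟨φ, hc, hφ, hk⟩ := h.sym_hom' (by omega) hv
  have hK : Nat.card φ.ker ≤ 5 := by
    rw [show Nat.factorial (5+1) = 720 from rfl] at hc; omega
  have h0 := hφ 0
  have h1 := hφ 1
  have h2 := hφ 2
  have h3 := hφ 3
  have h4 := hφ 4
  simp only [Fin.isValue, Fin.val_zero, Fin.val_one, Fin.val_two] at h0 h1 h2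
  change φ (ρ 3) = _ at h3
  change φ (ρ 4) = _ at h4
  have i0 := h.inv' (show 0 < 5 by omega)
  have i1 := h.inv' (show 1 < 5 by omega)
  have i2 := h.inv' (show 2 < 5 by omega)
  have i3 := h.inv' (show 3 < 5 by omega)
  have i4 := h.inv' (show 4 < 5 by omega)
  have key : ∀ a b c d : G, a⁻¹ = a → b⁻¹ = b → (φ a * φ b * φ c * φ d)^5 = 1 →
      (φ b * φ a * φ c * φ d)^5 = 1 → (a * b)^3 ∈ φ.ker → ∀ x ∈ φ.ker, a * b * x = x * (a * b) := by
    intro a b c d ha hb e1 e2 e3 x hx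
    have k1 := five_trivial hK (g := a * b * c * d) (by rw [MonoidHom.mem_ker]; simpa using e1) x hx
    have k2 := five_trivial hK (g := b * a * c * d) (by rw [MonoidHom.mem_ker]; simpa using e2) x hx
    have k3 := comm_of_card_le_five hK ⟨_, e3⟩ ⟨x, hx⟩
    have k3 : (a*b)^3 * x = x * (a * b)^3 := congrArg Subtype.val k3
    have k4 : Commute ((a * b)^2) x := by
      have : (a * b)^2 = (a * b * c * d) * (b * a * c * d)⁻¹ := by
        simp only [mul_inv_rev, ha, hb]; rw [pow_two]; group
      rw [this]
      exact Commute.mul_left k1 (Commute.inv_left k2)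
    have k5 : Commute ((a * b)^3 * ((a * b)^2)⁻¹) x := Commute.mul_left k3 (Commute.inv_left k4)
    rwa [show (a * b)^3 * ((a * b)^2)⁻¹ = a * b by group] at k5
  have tri : ∀ k, k < 4 → ∀ x ∈ φ.ker, ρ k * ρ (k+1) * x = x * (ρ k * ρ (k+1)) := by
    intro k hk4
    interval_cases k
    · exact key _ _ (ρ 2) (ρ 3) i0 i1 (by rw [h0, h1, h2, h3]; decide +kernel) (by rw [h0, h1, h2, h3]; decide +kernel) (hk 0 (by omega))
    · exact key _ _ (ρ 3) (ρ 4) i1 i2 (by rw [h4, h1, h2, h3]; decide +kernel) (by rw [h4, h1, h2, h3]; decide +kernel) (hk 1 (by omega))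
    · exact key _ _ (ρ 1) (ρ 0) i2 i3 (by rw [h0, h1, h2, h3]; decide +kernel) (by rw [h0, h1, h2, h3]; decide +kernel) (hk 2 (by omega))
    · exact key _ _ (ρ 2) (ρ 1) i3 i4 (by rw [h4, h1, h2, h3]; decide +kernel) (by rw [h4, h1, h2, h3]; decide +kernel) (hk 3 (by omega))
  intro i hi
  set z := (ρ i * ρ (i+1))^3 with hz
  have hzK : z ∈ φ.ker := hk i (by omega)
  have step : ∀ k, k < 4 → (ρ k * z = z * ρ k ↔ ρ (k+1) * z = z * ρ (k+1)) := by
    intro k hk4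
    have := tri k hk4 z hzK
    have hkk := h.inv k (by omega)
    have hkk1 := h.inv (k+1) (by omega)
    constructor
    · intro h5
      have e : ρ (k+1) = ρ k * (ρ k * ρ (k+1)) := by rw [← mul_assoc, hkk, one_mul]
      rw [e]; exact (Commute.mul_left (show Commute _ _ from h5) (show Commute _ _ from this)).eq
    · intro h5
      have e : ρ k = (ρ k * ρ (k+1)) * ρ (k+1) := by rw [mul_assoc, hkk1, mul_one]
      rw [e]; exact (Commute.mul_left (show Commute _ _ from this) (show Commute _ _ from h5)).eq
  have s0 := step 0 (by omega)
  have s1 := step 1 (by omega)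
  have s2 := step 2 (by omega)
  have s3 := step 3 (by omega)
  have far : ∀ k, k < 5 → (k + 2 ≤ i ∨ i + 3 ≤ k) → ρ k * z = z * ρ k := by
    intro k hk5 hki
    refine H_comm (ρ := ρ) (g := ρ k) (i := i) (j := i+2) (fun l h4 h5 => h.comm' (by omega) (by omega) (by omega)) ?_
    exact pow_mem (mul_mem (mem_H ρ (by omega) (by omega)) (mem_H ρ (by omega) (by omega))) _
  have all : ∀ k, k < 5 → ρ k * z = z * ρ k := by
    have f0 := far 0 (by omega)
    have f4 := far 4 (by omega)
    have : (ρ 0 * z = z * ρ 0) ∧ (ρ 1 * z = z * ρ 1) ∧ (ρ 2 * z = z * ρ 2) ∧ (ρ 3 * z = z * ρ 3) ∧ (ρ 4 * z = z * ρ 4) := by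
      have : (0 + 2 ≤ i ∨ i + 3 ≤ 0) ∨ (4 + 2 ≤ i ∨ i + 3 ≤ 4) := by omega
      rcases this with h5 | h5
      · have := f0 h5; tauto
      · have := f4 h5; tauto
    intro k hk5
    interval_cases k
    exacts [this.1, this.2.1, this.2.2.1, this.2.2.2.1, this.2.2.2.2]
  refine ⟨?_, all⟩
  have := (h.conj_z (i := i) (by omega)).1
  rw [← hz, all i (by omega), mul_assoc, h.inv i (by omega), mul_one] at this
  rw [pow_two]; nth_rewrite 1 [this]; simp
end SC
end SCG

namespace SCG
variable {G : Type*} [Group G]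

namespace SC
theorem p_re (ρ : ℕ → G) {a b i : ℕ} (hi : a + i + 1 < b) : p (re ρ a b) i = p ρ (a+i) := by
  rw [p, p, ← Subgroup.orderOf_coe]; push_cast
  rw [re_coe _ (by omega), re_coe _ (by omega)]; rfl

variable {ρ : ℕ → G} {n : ℕ}

theorem p_du (h : SC ρ n) {i : ℕ} (hi : i + 1 < n) : p (du ρ n) i = p ρ (n-2-i) := by
  rw [p, p, ← orderOf_inv, mul_inv_rev]
  simp only [du]
  rw [h.inv' (by omega), h.inv' (by omega), show n - 1 - (i+1) = n - 2 - i by omega,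
    show n - 1 - i = n - 2 - i + 1 by omega]

theorem card_Q (h : SC ρ n) : Nat.card (G ⧸ H ρ 1 n) = v ρ 0 n := by
  rw [v, h.top, Subgroup.relIndex_top_right]; rfl

theorem u0_ne (h : SC ρ n) (hn : 0 < n) : ρ 0 • ((1:G) : G ⧸ H ρ 1 n) ≠ ((1:G) : G ⧸ H ρ 1 n) := by
  intro he
  rw [← MulAction.mem_stabilizer_iff, stab_one] at he
  exact h.rho_not_mem hn le_rfl (by omega) he

theorem dg_orb : dg ρ 0 n = (orb (H ρ 1 n) (ρ 0 • ((1:G) : G ⧸ H ρ 1 n))).ncard := by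
  rw [← relIndex_orb, stab_smul]; rfl

theorem fact_e3 [Finite G] (h : SC ρ 3) (h0 : p ρ 0 = 4) (h1 : p ρ 1 = 4) : 7 ≤ v ρ 0 3 := by
  have hd : dg ρ 0 3 = 4 := by
    have e1 := h.dg_dvd (i := 0) (j := 3) (by omega) (by omega)
    have e2 := h.dg_ge (i := 0) 3 (by omega) (by omega)
    have e3 := h.v_two (i := 1) (by omega)
    simp only [zero_add, Nat.reduceAdd] at e1 e2 e3
    rw [e3, h1] at e1
    have := Nat.le_of_dvd (by norm_num) e1
    interval_cases dg ρ 0 3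
    · omega
    · rfl
  rw [dg_orb] at hd
  rw [← h.card_Q]
  set u : G ⧸ H ρ 1 3 := ((1:G) : G ⧸ H ρ 1 3) with hu
  set a := ρ 0 • u with ha
  set b := ρ 1 • a with hb
  set c := ρ 2 • b with hc
  set d := ρ 1 • c with hdd
  set o := ρ 0 • b with ho
  set w := ρ 2 • o with hw
  have inv : ∀ i, i < 3 → ∀ x : G ⧸ H ρ 1 3, ρ i • ρ i • x = x := fun i hi x => by
    rw [smul_smul, h.inv i hi, one_smul]
  have br : ∀ i, i < 2 → p ρ i = 4 → ∀ x : G ⧸ H ρ 1 3,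
      ρ i • ρ (i+1) • ρ i • ρ (i+1) • x = ρ (i+1) • ρ i • ρ (i+1) • ρ i • x := by
    intro i hi hp x
    simp only [smul_smul]
    congr 1
    have e : (ρ i * ρ (i+1))^4 = 1 := by rw [← hp]; exact pow_orderOf_eq_one _
    have e2 : (ρ i * ρ (i+1))^4 = (ρ i * (ρ (i+1) * (ρ i * ρ (i+1)))) * (ρ i * (ρ (i+1) * (ρ i * ρ (i+1)))) := by
      simp only [pow_succ, pow_zero, one_mul, mul_assoc]
    rw [e2] at e
    have e3 := eq_inv_of_mul_eq_one_left e
    simpa [mul_inv_rev, h.inv' (show i < 3 by omega), h.inv' (show i + 1 < 3 by omega), mul_assoc] using e3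
  have u1 : ρ 1 • u = u := smul_one_eq (mem_H ρ (by omega) (by omega))
  have u2 : ρ 2 • u = u := smul_one_eq (mem_H ρ (by omega) (by omega))
  have a2 : ρ 2 • a = a := by
    rw [ha, smul_smul, ← h.comm 0 2 (by omega) (by omega), mul_smul, u2]
  have d2 : ρ 2 • d = d := by
    have := br 1 (by omega) h1 a
    simp only [Nat.reduceAdd] at this
    rw [a2] at this
    exact this.symm
  have o1 : ρ 1 • o = o := by
    have := br 0 (by omega) h0 u
    simp only [Nat.reduceAdd, zero_add] at this
    rw [u1] at this
    exact this.symm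
  have sub : orb (H ρ 1 3) a ⊆ (({a, b, c, d} : Finset (G ⧸ H ρ 1 3)) : Set (G ⧸ H ρ 1 3)) := by
    rintro _ ⟨g, hg, rfl⟩
    refine act_closed (fun k _ hk => h.inv k hk) _ ?_ hg a (by simp)
    intro k hk1 hk3 x hx
    simp only [Finset.coe_insert, Finset.coe_singleton, Set.mem_insert_iff, Set.mem_singleton_iff] at hx ⊢
    interval_cases k
    · rcases hx with rfl | rfl | rfl | rfl
      · right; left; rfl
      · left; exact inv 1 (by omega) a
      · right; right; right; rfl
      · right; right; left; exact inv 1 (by omega) c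
    · rcases hx with hx | hx | hx | hx
      · rw [hx, a2]; left; rfl
      · rw [hx]; right; right; left; rfl
      · rw [hx]; right; left; exact inv 2 (by omega) b
      · rw [hx, d2]; right; right; right; rfl
  have hcard : 4 ≤ ({a, b, c, d} : Finset (G ⧸ H ρ 1 3)).card := by
    rw [← hd, ← Set.ncard_coe_finset]
    exact Set.ncard_le_ncard sub (Finset.finite_toSet _)
  have hnd : [a, b, c, d].Nodup := by
    have : [a,b,c,d].toFinset = ({a,b,c,d} : Finset (G ⧸ H ρ 1 3)) := by simp
    rw [← this] at hcard
    rw [← Multiset.coe_nodup, ← Multiset.toFinset_card_eq_card_iff_nodup]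
    exact le_antisymm (List.toFinset_card_le _) hcard
  have b1 : ρ 1 • b = a := inv 1 (by omega) a
  have d1 : ρ 1 • d = c := inv 1 (by omega) c
  have c2 : ρ 2 • c = b := inv 2 (by omega) b
  have w2 : ρ 2 • w = o := inv 2 (by omega) o
  have a0 : ρ 0 • a = u := inv 0 (by omega) u
  have o0 : ρ 0 • o = b := inv 0 (by omega) b
  have w0 : ρ 0 • c = w := by
    rw [hw, ho, hc, smul_smul (ρ 0) (ρ 2) b, smul_smul (ρ 2) (ρ 0) b, h.comm 0 2 (by omega) (by omega)]
  have hnd7 : [u, a, b, c, d, o, w].Nodup := by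
    clear_value u a b c d o w
    simp only [List.nodup_cons, List.mem_cons, List.not_mem_nil, or_false, not_or, not_false_eq_true, List.nodup_nil, and_true] at hnd ⊢
    refine ⟨⟨?_, ?_, ?_, ?_, ?_, ?_⟩, ⟨?_, ?_, ?_, ?_, ?_⟩, ⟨?_, ?_, ?_, ?_⟩, ⟨?_, ?_, ?_⟩, ⟨?_, ?_⟩, ?_⟩ <;> grind
  have : Fintype (G ⧸ H ρ 1 3) := Fintype.ofFinite _
  have := List.Nodup.length_le_card (α := G ⧸ H ρ 1 3) (l := [u,a,b,c,d,o,w]) hnd7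
  rw [Nat.card_eq_fintype_card]
  exact this

theorem fact_z4 [Finite G] (h : SC ρ 4) (h0 : p ρ 0 = 3) (h2 : p ρ 2 = 4)
    (hv1 : v ρ 1 4 = 6) (hv : v ρ 0 4 = 7) : False := by
  have hd0 : dg ρ 0 4 = 6 := by
    have e1 := h.dg_dvd (i := 0) (j := 4) (by omega) (by omega)
    have e2 := h.dg_ge (i := 0) 4 (by omega) (by omega)
    simp only [zero_add, Nat.reduceAdd] at e1 e2 
    rw [hv1] at e1
    have := Nat.le_of_dvd (by norm_num) e1
    interval_cases dg ρ 0 4 <;> omega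
  have hd1 : dg ρ 1 4 = 4 := by
    have e1 := h.dg_dvd (i := 1) (j := 4) (by omega) (by omega)
    have e2 := h.dg_ge (i := 1) 3 (by omega) (by omega)
    have e3 := h.v_two (i := 2) (by omega)
    simp only [zero_add, Nat.reduceAdd] at e1 e2 e3
    rw [e3, h2] at e1
    have := Nat.le_of_dvd (by norm_num) e1
    interval_cases dg ρ 1 4 <;> omega
  have hcQ := h.card_Q
  have hne := h.u0_ne (by omega)
  set U := H ρ 1 4 with hU
  set u : G ⧸ U := ((1:G) : G ⧸ U) with hu
  set a := ρ 0 • u with ha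
  have inv : ∀ i, i < 4 → ∀ x : G ⧸ U, ρ i • ρ i • x = x := fun i hi x => by
    rw [smul_smul, h.inv i hi, one_smul]
  have hda : (orb U a).ncard = 6 := by rw [← hd0, dg_orb]
  -- stabilizer of a in U
  have hst : cj (ρ 0) U ⊓ U = H ρ 2 4 := by
    have hle : H ρ 2 4 ≤ cj (ρ 0) U ⊓ U := by
      refine le_inf (fun x hx => ?_) (H_mono ρ (by omega) le_rfl)
      rw [mem_cj, mul_assoc, ← H_comm (g := ρ 0) (fun l h4 h5 => h.comm' (by omega) (by omega) (by omega)) hx]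
      rw [← mul_assoc]; simpa using H_mono ρ (by omega) le_rfl hx
    symm
    refine Subgroup.eq_of_le_of_card_ge hle ?_
    have e1 := card_mul_relIndex (A := cj (ρ 0) U ⊓ U) (B := U) inf_le_right
    rw [Subgroup.inf_relIndex_right] at e1
    have e2 : (cj (ρ 0) U).relIndex U = 6 := hd0
    have e3 := card_mul_relIndex (A := H ρ 2 4) (B := U) (H_mono ρ (by omega) le_rfl)
    have e4 : (H ρ 2 4).relIndex U = 6 := hv1
    rw [e2] at e1
    rw [e4] at e3
    omega
  set b := ρ 1 • a with hb
  set A := orb (H ρ 2 4) b with hA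
  have hAc : A.ncard = 4 := by
    rw [← hd1, hA, ← relIndex_orb, dg]
    have : b = (ρ 1 * ρ 0) • u := by rw [mul_smul]
    rw [this, hu, stab_smul]
    rw [← Subgroup.inf_relIndex_right, ← Subgroup.inf_relIndex_right (cj (ρ 1) _)]
    congr 1
    ext x
    simp only [Subgroup.mem_inf, mem_cj]
    rw [show 1 + 1 = 2 from rfl, ← hst]
    simp only [Subgroup.mem_inf, mem_cj]
    constructor
    · rintro ⟨k1, k2, k3⟩
      refine ⟨⟨by simpa [mul_assoc] using k1, ?_⟩, k2, k3⟩
      exact mul_mem (mul_mem (inv_mem (mem_H ρ (by omega) (by omega))) k3) (mem_H ρ (by omega) (by omega))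
    · rintro ⟨⟨k1, k2⟩, k3⟩
      exact ⟨by simpa [mul_assoc] using k1, k3⟩
  have br : ∀ x : G ⧸ U, ρ 0 • ρ 1 • ρ 0 • x = ρ 1 • ρ 0 • ρ 1 • x := by
    intro x
    have := h.braid (i := 0) (by omega) (by rw [← h0]; exact pow_orderOf_eq_one _)
    simp only [smul_smul, ← mul_assoc]; rw [this]
  have u1 : ∀ k, 1 ≤ k → k < 4 → ρ k • u = u := fun k h1 h2 => smul_one_eq (mem_H ρ h1 h2)
  have a2 : ∀ k, 2 ≤ k → k < 4 → ρ k • a = a := fun k h1 h2 => by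
    rw [ha, smul_smul, ← h.comm 0 k (by omega) (by omega), mul_smul, u1 k (by omega) h2]
  have b0 : ρ 0 • b = b := by rw [hb, ha, br, u1 1 (by omega) (by omega)]
  have A0 : ∀ x ∈ A, ρ 0 • x = x := by
    rintro _ ⟨g, hg, rfl⟩
    rw [smul_smul, H_comm (g := ρ 0) (fun l h4 h5 => h.comm' (by omega) (by omega) (by omega)) hg, mul_smul, b0]
  have a0 : ρ 0 • a = u := inv 0 (by omega) u
  have huA : u ∉ A := fun hx => hne (A0 u hx)
  have haA : a ∉ A := fun hx => hne (by have := A0 a hx; rw [a0] at this; exact this.symm)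
  -- rho 0 fixes everything else
  have fix0 : ∀ x : G ⧸ U, x ≠ u → x ≠ a → ρ 0 • x = x := by
    intro x hxu hxa
    by_contra hx
    have hxA : x ∉ A := fun hh => hx (A0 x hh)
    have hx'A : ρ 0 • x ∉ A := fun hh => hx (by have := A0 _ hh; rw [inv 0 (by omega)] at this; exact this.symm)
    have hx'u : ρ 0 • x ≠ u := fun hh => hxa (by rw [ha, ← hh, inv 0 (by omega)])
    have hx'a : ρ 0 • x ≠ a := fun hh => hxu (by rw [← a0, ← hh, inv 0 (by omega)])
    have hs : (insert u (insert a (insert x (insert (ρ 0 • x) A)))).ncard ≤ 7 := by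
      rw [← hv, ← hcQ, ← Set.ncard_univ]
      exact Set.ncard_le_ncard (Set.subset_univ _) (Set.toFinite _)
    rw [Set.ncard_insert_of_notMem, Set.ncard_insert_of_notMem, Set.ncard_insert_of_notMem, Set.ncard_insert_of_notMem, hAc] at hs
    · omega
    · exact hx'A
    · simp only [Set.mem_insert_iff, not_or]; exact ⟨fun hh => hx hh.symm, hxA⟩
    · simp only [Set.mem_insert_iff, not_or]; exact ⟨hxa.symm, hx'a.symm, haA⟩
    · simp only [Set.mem_insert_iff, not_or]; exact ⟨fun hh => hne hh.symm, hxu.symm, hx'u.symm, huA⟩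
  have sub : orb U a ⊆ insert a A := by
    rintro _ ⟨g, hg, rfl⟩
    refine act_closed (fun k _ hk => h.inv k hk) _ ?_ hg a (by simp)
    intro k hk1 hk3 x hx
    rcases Nat.eq_or_lt_of_le hk1 with hk | hk
    · subst hk
      rcases hx with rfl | hx
      · right; exact self_mem_orb _ _
      · by_cases hxb : x = b
        · left; rw [hxb]; exact inv 1 (by omega) a
        · right
          have hxu : ρ 1 • x ≠ u := fun hh => huA (by
            have : x = u := by rw [← inv 1 (by omega) x, hh, u1 1 (by omega) (by omega)]
            rwa [this] at hx)
          have hxa : ρ 1 • x ≠ a := fun hh => hxb (by rw [← inv 1 (by omega) x, hh])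
          have e1 := fix0 _ hxu hxa
          have e2 := br x
          rw [A0 x hx, e1, inv 1 (by omega)] at e2
          rw [e2]; exact hx
    · rcases hx with rfl | hx
      · left; exact a2 k hk hk3
      · right; exact smul_mem_orb (mem_H ρ hk hk3) hx
  have := Set.ncard_le_ncard sub (Set.toFinite _)
  rw [hda, Set.ncard_insert_of_notMem haA, hAc] at this
  omega
end SC
end SCG

namespace SCG
abbrev T6 := ℕ × ℕ × ℕ × ℕ × ℕ × ℕ

/-- arithmetic constraints in rank three -/
structure R3 (p q x y d e : ℕ) : Prop where
  hp : 3 ≤ p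
  hq : 3 ≤ q
  hx : p + 1 ≤ x
  hy : q + 1 ≤ y
  hxy : x * q = y * p
  hN : x * q ≤ 54
  hd : d ∣ q
  hd3 : 3 ≤ d
  hdx : d + 1 ≤ x
  hd2 : 2 ∣ x * d
  he : e ∣ p
  he3 : 3 ≤ e
  hey : e + 1 ≤ y
  he2 : 2 ∣ y * e
  h33 : p = 3 → q = 3 → x = 4
  h44 : p = 4 → q = 4 → 7 ≤ x

/-- arithmetic constraints in rank four -/
structure R4 (s w : T6) (v f D E : ℕ) : Prop where
  hs : s.2.1 = w.1
  hv5 : 5 ≤ v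
  hv : s.2.2.1 + 1 ≤ v
  hf5 : 5 ≤ f
  hf : w.2.2.2.1 + 1 ≤ f
  hN : v * (w.2.2.1 * w.2.1) = f * (s.2.2.1 * s.2.1)
  hb : v * (w.2.2.1 * w.2.1) ≤ 274
  hA : s.1 = 3 → w.2.2.1 = 4 → v = 5
  hA' : w.2.1 = 3 → s.2.2.2.1 = 4 → f = 5
  hz : ¬ (s.1 = 3 ∧ s.2.1 = 3 ∧ w.2.1 = 4 ∧ w.2.2.1 = 6 ∧ v = 7)
  hz' : ¬ (s.1 = 4 ∧ s.2.1 = 3 ∧ w.2.1 = 3 ∧ s.2.2.2.1 = 6 ∧ f = 7)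
  hn : ¬ (s.1 = 3 ∧ s.2.1 = 3 ∧ w.2.1 = 9 ∧ w.2.2.1 = 4)
  hn' : ¬ (s.1 = 9 ∧ s.2.1 = 3 ∧ w.2.1 = 3 ∧ s.2.2.2.1 = 4)
  hD : D ∣ w.2.2.1
  hDd : s.2.2.2.2.1 < D
  hDv : D + 1 ≤ v
  hD2 : 2 ∣ v * D
  hE : E ∣ s.2.2.2.1
  hEe : w.2.2.2.2.2 < E
  hEf : E + 1 ≤ f
  hE2 : 2 ∣ f * E

def L3 : List T6 := [
   (3,3,4,4,3,3), (3,4,6,8,4,3), (3,4,9,12,4,3), (3,4,12,16,4,3), (3,5,6,10,5,3),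
   (3,6,4,8,3,3), (3,6,6,12,3,3), (3,6,7,14,6,3), (3,6,8,16,3,3), (3,6,8,16,6,3),
   (3,6,9,18,6,3), (3,8,6,16,4,3), (3,9,4,12,3,3), (3,9,6,18,3,3), (3,12,4,16,3,3),
   (4,3,8,6,3,4), (4,3,12,9,3,4), (4,3,16,12,3,4), (4,4,7,7,4,4), (4,4,8,8,4,4),
   (4,4,9,9,4,4), (4,4,10,10,4,4), (4,4,11,11,4,4), (4,4,12,12,4,4), (4,4,13,13,4,4),
   (4,5,8,10,5,4), (4,6,6,9,3,4), (4,6,8,12,3,4), (4,6,8,12,6,4), (4,8,5,10,4,4),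
   (4,8,6,12,4,4), (5,3,10,6,3,5), (5,4,10,8,4,5), (5,5,6,6,5,5), (5,5,8,8,5,5),
   (5,5,10,10,5,5), (6,3,8,4,3,3), (6,3,12,6,3,3), (6,3,14,7,3,6), (6,3,16,8,3,3),
   (6,3,16,8,3,6), (6,3,18,9,3,6), (6,4,9,6,4,3), (6,4,12,8,4,3), (6,4,12,8,4,6),
   (6,6,7,7,6,6), (6,6,8,8,3,3), (6,6,8,8,3,6), (6,6,8,8,6,3), (6,6,8,8,6,6),
   (6,6,9,9,6,6), (8,3,16,6,3,4), (8,4,10,5,4,4), (8,4,12,6,4,4), (9,3,12,4,3,3),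
   (9,3,18,6,3,3), (12,3,16,4,3,3)]

def L4 : List (T6 × T6 × ℕ × ℕ × ℕ × ℕ) := [
   ((3,3,4,4,3,3),(3,3,4,4,3,3),5,5,4,4), ((3,3,4,4,3,3),(3,4,6,8,4,3),8,16,6,4),
   ((3,3,4,4,3,3),(3,4,6,8,4,3),9,18,6,4), ((3,3,4,4,3,3),(3,4,6,8,4,3),10,20,6,4),
   ((3,3,4,4,3,3),(3,4,6,8,4,3),11,22,6,4), ((3,3,4,4,3,3),(3,4,12,16,4,3),5,20,4,4),
   ((3,3,4,4,3,3),(3,5,6,10,5,3),8,20,6,4), ((3,3,4,4,3,3),(3,6,4,8,3,3),5,10,4,4),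
   ((3,3,4,4,3,3),(3,6,6,12,3,3),7,21,6,4), ((3,3,4,4,3,3),(3,6,8,16,3,3),5,20,4,4),
   ((3,3,4,4,3,3),(3,6,8,16,6,3),5,20,4,4), ((3,3,4,4,3,3),(3,12,4,16,3,3),5,20,4,4),
   ((3,4,6,8,4,3),(4,3,8,6,3,4),9,9,8,8), ((3,4,6,8,4,3),(4,3,8,6,3,4),10,10,8,8),
   ((3,4,6,8,4,3),(4,3,8,6,3,4),11,11,8,8), ((3,6,4,8,3,3),(6,3,8,4,3,3),5,5,4,4),
   ((3,6,4,8,3,3),(6,3,8,4,3,3),6,6,4,4), ((3,6,4,8,3,3),(6,3,8,4,3,3),7,7,4,4),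
   ((3,6,4,8,3,3),(6,3,8,4,3,3),8,8,4,4), ((3,6,4,8,3,3),(6,3,8,4,3,3),9,9,4,4),
   ((3,6,4,8,3,3),(6,3,8,4,3,3),9,9,4,8), ((3,6,4,8,3,3),(6,3,8,4,3,3),9,9,8,4),
   ((3,6,4,8,3,3),(6,3,8,4,3,3),9,9,8,8), ((3,6,4,8,3,3),(6,3,8,4,3,3),10,10,4,4),
   ((3,6,4,8,3,3),(6,3,8,4,3,3),10,10,4,8), ((3,6,4,8,3,3),(6,3,8,4,3,3),10,10,8,4),
   ((3,6,4,8,3,3),(6,3,8,4,3,3),10,10,8,8), ((3,6,4,8,3,3),(6,3,8,4,3,3),11,11,4,4),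
   ((3,6,4,8,3,3),(6,3,8,4,3,3),11,11,4,8), ((3,6,4,8,3,3),(6,3,8,4,3,3),11,11,8,4),
   ((3,6,4,8,3,3),(6,3,8,4,3,3),11,11,8,8), ((3,6,4,8,3,3),(6,3,12,6,3,3),6,9,4,4),
   ((3,6,4,8,3,3),(6,3,12,6,3,3),6,9,4,8), ((3,6,4,8,3,3),(6,3,16,8,3,3),5,10,4,4),
   ((3,6,4,8,3,3),(6,3,16,8,3,3),5,10,4,8), ((3,6,4,8,3,3),(6,3,16,8,3,6),5,10,4,8),
   ((3,6,4,8,3,3),(6,4,12,8,4,3),5,10,4,4), ((3,6,4,8,3,3),(6,4,12,8,4,3),5,10,4,8),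
   ((3,6,4,8,3,3),(6,4,12,8,4,6),5,10,4,8), ((3,6,4,8,3,3),(6,6,8,8,3,3),5,10,4,4),
   ((3,6,4,8,3,3),(6,6,8,8,3,3),5,10,4,8), ((3,6,4,8,3,3),(6,6,8,8,3,6),5,10,4,8),
   ((3,6,4,8,3,3),(6,6,8,8,6,3),5,10,4,4), ((3,6,4,8,3,3),(6,6,8,8,6,3),5,10,4,8),
   ((3,6,4,8,3,3),(6,6,8,8,6,6),5,10,4,8), ((3,6,6,12,3,3),(6,3,8,4,3,3),9,6,4,4),
   ((3,6,6,12,3,3),(6,3,8,4,3,3),9,6,8,4), ((3,6,6,12,3,3),(6,3,12,6,3,3),7,7,4,4),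
   ((3,6,6,12,3,3),(6,3,12,6,3,3),7,7,4,6), ((3,6,6,12,3,3),(6,3,12,6,3,3),7,7,6,4),
   ((3,6,6,12,3,3),(6,3,12,6,3,3),7,7,6,6), ((3,6,8,16,3,3),(6,3,8,4,3,3),10,5,4,4),
   ((3,6,8,16,3,3),(6,3,8,4,3,3),10,5,8,4), ((3,6,8,16,6,3),(6,3,8,4,3,3),10,5,8,4),
   ((3,9,4,12,3,3),(9,3,12,4,3,3),5,5,4,4), ((3,9,4,12,3,3),(9,3,12,4,3,3),6,6,4,4),
   ((3,9,4,12,3,3),(9,3,12,4,3,3),7,7,4,4), ((3,9,4,12,3,3),(9,3,12,4,3,3),7,7,4,6),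
   ((3,9,4,12,3,3),(9,3,12,4,3,3),7,7,6,4), ((3,9,4,12,3,3),(9,3,12,4,3,3),7,7,6,6),
   ((3,12,4,16,3,3),(12,3,16,4,3,3),5,5,4,4), ((4,3,8,6,3,4),(3,3,4,4,3,3),16,8,4,6),
   ((4,3,8,6,3,4),(3,3,4,4,3,3),18,9,4,6), ((4,3,8,6,3,4),(3,3,4,4,3,3),20,10,4,6),
   ((4,3,8,6,3,4),(3,3,4,4,3,3),22,11,4,6), ((4,3,8,6,3,4),(3,4,6,8,4,3),9,9,6,6),
   ((4,3,8,6,3,4),(3,4,6,8,4,3),10,10,6,6), ((4,3,8,6,3,4),(3,4,6,8,4,3),11,11,6,6),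
   ((4,3,8,6,3,4),(3,6,4,8,3,3),9,9,4,6), ((4,3,8,6,3,4),(3,6,4,8,3,3),10,10,4,6),
   ((4,3,8,6,3,4),(3,6,4,8,3,3),11,11,4,6), ((4,3,16,12,3,4),(3,3,4,4,3,3),20,5,4,4),
   ((4,4,7,7,4,4),(4,4,7,7,4,4),8,8,7,7), ((4,6,8,12,3,4),(6,3,8,4,3,3),10,5,4,4),
   ((4,6,8,12,3,4),(6,3,8,4,3,3),10,5,8,4), ((4,6,8,12,6,4),(6,3,8,4,3,3),10,5,8,4),
   ((4,8,5,10,4,4),(8,4,10,5,4,4),6,6,5,5), ((5,3,10,6,3,5),(3,3,4,4,3,3),20,8,4,6),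
   ((5,5,6,6,5,5),(5,5,6,6,5,5),7,7,6,6), ((5,5,6,6,5,5),(5,5,6,6,5,5),8,8,6,6),
   ((5,5,6,6,5,5),(5,5,6,6,5,5),9,9,6,6), ((6,3,8,4,3,3),(3,3,4,4,3,3),10,5,4,4),
   ((6,3,8,4,3,3),(3,4,6,8,4,3),9,9,6,4), ((6,3,8,4,3,3),(3,4,6,8,4,3),10,10,6,4),
   ((6,3,8,4,3,3),(3,4,6,8,4,3),11,11,6,4), ((6,3,8,4,3,3),(3,6,4,8,3,3),9,9,4,4),
   ((6,3,8,4,3,3),(3,6,4,8,3,3),10,10,4,4), ((6,3,8,4,3,3),(3,6,4,8,3,3),11,11,4,4),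
   ((6,3,12,6,3,3),(3,3,4,4,3,3),21,7,4,6), ((6,3,16,8,3,3),(3,3,4,4,3,3),20,5,4,4),
   ((6,3,16,8,3,6),(3,3,4,4,3,3),20,5,4,4), ((6,6,8,8,3,3),(6,3,8,4,3,3),10,5,4,4),
   ((6,6,8,8,3,3),(6,3,8,4,3,3),10,5,8,4), ((6,6,8,8,3,6),(6,3,8,4,3,3),10,5,4,4),
   ((6,6,8,8,3,6),(6,3,8,4,3,3),10,5,8,4), ((6,6,8,8,6,3),(6,3,8,4,3,3),10,5,8,4),
   ((6,6,8,8,6,6),(6,3,8,4,3,3),10,5,8,4), ((12,3,16,4,3,3),(3,3,4,4,3,3),20,5,4,4)]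

def allB (n : ℕ) (b : ℕ → Bool) : Bool := (List.range n).all b
def impB (A : Prop) [Decidable A] (b : Bool) : Bool := cond (decide A) b true
theorem allB_spec {n : ℕ} {b : ℕ → Bool} : allB n b = true ↔ ∀ k, k < n → b k = true := by
  simp [allB, List.all_eq_true]
theorem impB_spec {A : Prop} [Decidable A] {b : Bool} : impB A b = true ↔ (A → b = true) := by
  by_cases h : A <;> simp [impB, h]

def L3chk : Bool := allB 18 fun p => allB 18 fun q => allB 19 fun x => impB (3 ≤ p ∧ 3 ≤ q ∧ p + 1 ≤ x ∧ x * q ≤ 54 ∧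
    (p = 3 → q = 3 → x = 4) ∧ (p = 4 → q = 4 → 7 ≤ x) ∧
    (x * q / p) * p = x * q ∧ q + 1 ≤ x * q / p) <|
    allB (q+1) fun d => impB (3 ≤ d ∧ d ∣ q ∧ d + 1 ≤ x ∧ 2 ∣ x * d) <|
    allB (p+1) fun e => impB (3 ≤ e ∧ e ∣ p ∧ e + 1 ≤ x * q / p ∧ 2 ∣ (x * q / p) * e) <|
    decide ((p, q, x, x * q / p, d, e) ∈ L3)

def L4chk : Bool := L3.all fun s => L3.all fun w => impB (s.2.1 = w.1) <| allB 23 fun v => impB (5 ≤ v ∧ s.2.2.1 + 1 ≤ v ∧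
    v * (w.2.2.1 * w.2.1) ≤ 274 ∧
    (v * (w.2.2.1 * w.2.1) / (s.2.2.1 * s.2.1)) * (s.2.2.1 * s.2.1) = v * (w.2.2.1 * w.2.1)) <|
    allB 23 fun f => impB (f = v * (w.2.2.1 * w.2.1) / (s.2.2.1 * s.2.1) ∧
    5 ≤ f ∧ w.2.2.2.1 + 1 ≤ f ∧
    (s.1 = 3 → w.2.2.1 = 4 → v = 5) ∧
    (w.2.1 = 3 → s.2.2.2.1 = 4 → f = 5) ∧
    ¬ (s.1 = 3 ∧ s.2.1 = 3 ∧ w.2.1 = 4 ∧ w.2.2.1 = 6 ∧ v = 7) ∧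
    ¬ (s.1 = 4 ∧ s.2.1 = 3 ∧ w.2.1 = 3 ∧ s.2.2.2.1 = 6 ∧ f = 7) ∧
    ¬ (s.1 = 3 ∧ s.2.1 = 3 ∧ w.2.1 = 9 ∧ w.2.2.1 = 4) ∧
    ¬ (s.1 = 9 ∧ s.2.1 = 3 ∧ w.2.1 = 3 ∧ s.2.2.2.1 = 4)) <|
    allB (w.2.2.1 + 1) fun D => impB (s.2.2.2.2.1 < D ∧ D ∣ w.2.2.1 ∧ D + 1 ≤ v ∧ 2 ∣ v * D) <|
    allB (s.2.2.2.1 + 1) fun E => impB (w.2.2.2.2.2 < E ∧ E ∣ s.2.2.2.1 ∧ E + 1 ≤ f ∧ 2 ∣ f * E) <|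
    decide ((s, w, v, f, D, E) ∈ L4)

theorem L3_check : ∀ p, p < 18 → ∀ q, q < 18 → ∀ x, x < 19 → (3 ≤ p ∧ 3 ≤ q ∧ p + 1 ≤ x ∧ x * q ≤ 54 ∧
    (p = 3 → q = 3 → x = 4) ∧ (p = 4 → q = 4 → 7 ≤ x) ∧
    (x * q / p) * p = x * q ∧ q + 1 ≤ x * q / p) →
    ∀ d, d < q + 1 → (3 ≤ d ∧ d ∣ q ∧ d + 1 ≤ x ∧ 2 ∣ x * d) →
    ∀ e, e < p + 1 → (3 ≤ e ∧ e ∣ p ∧ e + 1 ≤ x * q / p ∧ 2 ∣ (x * q / p) * e) →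
    (p, q, x, x * q / p, d, e) ∈ L3 := by
  have h : L3chk = true := by decide +kernel
  simpa only [L3chk, allB_spec, impB_spec, decide_eq_true_iff, List.all_eq_true] using h

theorem L3_bd : ∀ s ∈ L3, s.1 ≥ 3 ∧ 12 ≤ s.2.2.1 * s.2.1 := by decide +kernel

theorem L4_check : ∀ s ∈ L3, ∀ w ∈ L3, s.2.1 = w.1 → ∀ v, v < 23 → (5 ≤ v ∧ s.2.2.1 + 1 ≤ v ∧
    v * (w.2.2.1 * w.2.1) ≤ 274 ∧
    (v * (w.2.2.1 * w.2.1) / (s.2.2.1 * s.2.1)) * (s.2.2.1 * s.2.1) = v * (w.2.2.1 * w.2.1)) →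
    ∀ f, f < 23 → (f = v * (w.2.2.1 * w.2.1) / (s.2.2.1 * s.2.1) ∧
    5 ≤ f ∧ w.2.2.2.1 + 1 ≤ f ∧
    (s.1 = 3 → w.2.2.1 = 4 → v = 5) ∧
    (w.2.1 = 3 → s.2.2.2.1 = 4 → f = 5) ∧
    ¬ (s.1 = 3 ∧ s.2.1 = 3 ∧ w.2.1 = 4 ∧ w.2.2.1 = 6 ∧ v = 7) ∧
    ¬ (s.1 = 4 ∧ s.2.1 = 3 ∧ w.2.1 = 3 ∧ s.2.2.2.1 = 6 ∧ f = 7) ∧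
    ¬ (s.1 = 3 ∧ s.2.1 = 3 ∧ w.2.1 = 9 ∧ w.2.2.1 = 4) ∧
    ¬ (s.1 = 9 ∧ s.2.1 = 3 ∧ w.2.1 = 3 ∧ s.2.2.2.1 = 4)) →
    ∀ D, D < w.2.2.1 + 1 → (s.2.2.2.2.1 < D ∧ D ∣ w.2.2.1 ∧ D + 1 ≤ v ∧ 2 ∣ v * D) →
    ∀ E, E < s.2.2.2.1 + 1 → (w.2.2.2.2.2 < E ∧ E ∣ s.2.2.2.1 ∧ E + 1 ≤ f ∧ 2 ∣ f * E) →
    (s, w, v, f, D, E) ∈ L4 := by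
  have h : L4chk = true := by decide +kernel
  simpa only [L4chk, allB_spec, impB_spec, decide_eq_true_iff, List.all_eq_true] using h

abbrev T3 (s : T6) : Prop := (s.1 = 3 ∧ s.2.1 = 3 ∧ s.2.2.1 = 4) ∨ (s.1 = 3 ∧ s.2.1 = 6 ∧ s.2.2.1 = 4) ∨
  (s.1 = 6 ∧ s.2.1 = 3 ∧ s.2.2.1 = 8)

/-- half of the group order in rank four -/
abbrev M4 (k : T6 × T6 × ℕ × ℕ × ℕ × ℕ) : ℕ := k.2.2.1 * (k.2.1.2.2.1 * k.2.1.2.1)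

theorem L4_bd : ∀ k ∈ L4, 60 ≤ M4 k := by decide +kernel

def L5chk : Bool := L4.all fun k => L4.all fun w => impB (k.2.1 = w.1) <| allB 32 fun v => impB (7 ≤ v ∧ k.2.2.1 + 1 ≤ v ∧
    v * M4 w < 1920 ∧ (v * M4 w / M4 k) * M4 k = v * M4 w ∧ 2 * k.1.1 * w.2.1.2.1 ∣ v * M4 w) <|
    allB 32 fun f => impB (f = v * M4 w / M4 k ∧ 7 ≤ f ∧ w.2.2.2.1 + 1 ≤ f) <|
    allB (w.2.2.1 + 1) fun D => impB (k.2.2.2.2.1 < D ∧ D ∣ w.2.2.1 ∧ D + 1 ≤ v ∧ 2 ∣ v * D) <|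
    allB (k.2.2.2.1 + 1) fun E => impB (w.2.2.2.2.2 < E ∧ E ∣ k.2.2.2.1 ∧ E + 1 ≤ f ∧ 2 ∣ f * E) <|
    decide (T3 k.1 ∧ T3 k.2.1 ∧ T3 w.2.1)

theorem L5_check : ∀ k ∈ L4, ∀ w ∈ L4, k.2.1 = w.1 → ∀ v, v < 32 → (7 ≤ v ∧ k.2.2.1 + 1 ≤ v ∧
    v * M4 w < 1920 ∧ (v * M4 w / M4 k) * M4 k = v * M4 w ∧ 2 * k.1.1 * w.2.1.2.1 ∣ v * M4 w) →
    ∀ f, f < 32 → (f = v * M4 w / M4 k ∧ 7 ≤ f ∧ w.2.2.2.1 + 1 ≤ f) →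
    ∀ D, D < w.2.2.1 + 1 → (k.2.2.2.2.1 < D ∧ D ∣ w.2.2.1 ∧ D + 1 ≤ v ∧ 2 ∣ v * D) →
    ∀ E, E < k.2.2.2.1 + 1 → (w.2.2.2.2.2 < E ∧ E ∣ k.2.2.2.1 ∧ E + 1 ≤ f ∧ 2 ∣ f * E) →
    T3 k.1 ∧ T3 k.2.1 ∧ T3 w.2.1 := by
  have h : L5chk = true := by decide +kernel
  simpa only [L5chk, allB_spec, impB_spec, decide_eq_true_iff, List.all_eq_true] using h

theorem R3.mem {p q x y d e : ℕ} (h : R3 p q x y d e) : (p, q, x, y, d, e) ∈ L3 := by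
  obtain ⟨h1, h2, h3, h4, h5, h6, h7, h8, h9, h10, h11, h12, h13, h14, h15, h16⟩ := h
  have hx : x < 19 := by nlinarith
  have hy : y < 19 := by nlinarith
  have e1 : x * q / p = y := by rw [h5]; exact Nat.mul_div_cancel _ (by omega)
  have := L3_check p (by omega) q (by omega) x hx ⟨h1, h2, h3, h6, h15, h16, by rw [e1, h5], by rw [e1]; exact h4⟩
    d (Nat.lt_succ_of_le (Nat.le_of_dvd (by omega) h7)) ⟨h8, h7, h9, h10⟩
    e (Nat.lt_succ_of_le (Nat.le_of_dvd (by omega) h11)) ⟨h12, h11, by rw [e1]; exact h13, by rw [e1]; exact h14⟩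
  rwa [e1] at this

theorem R4.mem {s w : T6} {v f D E : ℕ} (h : R4 s w v f D E) (hs : s ∈ L3) (hw : w ∈ L3) :
    (s, w, v, f, D, E) ∈ L4 := by
  have bs := L3_bd s hs
  have bw := L3_bd w hw
  have hv : v < 23 := by
    have := h.hb; by_contra hc
    have := Nat.mul_le_mul (show 23 ≤ v by omega) bw.2; omega
  have hf : f < 23 := by
    have := h.hb; rw [h.hN] at this; by_contra hc
    have := Nat.mul_le_mul (show 23 ≤ f by omega) bs.2; omega
  have e1 : v * (w.2.2.1 * w.2.1) / (s.2.2.1 * s.2.1) = f := by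
    rw [h.hN]; exact Nat.mul_div_cancel _ (by omega)
  have hx : 0 < w.2.2.1 := Nat.pos_of_ne_zero fun hh => by rw [hh] at bw; omega
  have hy : 0 < s.2.2.2.1 := by
    have := h.hE; by_contra hc
    have : ∀ s ∈ L3, 0 < s.2.2.2.1 := by decide +kernel
    exact hc (this s hs)
  exact L4_check s hs w hw h.hs v hv ⟨h.hv5, h.hv, h.hb, by rw [e1, h.hN]⟩
    f hf ⟨e1.symm, h.hf5, h.hf, h.hA, h.hA', h.hz, h.hz', h.hn, h.hn'⟩
    D (Nat.lt_succ_of_le (Nat.le_of_dvd hx h.hD)) ⟨h.hDd, h.hD, h.hDv, h.hD2⟩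
    E (Nat.lt_succ_of_le (Nat.le_of_dvd hy h.hE)) ⟨h.hEe, h.hE, h.hEf, h.hE2⟩

theorem R5_concl {s1 s2 s3 : T6} {vk fk Dk Ek vw fw Dw Ew v f D E : ℕ}
    (hk : (s1, s2, vk, fk, Dk, Ek) ∈ L4) (hw : (s2, s3, vw, fw, Dw, Ew) ∈ L4)
    (h7 : 7 ≤ v) (hv : vk + 1 ≤ v) (hf7 : 7 ≤ f) (hf : fw + 1 ≤ f)
    (hN : v * (vw * (s3.2.2.1 * s3.2.1)) = f * (vk * (s2.2.2.1 * s2.2.1)))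
    (hb : v * (vw * (s3.2.2.1 * s3.2.1)) < 1920)
    (h4 : 2 * s1.1 * s3.2.1 ∣ v * (vw * (s3.2.2.1 * s3.2.1)))
    (hD : D ∣ vw) (hDd : Dk < D) (hDv : D + 1 ≤ v) (hD2 : 2 ∣ v * D)
    (hE : E ∣ fk) (hEe : Ew < E) (hEf : E + 1 ≤ f) (hE2 : 2 ∣ f * E) : T3 s1 ∧ T3 s2 ∧ T3 s3 := by
  have bk := L4_bd _ hk
  have bw := L4_bd _ hw
  have pos : ∀ k ∈ L4, 0 < k.2.2.1 ∧ 0 < k.2.2.2.1 := by decide +kernel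
  have pk := pos _ hk
  have pw := pos _ hw
  dsimp only [M4] at bk bw pk pw
  have hv' : v < 32 := by
    by_contra hc
    have := Nat.mul_le_mul (show 32 ≤ v by omega) bw; omega
  have hf' : f < 32 := by
    by_contra hc
    have := Nat.mul_le_mul (show 32 ≤ f by omega) bk; omega
  have e1 : v * (vw * (s3.2.2.1 * s3.2.1)) / (vk * (s2.2.2.1 * s2.2.1)) = f := by
    rw [hN]; exact Nat.mul_div_cancel _ (by omega)
  exact L5_check _ hk _ hw rfl v hv' ⟨h7, hv, hb, by dsimp only [M4]; rw [e1, hN], h4⟩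
    f hf' ⟨e1.symm, hf7, hf⟩
    D (Nat.lt_succ_of_le (Nat.le_of_dvd pw.1 hD)) ⟨hDd, hD, hDv, hD2⟩
    E (Nat.lt_succ_of_le (Nat.le_of_dvd pk.2 hE)) ⟨hEe, hE, hEf, hE2⟩
end SCG

namespace SCG
variable {G : Type*} [Group G]
namespace SC
variable {ρ : ℕ → G} {n : ℕ}

theorem lemA_int [Finite G] (h : SC ρ n) {a m : ℕ} (hm : 2 ≤ m) (ha : a + m ≤ n)
    (hp : (ρ a * ρ (a+1))^3 = 1) (hv : v ρ (a+1) (a+m) = m) : v ρ a (a+m) = m + 1 := by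
  have hr := h.restrict (a := a) (b := a+m) (m := m) rfl (by omega) ha
  have := hr.lemA hm ?_ (by rw [v_re _ _ _ le_rfl]; exact hv)
  · rw [v_re _ _ _ le_rfl] at this; exact this
  · apply Subtype.ext
    push_cast
    rw [re_coe ρ (by omega), re_coe ρ (by omega)]
    exact h.braid (i := a) (by omega) hp

theorem pow_p {i : ℕ} (hp : p ρ i = 3) : (ρ i * ρ (i+1))^3 = 1 := by
  rw [← hp]; exact pow_orderOf_eq_one _

theorem lemA_int' [Finite G] (h : SC ρ n) {a m : ℕ} (hm : 2 ≤ m) (ha : a + m ≤ n)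
    (hp : p ρ (a+m-2) = 3) (hv : f ρ a (a+m-1) = m) : f ρ a (a+m) = m + 1 := by
  have hd := h.dual (by omega)
  have := hd.lemA_int (a := n - (a+m)) hm (by omega) (pow_p ?_) ?_
  · rw [v_du _ (by omega), show n - (n - (a+m) + m) = a by omega, show n - (n - (a+m)) = a+m by omega] at this
    exact this
  · rw [h.p_du (by omega), show n - 2 - (n - (a+m)) = a + m - 2 by omega]; exact hp
  · rw [v_du _ (by omega), show n - (n - (a+m) + m) = a by omega, show n - (n - (a+m) + 1) = a+m-1 by omega]
    exact hv

theorem e3_int [Finite G] (h : SC ρ n) {a : ℕ} (ha : a + 3 ≤ n)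
    (h0 : p ρ a = 4) (h1 : p ρ (a+1) = 4) : 7 ≤ v ρ a (a+3) := by
  have hr := h.restrict (a := a) (b := a+3) (m := 3) rfl (by omega) ha
  have := hr.fact_e3 (by rw [p_re _ (by omega)]; exact h0) (by rw [p_re _ (by omega)]; exact h1)
  rwa [v_re _ _ _ le_rfl] at this

theorem z4_int [Finite G] (h : SC ρ n) {a : ℕ} (ha : a + 4 ≤ n) (h0 : p ρ a = 3) (h2 : p ρ (a+2) = 4)
    (hv1 : v ρ (a+1) (a+4) = 6) (hv : v ρ a (a+4) = 7) : False := by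
  have hr := h.restrict (a := a) (b := a+4) (m := 4) rfl (by omega) ha
  exact hr.fact_z4 (by rw [p_re _ (by omega)]; exact h0) (by rw [p_re _ (by omega)]; exact h2)
    (by rw [v_re _ _ _ (by omega)]; exact hv1) (by rw [v_re _ _ _ (by omega)]; exact hv)

theorem z4_int' [Finite G] (h : SC ρ n) {a : ℕ} (ha : a + 4 ≤ n) (h0 : p ρ (a+2) = 3) (h2 : p ρ a = 4)
    (hv1 : f ρ a (a+3) = 6) (hv : f ρ a (a+4) = 7) : False := by
  have hd := h.dual (by omega)
  refine hd.z4_int (a := n-(a+4)) (by omega) ?_ ?_ ?_ ?_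
  · rw [h.p_du (by omega), show n - 2 - (n - (a+4)) = a + 2 by omega]; exact h0
  · rw [h.p_du (by omega), show n - 2 - (n - (a+4) + 2) = a by omega]; exact h2
  · rw [v_du _ (by omega), show n - (n - (a+4) + 4) = a by omega, show n - (n - (a+4) + 1) = a+3 by omega]; exact hv1
  · rw [v_du _ (by omega), show n - (n - (a+4) + 4) = a by omega, show n - (n - (a+4)) = a+4 by omega]; exact hv

theorem fact_n' [Finite G] (h : SC ρ n) {a : ℕ} (ha : a + 4 ≤ n) (h0 : p ρ (a+2) = 3)
    (h1 : p ρ (a+1) = 3) (h2 : p ρ a = 9)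
    (hv : f ρ a (a+3) = 4) (hN : N ρ a (a+3) = 72) : False := by
  have hd := h.dual (by omega)
  refine hd.fact_n (a := n-(a+4)) (by omega) (by omega) ?_ ?_ ?_ ?_ ?_
  · rw [h.p_du (by omega), show n - 2 - (n - (a+4)) = a + 2 by omega]; exact h0
  · rw [h.p_du (by omega), show n - 2 - (n - (a+4) + 1) = a+1 by omega]; exact h1
  · rw [h.p_du (by omega), show n - 2 - (n - (a+4) + 2) = a by omega]; exact h2
  · rw [v_du _ (by omega), show n - (n - (a+4) + 4) = a by omega, show n - (n - (a+4) + 1) = a+3 by omega]; exact hv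
  · rw [N_du _ (by omega), show n - (n - (a+4) + 4) = a by omega, show n - (n - (a+4) + 1) = a+3 by omega]; exact hN

noncomputable def S (ρ : ℕ → G) (a : ℕ) : T6 :=
  (p ρ a, p ρ (a+1), v ρ a (a+3), f ρ a (a+3), dg ρ a (a+3), eg ρ a (a+3))

theorem N_three [Finite G] (h : SC ρ n) {a : ℕ} (ha : a + 3 ≤ n) :
    N ρ a (a+3) = 2 * (v ρ a (a+3) * p ρ (a+1)) := by
  rw [← v_mul, show a + 3 = a + 1 + 2 by omega, h.N_two (i := a+1) (by omega)]; ring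
theorem N_three' [Finite G] (h : SC ρ n) {a : ℕ} (ha : a + 3 ≤ n) :
    N ρ a (a+3) = 2 * (f ρ a (a+3) * p ρ a) := by
  rw [← f_mul, show a + 3 - 1 = a + 2 by omega, h.N_two (by omega)]; ring

theorem r3 [Finite G] (h : SC ρ n) {a : ℕ} (ha : a + 3 ≤ n) (hN : N ρ a (a+3) ≤ 109) :
    S ρ a ∈ L3 := by
  have e1 := h.N_three ha
  have e2 := h.N_three' ha
  have v2 := h.v_two (i := a) (by omega)
  have v2' := h.v_two (i := a+1) (by omega)
  have f2 := h.f_two (i := a) (by omega)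
  have f2' := h.f_two (i := a+1) (by omega)
  apply R3.mem
  refine ⟨h.p_ge (by omega), h.p_ge (by omega), ?_, ?_, by omega, by omega, ?_, h.dg_ge 3 (by omega) ha,
    h.dg_lt (by omega) ha, h.dg_even (by omega) ha, ?_, h.eg_ge 3 (by omega) ha,
    h.eg_lt (by omega) ha, h.eg_even (by omega) ha, ?_, h.e3_int ha⟩
  · have := h.v_mono (i := a) (j := a+3) (by omega) ha
    rw [show a+3-1 = a+2 by omega, v2] at this; exact this
  · have := h.f_mono (i := a) (j := a+3) (by omega) ha
    rw [show a+3 = a+1+2 by omega, f2'] at this; exact this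
  · rw [← v2']; exact h.dg_dvd (by omega) ha
  · rw [← f2]; exact h.eg_dvd (by omega) ha
  · intro h1 h2
    exact h.lemA_int (m := 3) (by omega) ha (pow_p h1) (v2'.trans h2)

theorem r4 [Finite G] (h : SC ρ n) {a : ℕ} (ha : a + 4 ≤ n) (hN : N ρ a (a+4) ≤ 548) :
    (S ρ a, S ρ (a+1), v ρ a (a+4), f ρ a (a+4), dg ρ a (a+4), eg ρ a (a+4)) ∈ L4 := by
  have e1 := v_mul ρ a (a+4)
  have e2 := f_mul ρ a (a+4)
  have n1 := h.N_three (a := a+1) (by omega)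
  have n2 := h.N_three (a := a) (by omega)
  have n2' := h.N_three' (a := a) (by omega)
  rw [show a + 1 + 3 = a + 4 by omega] at n1
  rw [show a + 4 - 1 = a + 3 by omega] at e2
  have v5 : 5 ≤ v ρ a (a+4) := h.v_ge 4 ha
  have f5 : 5 ≤ f ρ a (a+4) := h.f_ge 4 ha
  have b1 : N ρ (a+1) (a+4) ≤ 109 := by
    have := Nat.mul_le_mul_right (N ρ (a+1) (a+4)) v5; omega
  have b2 : N ρ a (a+3) ≤ 109 := by
    have := Nat.mul_le_mul_right (N ρ a (a+3)) f5; omega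
  have hvm := h.v_mono (i := a) (j := a+4) (by omega) ha
  have hfm := h.f_mono (i := a) (j := a+4) (by omega) ha
  have hdm := h.dg_mono (i := a) (j := a+4) (by omega) ha
  have hem := h.eg_mono (i := a) (j := a+4) (by omega) ha
  rw [show a + 4 - 1 = a + 3 by omega] at hvm hdm
  refine R4.mem ⟨rfl, v5, hvm, f5, hfm, ?_, ?_, ?_, ?_, ?_, ?_, ?_, ?_, h.dg_dvd (by omega) ha, hdm,
    h.dg_lt (by omega) ha, h.dg_even (by omega) ha, h.eg_dvd (by omega) ha, hem, h.eg_lt (by omega) ha,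
    h.eg_even (by omega) ha⟩ (h.r3 (by omega) b2) (h.r3 (by omega) b1) <;>
    simp only [S, show a + 1 + 3 = a + 4 by omega, show a + 1 + 1 = a + 2 by omega] at n1 ⊢
  · have : v ρ a (a + 4) * N ρ (a+1) (a+4) = f ρ a (a + 4) * N ρ a (a+3) := by rw [e1, e2]
    rw [n1, n2] at this
    linarith
  · have : v ρ a (a + 4) * N ρ (a+1) (a+4) ≤ 548 := by rw [e1]; exact hN
    rw [n1] at this
    linarith
  · intro h1 h2
    exact h.lemA_int (m := 4) (by omega) ha (pow_p h1) h2
  · intro h1 h2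
    exact h.lemA_int' (m := 4) (by omega) ha h1 h2
  · rintro ⟨h1, h2, h3, h4, h5⟩
    exact h.z4_int ha h1 h3 h4 h5
  · rintro ⟨h1, h2, h3, h4, h5⟩
    exact h.z4_int' ha h3 h1 h4 h5
  · rintro ⟨h1, h2, h3, h4⟩
    exact h.fact_n (by omega) ha h1 h2 h3 h4 (by rw [n1, h4, h3])
  · rintro ⟨h1, h2, h3, h4⟩
    exact h.fact_n' ha h3 h2 h1 h4 (by rw [n2', h4, h1])

theorem four_dvd [Finite G] (h : SC ρ n) {a : ℕ} (ha : a + 5 ≤ n) :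
    (2 * p ρ a) * (2 * p ρ (a+3)) ∣ N ρ a (a+5) := by
  rw [← h.N_two (by omega), ← h.N_two (by omega)]
  have cm : ∀ x ∈ H ρ a (a+2), ∀ y ∈ H ρ (a+3) (a+5), Commute x y := by
    intro x hx y hy
    refine H_comm (ρ := ρ) (i := a+3) (j := a+5) (g := x) (fun k h1 h2 => ?_) hy
    exact (H_comm (ρ := ρ) (i := a) (j := a+2) (g := ρ k)
      (fun l h3 h4 => h.comm' (by omega) (by omega) (by omega)) hx).symm
  let ψ := MonoidHom.noncommCoprod (H ρ a (a+2)).subtype (H ρ (a+3) (a+5)).subtype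
    (fun x y => cm x x.2 y y.2)
  have hinj : Function.Injective ψ := by
    refine (MonoidHom.noncommCoprod_injective _ _ _).2 ?_
    refine ⟨Subgroup.subtype_injective _, Subgroup.subtype_injective _, ?_⟩
    rw [Subgroup.range_subtype, Subgroup.range_subtype, disjoint_iff, h.inter _ _ _ _ (by omega) (by omega)]
    exact H_bot ρ (by omega)
  have hr : ψ.range ≤ H ρ a (a+5) := by
    rintro _ ⟨⟨x, y⟩, rfl⟩
    exact mul_mem (H_mono ρ le_rfl (by omega) x.2) (H_mono ρ (by omega) le_rfl y.2)
  have := Subgroup.card_dvd_of_le hr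
  rw [← Nat.card_congr (MonoidHom.ofInjective hinj).toEquiv, Nat.card_prod] at this
  exact this

theorem r5 [Finite G] (h : SC ρ n) {a : ℕ} (ha : a + 5 ≤ n) (hN : N ρ a (a+5) < 3840)
    (hv : 7 ≤ v ρ a (a+5)) (hf : 7 ≤ f ρ a (a+5)) :
    T3 (S ρ a) ∧ T3 (S ρ (a+1)) ∧ T3 (S ρ (a+2)) := by
  have e1 := v_mul ρ a (a+5)
  have e2 := f_mul ρ a (a+5)
  have e3 := v_mul ρ (a+1) (a+5)
  have e4 := v_mul ρ a (a+4)
  rw [show a + 5 - 1 = a + 4 by omega] at e2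
  have n1 := h.N_three (a := a+2) (by omega)
  have n2 := h.N_three (a := a+1) (by omega)
  have b1 : N ρ (a+1) (a+5) ≤ 548 := by
    have := Nat.mul_le_mul_right (N ρ (a+1) (a+5)) hv; omega
  have b2 : N ρ a (a+4) ≤ 548 := by
    have := Nat.mul_le_mul_right (N ρ a (a+4)) hf; omega
  have hvm := h.v_mono (i := a) (j := a+5) (by omega) ha
  have hfm := h.f_mono (i := a) (j := a+5) (by omega) ha
  have hdm := h.dg_mono (i := a) (j := a+5) (by omega) ha
  have hem := h.eg_mono (i := a) (j := a+5) (by omega) ha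
  rw [show a + 5 - 1 = a + 4 by omega] at hvm hdm
  have k1 := h.r4 (a := a) (by omega) b2
  have k2 := h.r4 (a := a+1) (by omega) b1
  have h4 := h.four_dvd ha
  have hD := h.dg_dvd (i := a) (by omega) ha
  have hE := h.eg_dvd (i := a) (by omega) ha
  rw [show a + 5 - 1 = a + 4 by omega] at hE
  simp only [show a + 1 + 1 = a + 2 by omega, show a + 2 + 1 = a + 3 by omega, show a + 1 + 4 = a + 5 by omega, show a + 2 + 3 = a + 5 by omega,
    show a + 1 + 3 = a + 4 by omega] at *
  have E1 : N ρ a (a+5) = 2 * (v ρ a (a+5) * (v ρ (a+1) (a+5) * (v ρ (a+2) (a+5) * p ρ (a+3)))) := by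
    rw [← e1, ← e3, n1]; ring
  have E2 : N ρ a (a+5) = 2 * (f ρ a (a+5) * (v ρ a (a+4) * (v ρ (a+1) (a+4) * p ρ (a+2)))) := by
    rw [← e2, ← e4, n2]; ring
  refine R5_concl (v := v ρ a (a+5)) (f := f ρ a (a+5)) (D := dg ρ a (a+5)) (E := eg ρ a (a+5)) k1 k2 hv hvm hf hfm ?_ ?_ ?_
    hD hdm (h.dg_lt (by omega) ha) (h.dg_even (by omega) ha)
    hE hem (h.eg_lt (by omega) ha) (h.eg_even (by omega) ha) <;>
  simp only [S, show a + 2 + 1 = a + 3 by omega, show a + 1 + 1 = a + 2 by omega, show a + 2 + 3 = a + 5 by omega, show a + 1 + 3 = a + 4 by omega]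
  · omega
  · omega
  · rw [E1, show 2 * p ρ a * (2 * p ρ (a+3)) = 2 * (2 * p ρ a * p ρ (a+3)) by ring] at h4
    exact Nat.dvd_of_mul_dvd_mul_left (by omega) h4
end SC
end SCG

namespace SCG
variable {G : Type*} [Group G]
namespace SC
variable {ρ : ℕ → G} {n : ℕ}

theorem z_du (h : SC ρ n) {i : ℕ} (hi : i + 1 < n) :
    (du ρ n i * du ρ n (i+1))^3 = ((ρ (n-2-i) * ρ (n-2-i+1))^3)⁻¹ := by
  rw [← inv_pow, mul_inv_rev, h.inv' (by omega), h.inv' (by omega), du, du,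
    show n - 1 - (i+1) = n-2-i by omega, show n - 1 - i = n - 2 - i + 1 by omega]

theorem t36' [Finite G] (h : SC ρ n) {a : ℕ} (ha : a + 3 ≤ n)
    (hv : f ρ a (a+3) = 4) (hN : N ρ a (a+3) = 48) (hp : p ρ a = 6) :
    Commute (ρ (a+2)) ((ρ a * ρ (a+1))^3) := by
  have hd := h.dual (by omega)
  have := hd.fact_t36 (a := n - (a+3)) (by omega) ?_ ?_ ?_
  · rw [h.z_du (by omega), show n - 2 - (n - (a+3) + 1) = a by omega, du,
      show n - 1 - (n - (a+3)) = a + 2 by omega] at this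
    have c : Commute (ρ (a+2)) ((ρ a * ρ (a+1))^3)⁻¹ := this
    simpa using c
  · rw [v_du _ (by omega), show n - (n - (a+3) + 3) = a by omega, show n - (n - (a+3)) = a+3 by omega]; exact hv
  · rw [N_du _ (by omega), show n - (n - (a+3) + 3) = a by omega, show n - (n - (a+3)) = a+3 by omega]; exact hN
  · rw [h.p_du (by omega), show n - 2 - (n - (a+3) + 1) = a by omega]; exact hp

theorem z_sq_of_six {i : ℕ} (hp : p ρ i = 6) : ((ρ i * ρ (i+1))^3)^2 = 1 := by
  rw [← pow_mul, show 3 * 2 = 6 by rfl, ← hp]; exact pow_orderOf_eq_one _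

theorem t3good [Finite G] (h : SC ρ n) {a : ℕ} (ha : a + 3 ≤ n) (ht : T3 (S ρ a)) :
    (((ρ a * ρ (a+1))^3)^2 = 1 ∧ Commute (ρ (a+2)) ((ρ a * ρ (a+1))^3)) ∧
    (((ρ (a+1) * ρ (a+1+1))^3)^2 = 1 ∧ Commute (ρ a) ((ρ (a+1) * ρ (a+1+1))^3)) := by
  have n1 := h.N_three ha
  have n2 := h.N_three' ha
  simp only [T3, S] at ht
  rcases ht with ⟨h1, h2, h3⟩ | ⟨h1, h2, h3⟩ | ⟨h1, h2, h3⟩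
  · rw [pow_p h1, pow_p h2]; simp
  · rw [pow_p h1]
    refine ⟨by simp, z_sq_of_six h2, ?_⟩
    exact h.fact_t36 ha h3 (by rw [n1, h3, h2]) h2
  · rw [pow_p h2]
    refine ⟨⟨z_sq_of_six h1, ?_⟩, by simp⟩
    rw [h1] at n2
    rw [h2, h3] at n1
    exact h.t36' ha (by omega) n1 h1

/-- the cube is an involution commuting with the generators in the interval -/
def Gd (ρ : ℕ → G) (a b i : ℕ) : Prop :=
  ((ρ i * ρ (i+1))^3)^2 = 1 ∧ ∀ k, a ≤ k → k < b → Commute (ρ k) ((ρ i * ρ (i+1))^3)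

theorem gd_of (h : SC ρ n) {a b i : ℕ} (hb : b ≤ n) (hi : i + 1 < n)
    (h2 : ((ρ i * ρ (i+1))^3)^2 = 1)
    (hl : ∀ k, a ≤ k → k + 1 = i → Commute (ρ k) ((ρ i * ρ (i+1))^3))
    (hr : i + 2 < b → Commute (ρ (i+2)) ((ρ i * ρ (i+1))^3)) : Gd ρ a b i := by
  refine ⟨h2, fun k h3 h4 => ?_⟩
  have far : (k + 2 ≤ i ∨ i + 3 ≤ k) → Commute (ρ k) ((ρ i * ρ (i+1))^3) := fun hk =>
    Commute.pow_right (Commute.mul_right (h.comm' (by omega) (by omega) (by omega))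
      (h.comm' (by omega) (by omega) (by omega))) 3
  obtain ⟨c1, c2⟩ := h.conj_z hi
  have hinv : ((ρ i * ρ (i+1))^3)⁻¹ = (ρ i * ρ (i+1))^3 :=
    inv_eq_of_mul_eq_one_left (by rw [← pow_two]; exact h2)
  rw [hinv] at c1 c2
  have key : ∀ {x z : G}, x * x = 1 → x * z * x = z → Commute x z := by
    intro x z hx hz
    have : x * z * x * x = z * x := by rw [hz]
    rw [mul_assoc (x*z), hx, mul_one] at this
    exact this
  rcases lt_trichotomy k i with hk | hk | hk
  · by_cases hk' : k + 1 = i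
    · exact hl k h3 hk'
    · exact far (by omega)
  · subst hk; exact key (h.inv _ (by omega)) c1
  · by_cases hk1 : k = i + 1
    · subst hk1; exact key (h.inv _ (by omega)) c2
    · by_cases hk' : k = i+2
      · subst hk'; exact hr h4
      · exact far (by omega)

theorem e5_int [Finite G] (h : SC ρ n) {a : ℕ} (ha : a + 5 ≤ n) (hv : v ρ a (a+5) = 6)
    (hN : N ρ a (a+5) < 3840) : ∀ i, a ≤ i → i + 1 < a + 5 → Gd ρ a (a+5) i := by
  intro i h1 h2
  have hr := h.restrict (a := a) (b := a+5) (m := 5) rfl (by omega) ha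
  obtain ⟨j, rfl⟩ := Nat.exists_eq_add_of_le h1
  obtain ⟨g1, g2⟩ := hr.lemE5 (by rw [v_re _ _ _ (by omega)]; exact hv)
    (by rw [N_re _ _ _ (by omega)]; exact hN) j (by omega)
  constructor
  · have := congrArg (Subtype.val) g1
    push_cast at this
    rw [re_coe _ (by omega), re_coe _ (by omega)] at this
    exact this
  · intro k hk1 hk2
    obtain ⟨l, rfl⟩ := Nat.exists_eq_add_of_le hk1
    have := congrArg (Subtype.val) (g2 l (by omega))
    push_cast at this
    rw [re_coe _ (by omega), re_coe _ (by omega), re_coe _ (by omega)] at this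
    exact this

theorem e5_int' [Finite G] (h : SC ρ n) {a : ℕ} (ha : a + 5 ≤ n) (hv : f ρ a (a+5) = 6)
    (hN : N ρ a (a+5) < 3840) : ∀ i, a ≤ i → i + 1 < a + 5 → Gd ρ a (a+5) i := by
  intro i h1 h2
  have hd := h.dual (by omega)
  have gg := hd.e5_int (a := n - (a+5)) (by omega) ?_ ?_ (n - 2 - i) (by omega) (by omega)
  · obtain ⟨g1, g2⟩ := gg
    rw [h.z_du (by omega), show n - 2 - (n - 2 - i) = i by omega] at g1 g2
    constructor
    · simpa using g1
    · intro k hk1 hk2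
      have := g2 (n-1-k) (by omega) (by omega)
      rw [du, show n - 1 - (n - 1 - k) = k by omega] at this
      simpa using this
  · rw [v_du _ (by omega), show n - (n - (a+5) + 5) = a by omega, show n - (n - (a+5)) = a+5 by omega]; exact hv
  · rw [N_du _ (by omega), show n - (n - (a+5) + 5) = a by omega, show n - (n - (a+5)) = a+5 by omega]; exact hN

theorem good5 [Finite G] (h : SC ρ n) {a : ℕ} (ha : a + 5 ≤ n) 
    (hN : N ρ a (a+5) < 3840) : ∀ i, a ≤ i → i + 1 < a + 5 → Gd ρ a (a+5) i := by
  by_cases hv : v ρ a (a+5) = 6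
  · exact h.e5_int ha hv hN
  by_cases hf : f ρ a (a+5) = 6
  · exact h.e5_int' ha hf hN
  have v6 : 6 ≤ v ρ a (a+5) := h.v_ge 5 ha
  have f6 : 6 ≤ f ρ a (a+5) := h.f_ge 5 ha
  obtain ⟨t0, t1, t2⟩ := h.r5 ha hN (by omega) (by omega)
  obtain ⟨⟨a1, a2⟩, a3, a4⟩ := h.t3good (by omega) t0
  obtain ⟨⟨b1, b2⟩, b3, b4⟩ := h.t3good (by omega) t1
  obtain ⟨⟨c1, c2⟩, c3, c4⟩ := h.t3good (by omega) t2
  simp only [show a + 1 + 1 = a + 2 by omega, show a + 2 + 1 = a + 3 by omega,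
    show a + 1 + 2 = a + 3 by omega, show a + 2 + 2 = a + 4 by omega] at *
  intro i h1 h2
  obtain ⟨j, rfl⟩ := Nat.exists_eq_add_of_le h1
  have hj : j < 4 := by omega
  interval_cases j
  · refine h.gd_of ha (by omega) a1 (fun k _ _ => by omega) (fun _ => a2)
  · refine h.gd_of ha (by omega) b1 (fun k _ hk => ?_) (fun _ => b2)
    obtain rfl : k = a := by omega
    exact a4
  · refine h.gd_of ha (by omega) c1 (fun k _ hk => ?_) (fun _ => c2)
    obtain rfl : k = a+1 := by omega
    exact b4
  · refine h.gd_of ha (by omega) c3 (fun k _ hk => ?_) (fun _ => by omega)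
    obtain rfl : k = a+2 := by omega
    exact c4

theorem N_right [Finite G] (h : SC ρ n) {a : ℕ} (m : ℕ) (hm : a + 5 + m ≤ n) :
    N ρ a (a+5) * (5+m+1).factorial ≤ 720 * N ρ a (a+5+m) := by
  induction m with
  | zero => simp [Nat.factorial]; omega
  | succ m ih =>
    have h1 := ih (by omega)
    have h2 := h.f_ge (i := a) (5+m+1) (by omega)
    have h3 := f_mul ρ a (a+5+(m+1))
    rw [show a + 5 + (m+1) - 1 = a + 5 + m by omega] at h3
    rw [show a + (5 + m + 1) = a + 5 + (m+1) by omega] at h2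
    rw [← h3, show 5 + (m+1) + 1 = (5+m+1)+1 by omega, Nat.factorial_succ]
    calc _ = (5+m+1+1) * (N ρ a (a+5) * (5+m+1).factorial) := by ring
      _ ≤ f ρ a (a+5+(m+1)) * (720 * N ρ a (a+5+m)) := Nat.mul_le_mul h2 h1
      _ = _ := by ring

theorem N_left [Finite G] (h : SC ρ n) {a m : ℕ} (hm : a + 5 + m ≤ n) (k c : ℕ) (hk : c + k = a) :
    N ρ a (a+5) * (5+m+k+1).factorial ≤ 720 * N ρ c (a+5+m) := by
  induction k generalizing c with
  | zero => simp at hk; subst hk; exact h.N_right m hm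
  | succ k ih =>
    have h1 := ih (c+1) (by omega)
    have h2 := h.v_ge (i := c) (5+m+k+1) (by omega)
    have h3 := v_mul ρ c (a+5+m)
    rw [show c + (5 + m + k + 1) = a + 5 + m by omega] at h2
    rw [← h3, show 5 + m + (k+1) + 1 = (5+m+k+1)+1 by omega, Nat.factorial_succ]
    calc _ = (5+m+k+1+1) * (N ρ a (a+5) * (5+m+k+1).factorial) := by ring
      _ ≤ v ρ c (a+5+m) * (720 * N ρ (c+1) (a+5+m)) := Nat.mul_le_mul h2 h1
      _ = _ := by ring

theorem N5_lt [Finite G] (h : SC ρ n) {a : ℕ} (ha : a + 5 ≤ n)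
    (hN : 3 * N ρ 0 n < 16 * (n+1).factorial) : N ρ a (a+5) < 3840 := by
  have := h.N_left (a := a) (m := n - (a+5)) (by omega) a 0 (by omega)
  rw [show 5 + (n - (a+5)) + a + 1 = n + 1 by omega, show a + 5 + (n - (a+5)) = n by omega] at this
  by_contra hc
  have := Nat.mul_le_mul_right (n+1).factorial (show 3840 ≤ N ρ a (a+5) by omega)
  omega

theorem good_all [Finite G] (h : SC ρ n) (hn : 5 ≤ n)
    (hN : 3 * N ρ 0 n < 16 * (n+1).factorial) {i : ℕ} (hi : i + 1 < n) : Gd ρ 0 n i := by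
  have key : ∀ a, a + 5 ≤ n → a ≤ i → i + 1 < a + 5 → (i = 0 ∨ a + 1 ≤ i) → (i + 2 = n ∨ i + 2 < a + 5) → Gd ρ 0 n i := by
    intro a h1 h2 h3 h4 h5
    obtain ⟨g1, g2⟩ := h.good5 h1 (h.N5_lt h1 hN) i h2 h3
    exact h.gd_of le_rfl hi g1 (fun k _ hk => g2 k (by omega) (by omega)) (fun hk => g2 _ (by omega) (by omega))
  by_cases h1 : i + 4 ≤ n
  · by_cases h0 : i = 0
    · exact key 0 (by omega) (by omega) (by omega) (by omega) (by omega)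
    · exact key (min (i-1) (n-5)) (by omega) (by omega) (by omega) (by omega) (by omega)
  · exact key (n-5) (by omega) (by omega) (by omega) (by omega) (by omega)

theorem v_all [Finite G] (h : SC ρ n) (hz : ∀ i, i + 1 < n → (ρ i * ρ (i+1))^3 = 1) (hn : 2 ≤ n) (m i : ℕ)
    (hm : i + (m+2) = n) : v ρ i n = m + 3 := by
  induction m generalizing i with
  | zero =>
    subst hm
    rw [h.v_two (by omega)]
    refine le_antisymm ?_ (h.p_ge (by omega))
    exact orderOf_le_of_pow_eq_one (by omega) (hz i (by omega))
  | succ m ih =>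
    have := ih (i+1) (by omega)
    have := h.lemA_int (a := i) (m := m+3) (by omega) (by omega) (hz i (by omega)) (by
      rw [show i + (m+3) = n by omega]; exact this)
    rwa [show i + (m+3) = n by omega] at this

theorem N_all [Finite G] (h : SC ρ n) (hz : ∀ i, i + 1 < n → (ρ i * ρ (i+1))^3 = 1) (hn : 2 ≤ n) (m i : ℕ)
    (hm : i + (m+2) = n) : N ρ i n = (m+3).factorial := by
  induction m generalizing i with
  | zero =>
    have h1 := h.v_all hz hn 0 i hm
    rw [← v_mul, h1]; subst hm
    rw [show i + (0+2) = i + 1 + 1 by omega, h.N_one (by omega)]; rfl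
  | succ m ih =>
    rw [← v_mul, h.v_all hz hn (m+1) i hm, ih (i+1) (by omega)]; exact (Nat.factorial_succ _).symm

/-- a subgroup with a central involution adjoined -/
def adj (U : Subgroup G) (z : G) (zc : ∀ g : G, Commute g z) (z2 : z * z = 1) : Subgroup G where
  carrier := {x | x ∈ U ∨ x * z ∈ U}
  one_mem' := Or.inl (one_mem U)
  mul_mem' := by
    rintro x y (hx | hx) (hy | hy)
    · exact Or.inl (mul_mem hx hy)
    · right; rw [mul_assoc]; exact mul_mem hx hy
    · right; rw [mul_assoc, (zc y).eq, ← mul_assoc]; exact mul_mem hx hy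
    · left
      have : x * y = (x * z) * (y * z) := by
        rw [(zc y).eq, mul_assoc, ← mul_assoc z z, z2, one_mul]
      rw [this]; exact mul_mem hx hy
  inv_mem' := by
    rintro x (hx | hx)
    · exact Or.inl (inv_mem hx)
    · right
      have : x⁻¹ * z = (x * z)⁻¹ := by
        rw [mul_inv_rev, inv_eq_of_mul_eq_one_left z2, (zc _).eq]
      rw [this]; exact inv_mem hx

theorem main [Finite G] (h : SC ρ n) (hn : 5 ≤ n) (hbig : 4 * (n+1).factorial < Nat.card G) :
    16 * (n+1).factorial ≤ 3 * Nat.card G := by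
  have hNG : N ρ 0 n = Nat.card G := by rw [N, h.top]; exact Nat.card_congr Subgroup.topEquiv.toEquiv
  by_contra hc
  have gd := fun i hi => h.good_all hn (by omega) (i := i) hi
  set z : ℕ → G := fun i => (ρ i * ρ (i+1))^3 with hz
  have zc : ∀ i, i + 1 < n → ∀ g : G, Commute g (z i) := by
    intro i hi g
    have hg : g ∈ H ρ 0 n := by rw [h.top]; trivial
    exact (H_comm (ρ := ρ) (i := 0) (j := n) (g := z i) (fun k h1 h2 => ((gd i hi).2 k h1 h2).symm) hg).symm
  have z2 : z 0 * z 0 = 1 := by rw [← pow_two]; exact (gd 0 (by omega)).1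
  set L := adj (H ρ 1 n) (z 0) (zc 0 (by omega)) z2 with hL
  have hLU : ∀ x ∈ H ρ 1 n, x ∈ L := fun x hx => Or.inl hx
  have hsa : SA ρ n L := by
    refine ⟨h.top, h.inv, h.comm, fun i h1 h2 => hLU _ (mem_H ρ h1 h2), ?_⟩
    intro j hj
    have zj : z j ∈ L := by
      rcases Nat.eq_zero_or_pos j with rfl | hj0
      · right; rw [z2]; exact one_mem _
      · exact hLU _ (pow_mem (mul_mem (mem_H ρ (by omega) (by omega)) (mem_H ρ (by omega) (by omega))) 3)
    have cj := H_comm (ρ := ρ) (i := 0) (j := 0+j) (g := ρ (j+1))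
      (fun l h3 h4 => h.comm' (by omega) (by omega) (by omega)) (ew_mem ρ 0 j)
    have e1 : z j * ρ (j+1) = ρ j * ρ (j+1) * ρ j * ρ (j+1) * ρ j := by
      have := h.inv (j+1) (by omega)
      simp only [hz, pow_succ, pow_zero, one_mul, mul_assoc, this, mul_one]
    have : (ew ρ 0 (j+2))⁻¹ * ρ j * ew ρ 0 (j+2) = z j * ρ (j+1) := by
      rw [ew_succ, ew_succ]
      simp only [Nat.zero_add]
      calc _ = (ew ρ 0 j)⁻¹ * ((ρ j)⁻¹ * (ρ (j+1))⁻¹ * ρ j * ρ (j+1) * ρ j) * ew ρ 0 j := by group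
        _ = (ew ρ 0 j)⁻¹ * (z j * ρ (j+1)) * ew ρ 0 j := by
          rw [h.inv' (by omega), h.inv' (by omega), e1]
        _ = (ew ρ 0 j)⁻¹ * (z j * (ρ (j+1) * ew ρ 0 j)) := by group
        _ = (ew ρ 0 j)⁻¹ * ((z j * ew ρ 0 j) * ρ (j+1)) := by rw [cj, mul_assoc]
        _ = (ew ρ 0 j)⁻¹ * ((ew ρ 0 j * z j) * ρ (j+1)) := by rw [(zc j (by omega) (ew ρ 0 j)).eq]
        _ = _ := by group
    rw [this]
    exact mul_mem zj (hLU _ (mem_H ρ (by omega) (by omega)))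
  have h0 : ρ 0 ∉ L := by
    rintro (h1 | h1)
    · exact h.rho_not_mem (by omega) le_rfl (by omega) h1
    · have d := h.dg_ge (i := 0) n (by omega) (by omega)
      have : dg ρ 0 (0+n) = 1 := by
        rw [Nat.zero_add, dg, Subgroup.relIndex_eq_one]
        intro x hx
        rw [mem_cj]
        have e : (ρ 0)⁻¹ * x * ρ 0 = (ρ 0 * z 0)⁻¹ * x * (ρ 0 * z 0) := by
          have c := (zc 0 (by omega) ((ρ 0)⁻¹ * x * ρ 0)).eq
          calc _ = (z 0)⁻¹ * (z 0 * ((ρ 0)⁻¹ * x * ρ 0)) := by group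
            _ = _ := by rw [← c]; group
        rw [e]
        exact mul_mem (mul_mem (inv_mem h1) hx) h1
      omega
  obtain ⟨φ, hcard, hφ, hk⟩ := sym_hom hsa h0
  have hk5 : Nat.card φ.ker = 5 := by
    have p := Nat.factorial_pos (n+1)
    rw [hcard] at hbig hc
    have h1 : 4 < Nat.card φ.ker := by
      by_contra hh
      have := Nat.mul_le_mul_left (n+1).factorial (show Nat.card φ.ker ≤ 4 by omega)
      omega
    have h2 : Nat.card φ.ker < 6 := by
      by_contra hh
      have := Nat.mul_le_mul_left (n+1).factorial (show 6 ≤ Nat.card φ.ker by omega)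
      omega
    omega
  have zt : ∀ i, i + 1 < n → z i = 1 := by
    intro i hi
    have h1 := Subgroup.orderOf_dvd_natCard φ.ker (hk i hi)
    rw [hk5] at h1
    have h2 := orderOf_dvd_of_pow_eq_one (gd i hi).1
    have := Nat.dvd_gcd h1 h2
    exact orderOf_eq_one_iff.1 (Nat.dvd_one.1 this)
  have := h.N_all zt (by omega) (n-2) 0 (by omega)
  rw [hNG, show n - 2 + 3 = n + 1 by omega] at this
  omega
end SC
end SCG

namespace AbstractPolytope
variable {n : ℕ} (P : AbstractPolytope n)

/-- a flag described as a function; position `k` has rank `k - 1` -/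
structure IsFl (c : ℕ → P.Face) : Prop where
  mono : Monotone c
  rk : ∀ k, k ≤ n + 1 → P.rank (c k) = (k : ℤ) - 1
  tp : ∀ k, n + 1 ≤ k → c k = P.top

theorem rank_mono {F G : P.Face} (h : F ≤ G) : P.rank F ≤ P.rank G := by
  rcases h.eq_or_lt with rfl | h
  · exact le_rfl
  · exact (P.rank_strictMono _ _ h).le

theorem eq_of_le_rank {F G : P.Face} (h : F ≤ G) (hr : P.rank F = P.rank G) : F = G := by
  rcases h.eq_or_lt with rfl | h
  · rfl
  · have := P.rank_strictMono _ _ h; omega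

theorem rank_ge (F : P.Face) : -1 ≤ P.rank F := by
  rw [← P.rank_bot]; exact P.rank_mono (P.bot_le F)
theorem rank_le (F : P.Face) : P.rank F ≤ n := by
  rw [← P.rank_top]; exact P.rank_mono (P.le_top F)

theorem eq_of_comp {F G : P.Face} (h : F ≤ G ∨ G ≤ F) (hr : P.rank F = P.rank G) : F = G := by
  rcases h with h | h
  · exact P.eq_of_le_rank h hr
  · exact (P.eq_of_le_rank h hr.symm).symm

variable {P}
namespace IsFl
variable {c : ℕ → P.Face}

theorem zero (h : P.IsFl c) : c 0 = P.bot :=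
  (P.eq_of_le_rank (P.bot_le _) (by rw [P.rank_bot, h.rk 0 (by omega)]; simp)).symm

theorem comp (h : P.IsFl c) (i j : ℕ) : c i ≤ c j ∨ c j ≤ c i := by
  rcases le_total i j with hij | hij
  · exact Or.inl (h.mono hij)
  · exact Or.inr (h.mono hij)

theorem idx (h : P.IsFl c) (i : ℕ) : ∃ k, k ≤ n + 1 ∧ c i = c k := by
  by_cases hi : i ≤ n + 1
  · exact ⟨i, hi, rfl⟩
  · exact ⟨n+1, le_rfl, by rw [h.tp i (by omega), h.tp (n+1) le_rfl]⟩

theorem eq_of_rank (h : P.IsFl c) {x : P.Face} (hx : x ∈ Set.range c) {k : ℕ} (hk : k ≤ n + 1)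
    (hr : P.rank x = (k : ℤ) - 1) : c k = x := by
  obtain ⟨i, rfl⟩ := hx
  exact P.eq_of_comp (h.comp _ _) (by rw [h.rk k hk, hr])

theorem lt (h : P.IsFl c) {i j : ℕ} (hij : i < j) (hj : j ≤ n + 1) : c i < c j := by
  refine lt_of_le_of_ne (h.mono hij.le) fun he => ?_
  have h1 := h.rk i (by omega)
  have h2 := h.rk j hj
  rw [he, h2] at h1; omega

/-- the associated flag -/
def flag (h : P.IsFl c) : Flag P.Face where
  carrier := Set.range c
  Chain' := by
    rintro _ ⟨i, rfl⟩ _ ⟨j, rfl⟩ _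
    exact h.comp i j
  max_chain' := by
    intro s hs hsub
    refine hsub.antisymm fun x hx => ?_
    have h1 := P.rank_ge x
    have h2 := P.rank_le x
    obtain ⟨k, hk⟩ := Int.eq_ofNat_of_zero_le (show 0 ≤ P.rank x + 1 by omega)
    refine ⟨k, ?_⟩
    have hr := h.rk k (by omega)
    refine P.eq_of_comp ?_ (by rw [hr]; omega)
    exact hs.total (hsub ⟨k, rfl⟩) hx

theorem mem_flag (h : P.IsFl c) (x : P.Face) : x ∈ h.flag ↔ x ∈ Set.range c := Iff.rfl

theorem ext {d : ℕ → P.Face} (h : P.IsFl c) (h' : P.IsFl d)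
    (hk : ∀ k, k ≤ n + 1 → c k = d k) : c = d := by
  funext k
  by_cases hi : k ≤ n + 1
  · exact hk k hi
  · rw [h.tp k (by omega), h'.tp k (by omega)]
end IsFl

theorem exists_of_flag (Φ : Flag P.Face) : ∃ c, ∃ h : P.IsFl c, h.flag = Φ := by
  have ex : ∀ k : ℕ, ∃ F ∈ Φ, (k ≤ n + 1 → P.rank F = (k:ℤ) - 1) := by
    intro k
    by_cases hk : k ≤ n + 1
    · obtain ⟨F, h1, h2⟩ := P.flag_ranks Φ ((k:ℤ)-1) (by omega) (by omega)
      exact ⟨F, h1, fun _ => h2⟩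
    · obtain ⟨F, h1, h2⟩ := P.flag_ranks Φ (-1) (by omega) (by omega)
      exact ⟨F, h1, fun h => absurd h hk⟩
  choose c0 hc0 hr0 using ex
  have rtop : ∀ F : P.Face, P.rank F = n → F = P.top := fun F hF =>
    P.eq_of_le_rank (P.le_top F) (by rw [P.rank_top]; exact hF)
  let c : ℕ → P.Face := fun k => c0 (min k (n+1))
  have hc : ∀ k, c k ∈ Φ := fun k => hc0 _
  have hr : ∀ k, P.rank (c k) = ((min k (n+1) : ℕ) : ℤ) - 1 := fun k => hr0 _ (by omega)
  have hfl : P.IsFl c := by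
    refine ⟨?_, ?_, ?_⟩
    · intro i j hij
      have := hr i
      have := hr j
      rcases Φ.Chain'.total (hc i) (hc j) with h | h
      · exact h
      · have := P.rank_mono h
        exact (P.eq_of_comp (Or.inr h) (by omega)).le
    · intro k hk; rw [hr]; omega
    · intro k hk
      apply rtop; rw [hr]; push_cast; omega
  refine ⟨c, hfl, ?_⟩
  apply Flag.ext
  have : Set.range c ⊆ (Φ : Set P.Face) := by rintro _ ⟨k, rfl⟩; exact hc k
  exact hfl.flag.max_chain' Φ.Chain' this

theorem exists_fl {s : Set P.Face} (hs : IsChain (· ≤ ·) s) : ∃ c, P.IsFl c ∧ s ⊆ Set.range c := by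
  obtain ⟨Φ, hΦ⟩ := hs.exists_subset_flag
  obtain ⟨c, hc, rfl⟩ := exists_of_flag Φ
  exact ⟨c, hc, hΦ⟩

theorem exists_through (F : P.Face) : ∃ c, P.IsFl c ∧ F ∈ Set.range c := by
  obtain ⟨c, h1, h2⟩ := exists_fl (s := {F}) (Set.subsingleton_singleton.isChain)
  exact ⟨c, h1, h2 rfl⟩

theorem rank_aut_ge (g : P.Face ≃o P.Face) (F : P.Face) : P.rank F ≤ P.rank (g F) := by
  obtain ⟨c, hc, i, rfl⟩ := exists_through F
  obtain ⟨k, hk, he⟩ := hc.idx i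
  rw [he, hc.rk k hk]
  clear he
  induction k with
  | zero => have := P.rank_ge (g (c 0)); push_cast; omega
  | succ k ih =>
    have h1 := ih (by omega)
    have h2 := P.rank_strictMono _ _ (g.lt_iff_lt.2 (hc.lt (show k < k + 1 by omega) hk))
    push_cast; omega

theorem rank_aut (g : P.Face ≃o P.Face) (F : P.Face) : P.rank (g F) = P.rank F := by
  refine le_antisymm ?_ (rank_aut_ge g F)
  have := rank_aut_ge g.symm (g F)
  simpa using this

theorem IsFl.map {c : ℕ → P.Face} (h : P.IsFl c) (g : P.Face ≃o P.Face) : P.IsFl (fun k => g (c k)) where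
  mono := fun i j hij => g.monotone (h.mono hij)
  rk := fun k hk => by rw [rank_aut]; exact h.rk k hk
  tp := fun k hk => P.eq_of_le_rank (P.le_top _) (by rw [rank_aut, h.tp k hk])

theorem IsFl.trans (hreg : P.IsRegular) {c d : ℕ → P.Face} (hc : P.IsFl c) (hd : P.IsFl d) :
    ∃ g : P.Face ≃o P.Face, ∀ k, g (c k) = d k := by
  obtain ⟨g, hg⟩ := hreg hc.flag hd.flag
  refine ⟨g, congrFun ((hc.map g).ext hd fun k hk => ?_)⟩
  refine (hd.eq_of_rank ?_ hk ?_).symm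
  · change g (c k) ∈ (hd.flag : Set P.Face)
    rw [← hg]; exact ⟨c k, ⟨k, rfl⟩, rfl⟩
  · rw [rank_aut]; exact hc.rk k hk

theorem diamond3 {F G x y z : P.Face} (hFG : P.rank G = P.rank F + 2)
    (hx : F < x ∧ x < G) (hy : F < y ∧ y < G) (hz : F < z ∧ z < G) (hxy : x ≠ y) (hxz : x ≠ z) : y = z := by
  have h2 := P.diamond F G (hx.1.trans hx.2) hFG
  obtain ⟨a, b, hab, hu⟩ := Nat.card_eq_two_iff.1 h2
  have m : ∀ w : {H : P.Face // F < H ∧ H < G}, w = a ∨ w = b := by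
    intro w; have : w ∈ ({a, b} : Set _) := by rw [hu]; trivial
    simpa using this
  have e1 := m ⟨x, hx⟩
  have e2 := m ⟨y, hy⟩
  have e3 := m ⟨z, hz⟩
  have n1 : (⟨x, hx⟩ : {H : P.Face // F < H ∧ H < G}) ≠ ⟨y, hy⟩ := fun h => hxy (congrArg Subtype.val h)
  have n2 : (⟨x, hx⟩ : {H : P.Face // F < H ∧ H < G}) ≠ ⟨z, hz⟩ := fun h => hxz (congrArg Subtype.val h)
  have : (⟨y, hy⟩ : {H : P.Face // F < H ∧ H < G}) = ⟨z, hz⟩ := by grind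
  exact congrArg Subtype.val this

theorem diamond_ex {F G x : P.Face} (hFG : P.rank G = P.rank F + 2)
    (hx : F < x ∧ x < G) : ∃ y, (F < y ∧ y < G) ∧ x ≠ y := by
  have h2 := P.diamond F G (hx.1.trans hx.2) hFG
  obtain ⟨a, b, hab, hu⟩ := Nat.card_eq_two_iff.1 h2
  by_cases h : x = a
  · exact ⟨b, b.2, fun h' => hab (Subtype.ext (h.symm.trans h'))⟩
  · exact ⟨a, a.2, h⟩

theorem IsFl.gap {c : ℕ → P.Face} (h : P.IsFl c) {i : ℕ} (hi : i < n) :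
    P.rank (c (i+2)) = P.rank (c i) + 2 := by
  rw [h.rk _ (by omega), h.rk _ (by omega)]; push_cast; ring

theorem IsFl.between {c : ℕ → P.Face} (h : P.IsFl c) {i : ℕ} (hi : i < n) :
    c i < c (i+1) ∧ c (i+1) < c (i+2) := ⟨h.lt (by omega) (by omega), h.lt (by omega) (by omega)⟩

/-- an element of rank given strictly between -/
theorem IsFl.update {c : ℕ → P.Face} (h : P.IsFl c) {i : ℕ} (hi : i < n) {y : P.Face}
    (hy : c i < y ∧ y < c (i+2)) : P.IsFl (Function.update c (i+1) y) := by
  refine ⟨?_, ?_, ?_⟩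
  · intro a b hab
    by_cases ha : a = i + 1
    · subst ha
      by_cases hb : b = i + 1
      · subst hb; exact le_rfl
      · rw [Function.update_self, Function.update_of_ne hb]
        exact hy.2.le.trans (h.mono (by omega))
    · by_cases hb : b = i + 1
      · subst hb; rw [Function.update_self, Function.update_of_ne ha]
        exact (h.mono (by omega)).trans hy.1.le
      · rw [Function.update_of_ne ha, Function.update_of_ne hb]; exact h.mono hab
  · intro k hk
    by_cases hki : k = i + 1
    · subst hki
      rw [Function.update_self]
      have h1 := P.rank_strictMono _ _ hy.1
      have h2 := P.rank_strictMono _ _ hy.2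
      rw [h.rk _ (by omega)] at h1 h2
      push_cast at h1 h2 ⊢; omega
    · rw [Function.update_of_ne hki]; exact h.rk k hk
  · intro k hk
    rw [Function.update_of_ne (by omega)]; exact h.tp k hk

theorem exists_rho (hreg : P.IsRegular) {c : ℕ → P.Face} (h : P.IsFl c) (i : ℕ) :
    ∃ g : P.Face ≃o P.Face, i < n → (∀ k, k ≠ i + 1 → g (c k) = c k) ∧ g (c (i+1)) ≠ c (i+1) := by
  by_cases hi : i < n
  · obtain ⟨y, hy, hne⟩ := diamond_ex (h.gap hi) (h.between hi)
    obtain ⟨g, hg⟩ := h.trans hreg (h.update hi hy)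
    refine ⟨g, fun _ => ⟨fun k hk => ?_, ?_⟩⟩
    · rw [hg, Function.update_of_ne hk]
    · rw [hg, Function.update_self]; exact hne.symm
  · exact ⟨1, fun h => absurd h hi⟩
end AbstractPolytope

namespace AbstractPolytope
variable {n : ℕ} {P : AbstractPolytope n}
open SCG

/-- distinguished generators with respect to a base flag -/
structure Bs (P : AbstractPolytope n) (c : ℕ → P.Face) (ρ : ℕ → (P.Face ≃o P.Face)) : Prop where
  reg : P.IsRegular
  fl : P.IsFl c
  fix : ∀ i, i < n → ∀ k, k ≠ i + 1 → ρ i (c k) = c k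
  mv : ∀ i, i < n → ρ i (c (i+1)) ≠ c (i+1)

/-- point stabilizer -/
def stb (P : AbstractPolytope n) (x : P.Face) : Subgroup (P.Face ≃o P.Face) where
  carrier := {g | g x = x}
  one_mem' := rfl
  mul_mem' := by
    intro a b ha hb
    change a (b x) = x
    rw [show b x = x from hb]; exact ha
  inv_mem' := by
    intro a ha
    change a⁻¹ x = x
    conv_lhs => rw [← show a x = x from ha]
    exact RelIso.inv_apply_self a x

theorem mem_stb {x : P.Face} {g : P.Face ≃o P.Face} : g ∈ P.stb x ↔ g x = x := Iff.rfl

namespace Bs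
variable {c : ℕ → P.Face} {ρ : ℕ → (P.Face ≃o P.Face)}

theorem H_fix (b : Bs P c ρ) {i j k : ℕ} (hj : j ≤ n) (hk : k ≤ i ∨ j < k) {g : P.Face ≃o P.Face}
    (hg : g ∈ H ρ i j) : g (c k) = c k := by
  have : H ρ i j ≤ P.stb (c k) := H_le ρ fun l h1 h2 => b.fix l (by omega) k (by omega)
  exact this hg

theorem split (b : Bs P c ρ) {i j l : ℕ} (hj : j ≤ n) (hil : i < l) (hlj : l ≤ j)
    (ih1 : ∀ d, P.IsFl d → (∀ k, k ≤ i ∨ l - 1 < k → d k = c k) → ∃ h ∈ H ρ i (l-1), ∀ k, d k = h (c k))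
    (ih2 : ∀ d, P.IsFl d → (∀ k, k ≤ l ∨ j < k → d k = c k) → ∃ h ∈ H ρ l j, ∀ k, d k = h (c k))
    (d : ℕ → P.Face) (hd : P.IsFl d) (ha : ∀ k, k ≤ i ∨ j < k → d k = c k) (hl : d l = c l) :
    ∃ h ∈ H ρ i j, ∀ k, d k = h (c k) := by
  let d1 : ℕ → P.Face := fun k => if k ≤ l then d k else c k
  have hd1 : P.IsFl d1 := by
    refine ⟨?_, ?_, ?_⟩
    · intro s t hst
      simp only [d1]
      split_ifs with h1 h2 h2
      · exact hd.mono hst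
      · exact (hd.mono h1).trans (hl.le.trans (b.fl.mono (by omega)))
      · omega
      · exact b.fl.mono hst
    · intro k hk
      simp only [d1]; split_ifs
      · exact hd.rk k hk
      · exact b.fl.rk k hk
    · intro k hk
      simp only [d1]; split_ifs
      · exact hd.tp k hk
      · exact b.fl.tp k hk
  obtain ⟨h1, hm1, he1⟩ := ih1 d1 hd1 (by
    intro k hk
    simp only [d1]; split_ifs with hkl
    · rcases hk with hk | hk
      · exact ha k (Or.inl hk)
      · obtain rfl : k = l := by omega
        exact hl
    · rfl)
  obtain ⟨h2, hm2, he2⟩ := ih2 (fun k => h1⁻¹ (d k)) (hd.map _) (by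
    intro k hk
    have key : d k = h1 (c k) := by
      by_cases hkl : k ≤ l
      · rw [← he1]; simp [d1, hkl]
      · rw [b.H_fix (by omega) (by omega) hm1]; exact ha k (by omega)
    rw [key]; exact RelIso.inv_apply_self _ _)
  refine ⟨h1 * h2, mul_mem (H_mono ρ le_rfl (by omega) hm1) (H_mono ρ (by omega) le_rfl hm2), fun k => ?_⟩
  rw [RelIso.mul_apply, ← he2]; exact (RelIso.apply_inv_self _ _).symm

theorem flagconn (b : Bs P c ρ) (m : ℕ) : ∀ i j, j ≤ n → j - i ≤ m → ∀ d, P.IsFl d →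
    (∀ k, k ≤ i ∨ j < k → d k = c k) → ∃ h ∈ H ρ i j, ∀ k, d k = h (c k) := by
  induction m with
  | zero =>
    intro i j hj hm d hd ha
    exact ⟨1, one_mem _, fun k => ha k (by omega)⟩
  | succ m ih =>
    intro i j hj hm d hd ha
    by_cases hij : j ≤ i
    · exact ⟨1, one_mem _, fun k => ha k (by omega)⟩
    by_cases h1 : j = i + 1
    · subst h1
      by_cases he : d (i+1) = c (i+1)
      · refine ⟨1, one_mem _, fun k => ?_⟩
        by_cases hk : k = i + 1
        · subst hk; exact he
        · exact ha k (by omega)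
      · refine ⟨ρ i, mem_H ρ le_rfl (by omega), fun k => ?_⟩
        by_cases hk : k = i + 1
        · subst hk
          have hb := hd.between (i := i) (by omega)
          have hb2 := (b.fl.map (ρ i)).between (i := i) (by omega)
          rw [ha i (by omega), ha (i+2) (by omega)] at hb
          rw [b.fix i (by omega) i (by omega), b.fix i (by omega) (i+2) (by omega)] at hb2
          exact diamond3 (b.fl.gap (by omega)) (b.fl.between (by omega)) hb hb2 (Ne.symm he)
            (Ne.symm (b.mv i (by omega)))
        · rw [ha k (by omega), b.fix i (by omega) k hk]
    -- main case
    have spl : ∀ l, i < l → l ≤ j → ∀ d, P.IsFl d → (∀ k, k ≤ i ∨ j < k → d k = c k) → d l = c l →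
        ∃ h ∈ H ρ i j, ∀ k, d k = h (c k) := fun l hl1 hl2 =>
      b.split hj hl1 hl2 (ih i (l-1) (by omega) (by omega)) (ih l j hj (by omega))
    have hlt : c i < c (j+1) := b.fl.lt (by omega) (by omega)
    have key : ∀ B, Relation.ReflTransGen
      (fun A B : P.Face => c i < A ∧ A < c (j+1) ∧ c i < B ∧ B < c (j+1) ∧ (A ≤ B ∨ B ≤ A)) (c (i+1)) B →
      ∀ d, P.IsFl d → (∀ k, k ≤ i ∨ j < k → d k = c k) → B ∈ Set.range d →
        ∃ h ∈ H ρ i j, ∀ k, d k = h (c k) := by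
      intro B hB
      induction hB with
      | refl =>
        intro d hd ha hB
        exact spl (i+1) (by omega) (by omega) d hd ha
          (hd.eq_of_rank hB (by omega) (b.fl.rk _ (by omega)))
      | @tail A B hA hAB ih' =>
        intro d hd ha hBd
        obtain ⟨a1, a2, b1, b2, hcomp⟩ := hAB
        -- a flag through both
        let s : Set P.Face := {x | x = A ∨ x = B ∨ ∃ k, (k ≤ i ∨ j < k) ∧ x = c k}
        have hck : ∀ k, (k ≤ i ∨ j < k) → ∀ x, c i < x → x < c (j+1) → (c k ≤ x ∨ x ≤ c k) := by
          intro k hk x hx1 hx2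
          rcases hk with hk | hk
          · exact Or.inl ((b.fl.mono hk).trans hx1.le)
          · exact Or.inr (hx2.le.trans (b.fl.mono (by omega)))
        have hs : IsChain (· ≤ ·) s := by
          rintro x (rfl | rfl | ⟨k, hk, rfl⟩) y (rfl | rfl | ⟨l, hl, rfl⟩) hne
          · exact absurd rfl hne
          · exact hcomp
          · exact (hck l hl _ a1 a2).symm
          · exact hcomp.symm
          · exact absurd rfl hne
          · exact (hck l hl _ b1 b2).symm
          · exact hck k hk _ a1 a2
          · exact hck k hk _ b1 b2
          · exact b.fl.comp k l
        obtain ⟨e, he, hse⟩ := exists_fl hs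
        have hea : ∀ k, k ≤ i ∨ j < k → e k = c k := by
          intro k hk
          by_cases hkn : k ≤ n + 1
          · exact he.eq_of_rank (hse (Or.inr (Or.inr ⟨k, hk, rfl⟩))) hkn (b.fl.rk k hkn)
          · rw [he.tp k (by omega), b.fl.tp k (by omega)]
        obtain ⟨h, hm, hh⟩ := ih' e he hea (hse (Or.inl rfl))
        have r1 := P.rank_strictMono _ _ b1
        have r2 := P.rank_strictMono _ _ b2
        rw [b.fl.rk _ (by omega)] at r1 r2
        obtain ⟨l, hl⟩ := Int.eq_ofNat_of_zero_le (show 0 ≤ P.rank B + 1 by omega)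
        push_cast at r2
        have el : e l = B := he.eq_of_rank (hse (Or.inr (Or.inl rfl))) (by omega) (by omega)
        have dl : d l = B := hd.eq_of_rank hBd (by omega) (by omega)
        obtain ⟨h', hm', hh'⟩ := spl l (by omega) (by omega) (fun k => h⁻¹ (d k)) (hd.map _) (by
            intro k hk
            have : d k = h (c k) := by rw [b.H_fix hj hk hm]; exact ha k hk
            rw [this]; exact RelIso.inv_apply_self _ _) (by
            have : d l = h (c l) := by rw [dl, ← el, hh]
            rw [this]; exact RelIso.inv_apply_self _ _)
        refine ⟨h * h', mul_mem hm hm', fun k => ?_⟩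
        rw [RelIso.mul_apply, ← hh']; exact (RelIso.apply_inv_self _ _).symm
    have hb1 : c i < d (i+1) := by rw [← ha i (by omega)]; exact hd.lt (by omega) (by omega)
    have hb2 : d (i+1) < c (j+1) := by rw [← ha (j+1) (by omega)]; exact hd.lt (by omega) (by omega)
    refine key (d (i+1)) ?_ d hd ha ⟨_, rfl⟩
    refine P.strongly_connected (c i) (c (j+1)) hlt ?_ _ _ (b.fl.lt (by omega) (by omega))
      (b.fl.lt (by omega) (by omega)) hb1 hb2
    rw [b.fl.rk _ (by omega), b.fl.rk _ (by omega)]; push_cast; omega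

theorem all (b : Bs P c ρ) {d : ℕ → P.Face} (hd : P.IsFl d) : ∃ h ∈ H ρ 0 n, ∀ k, d k = h (c k) := by
  refine b.flagconn n 0 n le_rfl (by omega) d hd fun k hk => ?_
  rcases hk with hk | hk
  · obtain rfl : k = 0 := by omega
    rw [hd.zero, b.fl.zero]
  · rw [hd.tp k (by omega), b.fl.tp k (by omega)]

/-- a flag-fixing automorphism fixes adjacent flags -/
theorem step {d e : ℕ → P.Face} (hd : P.IsFl d) (he : P.IsFl e) {i : ℕ} (hi : i < n)
    (hde : ∀ k, k ≠ i + 1 → e k = d k) (hne : e (i+1) ≠ d (i+1)) {g : P.Face ≃o P.Face}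
    (h1 : g (d i) = d i) (h2 : g (d (i+1)) = d (i+1)) (h3 : g (d (i+2)) = d (i+2)) :
    g (e (i+1)) = e (i+1) := by
  have b1 := he.between hi
  have b2 := (he.map g).between hi
  rw [hde i (by omega), hde (i+2) (by omega)] at b1
  rw [hde i (by omega), hde (i+2) (by omega), h1, h3] at b2
  refine diamond3 (hd.gap hi) (hd.between hi) b2 b1 ?_ hne.symm
  intro h
  rw [← h2] at h
  exact hne (g.injective h).symm

theorem free (b : Bs P c ρ) {g : P.Face ≃o P.Face} (hg : ∀ k, g (c k) = c k) : g = 1 := by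
  have st : ∀ h i, i < n → ∀ r : P.Face ≃o P.Face, (∀ k, k ≠ i + 1 → r (c k) = c k) → r (c (i+1)) ≠ c (i+1) →
      (∀ k, g (h (c k)) = h (c k)) → ∀ k, g ((h * r) (c k)) = (h * r) (c k) := by
    intro h i hi r hr1 hr2 hh k
    by_cases hk : k = i + 1
    · subst hk
      refine step (b.fl.map h) (e := fun k => (h * r) (c k)) (b.fl.map (h * r)) hi ?_ ?_ (hh _) (hh _) (hh _)
      · intro k hk
        rw [RelIso.mul_apply, hr1 k hk]
      · rw [RelIso.mul_apply]
        intro he; exact hr2 (h.injective he)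
    · rw [RelIso.mul_apply, hr1 k hk]; exact hh k
  have fx : ∀ h ∈ H ρ 0 n, ∀ k, g (h (c k)) = h (c k) := by
    intro h hh
    induction hh using Subgroup.closure_induction_right with
    | one => exact hg
    | mul_right x hx y hy ih =>
      obtain ⟨i, ⟨_, hi⟩, rfl⟩ := hy
      exact st x i hi (ρ i) (b.fix i hi) (b.mv i hi) ih
    | mul_inv_cancel x hx y hy ih =>
      obtain ⟨i, ⟨_, hi⟩, rfl⟩ := hy
      refine st x i hi (ρ i)⁻¹ (fun k hk => ?_) (fun he => ?_) ih
      · exact inv_mem (show ρ i ∈ P.stb (c k) from b.fix i hi k hk)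
      · have := inv_mem (show (ρ i)⁻¹ ∈ P.stb (c (i+1)) from he)
        rw [inv_inv] at this
        exact b.mv i hi this
  apply RelIso.ext
  intro F
  obtain ⟨d, hd, k, rfl⟩ := exists_through F
  obtain ⟨h, hm, he⟩ := b.all hd
  rw [he k]; exact fx h hm k

theorem eq_of (b : Bs P c ρ) {g h : P.Face ≃o P.Face} (hg : ∀ k, g (c k) = h (c k)) : g = h := by
  have : h⁻¹ * g = 1 := b.free fun k => by
    rw [RelIso.mul_apply, hg]; exact RelIso.inv_apply_self _ _
  exact (inv_mul_eq_one.1 this).symm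

theorem mem_iff (b : Bs P c ρ) {i j : ℕ} (hj : j ≤ n) {g : P.Face ≃o P.Face} :
    g ∈ H ρ i j ↔ ∀ k, k ≤ i ∨ j < k → g (c k) = c k := by
  constructor
  · exact fun hg k hk => b.H_fix hj hk hg
  · intro hg
    obtain ⟨h, hm, he⟩ := b.flagconn n i j hj (by omega) _ (b.fl.map g) hg
    rwa [b.eq_of he]

theorem fixes (b : Bs P c ρ) {i : ℕ} (hi : i < n) {g : P.Face ≃o P.Face} (h1 : g (c i) = c i)
    (h2 : g (c (i+1)) = c (i+1)) (h3 : g (c (i+2)) = c (i+2)) : g (ρ i (c (i+1))) = ρ i (c (i+1)) :=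
  step b.fl (b.fl.map (ρ i)) hi (b.fix i hi) (b.mv i hi) h1 h2 h3

theorem sc (b : Bs P c ρ) (hn : 0 < n) (hnf : ¬ P.IsFlat) : SC ρ n where
  inv := by
    intro i hi
    refine b.free fun k => ?_
    rw [RelIso.mul_apply]
    by_cases hk : k = i + 1
    · subst hk
      have b1 := (b.fl.map (ρ i)).between hi
      have b2 := (b.fl.map (ρ i * ρ i)).between hi
      simp only [RelIso.mul_apply, b.fix i hi i (by omega), b.fix i hi (i+2) (by omega)] at b1 b2
      refine diamond3 (b.fl.gap hi) b1 b2 (b.fl.between hi) ?_ (b.mv i hi)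
      intro h
      exact b.mv i hi ((ρ i).injective h).symm
    · rw [b.fix i hi k hk, b.fix i hi k hk]
  comm := by
    intro i j hij hj
    have hi : i < n := by omega
    refine b.eq_of fun k => ?_
    rw [RelIso.mul_apply, RelIso.mul_apply]
    by_cases hk : k = i + 1
    · subst hk
      rw [b.fix j hj _ (by omega), b.fixes hi (b.fix j hj _ (by omega)) (b.fix j hj _ (by omega)) (b.fix j hj _ (by omega))]
    · rw [b.fix i hi k hk]
      by_cases hk : k = j + 1
      · subst hk
        exact b.fixes hj (b.fix i hi _ (by omega)) (b.fix i hi _ (by omega)) (b.fix i hi _ (by omega))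
      · rw [b.fix j hj k hk, b.fix i hi k (by omega)]
  inter := by
    intro i j k l hj hl
    ext g
    rw [Subgroup.mem_inf, b.mem_iff hj, b.mem_iff hl, b.mem_iff (by omega)]
    constructor
    · rintro ⟨h1, h2⟩ t ht
      by_cases h : t ≤ i ∨ j < t
      · exact h1 t h
      · exact h2 t (by omega)
    · exact fun h => ⟨fun t ht => h t (by omega), fun t ht => h t (by omega)⟩
  top := by
    rw [eq_top_iff]
    intro g _
    rw [b.mem_iff le_rfl]
    rintro k (hk | hk)
    · obtain rfl : k = 0 := by omega
      exact (b.fl.map g).zero.trans b.fl.zero.symm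
    · rw [(b.fl.map g).tp k (by omega), b.fl.tp k (by omega)]
  nf := by
    simp only [IsFlat, IsKMFlat, Incident] at hnf
    push Not at hnf
    obtain ⟨F, E, hF, hE, hn1, -⟩ := hnf
    obtain ⟨d, hd, hFd⟩ := exists_through F
    obtain ⟨e, he, hEe⟩ := exists_through E
    obtain ⟨u, hu⟩ := b.fl.trans b.reg hd
    obtain ⟨w, hw⟩ := b.fl.trans b.reg he
    have d1 : d 1 = F := hd.eq_of_rank hFd (by omega) (by rw [hF]; simp)
    have e1 : e n = E := he.eq_of_rank hEe (by omega) hE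
    refine ⟨w⁻¹ * u, fun x hx y hy h => hn1 ?_⟩
    have hy1 : y (c 1) = c 1 := b.H_fix le_rfl (by omega) hy
    have hx1 : x (c n) = c n := b.H_fix (by omega) (by omega) hx
    have : u = w * (x * y) := by rw [← h]; group
    rw [← d1, ← e1, ← hu, ← hw, this, RelIso.mul_apply, RelIso.mul_apply, hy1]
    apply w.monotone
    rw [← hx1]
    apply x.monotone
    exact b.fl.mono (by omega)

theorem card (b : Bs P c ρ) : P.numFlags = Nat.card (P.Face ≃o P.Face) := by
  symm
  refine Nat.card_eq_of_bijective (fun g => (b.fl.map g).flag) ⟨?_, ?_⟩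
  · intro g h hgh
    refine b.eq_of (congrFun ((b.fl.map g).ext (b.fl.map h) fun k hk => ?_))
    refine ((b.fl.map h).eq_of_rank ?_ hk ((b.fl.map g).rk k hk)).symm
    rw [← IsFl.mem_flag (b.fl.map h)]
    have hgh' : (b.fl.map g).flag = (b.fl.map h).flag := hgh
    rw [← hgh']; exact ⟨k, rfl⟩
  · intro Φ
    obtain ⟨d, hd, rfl⟩ := exists_of_flag Φ
    obtain ⟨g, hg⟩ := b.fl.trans b.reg hd
    refine ⟨g, ?_⟩
    apply Flag.ext
    change Set.range _ = Set.range d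
    congr 1
    funext k; exact hg k
end Bs

theorem exists_bs (hreg : P.IsRegular) : ∃ c ρ, Bs P c ρ := by
  obtain ⟨c, hc, _⟩ := exists_through P.bot
  choose ρ hρ using exists_rho hreg hc
  exact ⟨c, ρ, hreg, hc, fun i hi => (hρ i hi).1, fun i hi => (hρ i hi).2⟩
end AbstractPolytope

/-- Let `n ≥ 5` and let `P` be a non-flat regular `n`-polytope
with strictly more than `4 * (n+1)!` flags. Then `P` has at least
`(16/3) * (n+1)!` flags (stated in the equivalent integral form
`16 * (n+1)! ≤ 3 * numFlags`). -/
theorem fourth_smallest_nonflat_regular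
    (n : ℕ) (hn : 5 ≤ n) (P : AbstractPolytope n) (hreg : P.IsRegular)
    (hnonflat : ¬ P.IsFlat)
    (hbig : 4 * Nat.factorial (n + 1) < P.numFlags) :
    16 * Nat.factorial (n + 1) ≤ 3 * P.numFlags := by
  obtain ⟨c, ρ, b⟩ := AbstractPolytope.exists_bs hreg
  rw [b.card] at hbig ⊢
  have : Finite (P.Face ≃o P.Face) := Nat.finite_of_card_ne_zero (by omega)
  exact (b.sc (by omega) hnonflat).main hn hbig
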